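/- arXiv:1403.5754 — 7 statements merged into one kernel-verified Lean document; each statement's English description precedes it below -/
import Mathlib

section
/- Let r ≥ 3 and n ≥ 2. Let π₀ = B(V) be a q-subgeometry of PG(r-1,q^n) and l_∞ = PG(U) a line not contained in the extension of any hyperplane of π₀, and let S = S(π₀,l_∞). Then the following are equivalent: (a) S is a scattered linear set, i.e. there exists an r-dimensional K-subspace U' of U with B(U') = S and dim_K(U' ∩ x) = 1 for every point x of S; (b) l_∞ is external to π₀ (contains no point of π₀) and every point of S lies in the L-span of exactly one K-subspace H of V with dim_K H = r-1. -/
open Submodule Module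

/-- `BSet L X` is the set of projective points (1-dimensional `L`-subspaces of `W`)
spanned by the nonzero vectors of `X`. -/
def BSet (L : Type*) [Field L] {W : Type*} [AddCommGroup W] [Module L W]
    (X : Set W) : Set (Submodule L W) :=
  {P | ∃ x ∈ X, x ≠ 0 ∧ P = Submodule.span L {x}}

/-- The splash of the `q`-subgeometry `B(V)` of `PG(W)` on the line `PG(U)`:
the set of points of `PG(U)` lying in the `L`-span (extension) of some hyperplane
(`(r-1)`-dimensional `K`-subspace) of `V`. -/
def Splash (K L : Type*) [Field K] [Field L] [Algebra K L]
    {W : Type*} [AddCommGroup W] [Module L W] [Module K W] [IsScalarTower K L W]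
    (V : Submodule K W) (U : Submodule L W) (r : ℕ) : Set (Submodule L W) :=
  {P | Module.finrank L P = 1 ∧ P ≤ U ∧
    ∃ H : Submodule K W, H ≤ V ∧ Module.finrank K H = r - 1 ∧
      P ≤ Submodule.span L (H : Set W)}

section Subgeometry

variable {K L W : Type*} [Field K] [Field L] [Algebra K L] [AddCommGroup W] [Module L W]
  [Module K W] [IsScalarTower K L W]

/-- A point of `PG(W)` is spanned by each of its nonzero vectors. -/
lemma eq_span_singleton_of_mem {P : Submodule L W} (hP : finrank L P = 1) {x : W} (hx : x ∈ P)
    (hx0 : x ≠ 0) : P = span L {x} := by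
  have : FiniteDimensional L P := .of_finrank_pos (by omega)
  refine (eq_of_le_of_finrank_eq ((span_singleton_le_iff_mem x P).2 hx) ?_).symm
  rw [hP, finrank_span_singleton hx0]

/-- The nonzero vectors of a `K`-subspace are counted by their points. -/
lemma card_nonzero_eq_sum [Finite W] (A : Submodule K W) :
    Nat.card {x : W // x ∈ A ∧ x ≠ 0} =
      ∑ᶠ P ∈ BSet L (A : Set W), (Nat.card ↥(A ⊓ P.restrictScalars K) - 1) := by
  classical
  have := Fintype.ofFinite W
  have : Finite (Submodule L W) := .of_injective _ SetLike.coe_injective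
  have hfin := (BSet L (A : Set W)).toFinite
  rw [finsum_mem_eq_finite_toFinset_sum _ hfin, Nat.card_eq_fintype_card, Fintype.card_subtype,
    Finset.card_eq_sum_card_fiberwise (f := fun x => span L {x}) (t := hfin.toFinset)]
  · refine Finset.sum_congr rfl fun P hP => ?_
    obtain ⟨y, hy, hy0, rfl⟩ := hfin.mem_toFinset.1 hP
    have hfilter : (Finset.univ.filter fun x : W => x ∈ A ∧ x ≠ 0).filter
          (fun x => span L {x} = span L {y}) =
        (Finset.univ.filter fun x : W =>
          x ∈ A ⊓ (span L {y}).restrictScalars K).erase 0 := by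
      ext x
      simp only [Finset.mem_filter, Finset.mem_univ, true_and, Finset.mem_erase, mem_inf,
        restrictScalars_mem]
      constructor
      · rintro ⟨⟨h1, h2⟩, h3⟩
        exact ⟨h2, h1, h3 ▸ mem_span_singleton_self x⟩
      · rintro ⟨h1, h2, h3⟩
        exact ⟨⟨h2, h1⟩, (eq_span_singleton_of_mem (finrank_span_singleton hy0) h3 h1).symm⟩
    rw [hfilter, Finset.card_erase_of_mem (by simp), ← Fintype.card_subtype,
      ← Nat.card_eq_fintype_card]
  · intro x hx
    have hx' : x ∈ A ∧ x ≠ 0 := by simpa using hx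
    exact hfin.mem_toFinset.2 ⟨x, hx'.1, hx'.2, rfl⟩

/-- Whether a linear set is scattered depends only on its points and on its rank. -/
lemma finrank_inf_eq_one_of_BSet_eq [Finite K] [Finite W] {A A' : Submodule K W}
    (hrank : finrank K A = finrank K A') (hB : BSet L (A : Set W) = BSet L (A' : Set W))
    (hA' : ∀ P ∈ BSet L (A' : Set W), finrank K ↥(A' ⊓ P.restrictScalars K) = 1) :
    ∀ P ∈ BSet L (A : Set W), finrank K ↥(A ⊓ P.restrictScalars K) = 1 := by
  have : Finite (Submodule L W) := .of_injective _ SetLike.coe_injective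
  have hfin := (BSet L (A : Set W)).toFinite
  have hcard (B : Submodule K W) : Nat.card B = Nat.card K ^ finrank K B :=
    Module.natCard_eq_pow_finrank
  have hq : 1 < Nat.card K := Finite.one_lt_card
  have hnz (B : Submodule K W) : Nat.card {x : W // x ∈ B ∧ x ≠ 0} = Nat.card B - 1 := by
    classical
    have := Fintype.ofFinite W
    have h : (Finset.univ.filter fun x : W => x ∈ B ∧ x ≠ 0) =
        (Finset.univ.filter fun x : W => x ∈ B).erase 0 := by
      ext x; simp [and_comm]
    rw [Nat.card_eq_fintype_card, Fintype.card_subtype, h, Finset.card_erase_of_mem (by simp),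
      ← Fintype.card_subtype, ← Nat.card_eq_fintype_card]
  have hpos : ∀ P ∈ BSet L (A : Set W), 1 ≤ finrank K ↥(A ⊓ P.restrictScalars K) := by
    rintro _ ⟨x, hx, hx0, rfl⟩
    rw [Nat.succ_le_iff, finrank_pos_iff]
    exact (nontrivial_iff_ne_bot).2 fun h =>
      hx0 ((mem_bot K).1 (h ▸ mem_inf.2 ⟨hx, mem_span_singleton_self x⟩))
  have hsum : ∑ P ∈ hfin.toFinset, (Nat.card ↥(A' ⊓ P.restrictScalars K) - 1) =
      ∑ P ∈ hfin.toFinset, (Nat.card ↥(A ⊓ P.restrictScalars K) - 1) := by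
    rw [← finsum_mem_eq_finite_toFinset_sum _ hfin, ← finsum_mem_eq_finite_toFinset_sum _ hfin,
      ← card_nonzero_eq_sum, hB, ← card_nonzero_eq_sum, hnz, hnz, hcard, hcard, hrank]
  rw [Finset.sum_eq_sum_iff_of_le] at hsum
  · intro P hP
    have h := hsum P (hfin.mem_toFinset.2 hP)
    rw [hcard, hcard, hA' P (hB ▸ hP), pow_one] at h
    have h1 : Nat.card K ^ 1 ≤ Nat.card K ^ finrank K ↥(A ⊓ P.restrictScalars K) :=
      Nat.pow_le_pow_right (by omega) (hpos P hP)
    refine Nat.pow_right_injective hq (?_ : Nat.card K ^ _ = Nat.card K ^ 1)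
    rw [pow_one] at h1 ⊢
    omega
  · intro P hP
    have hP' := hfin.mem_toFinset.1 hP
    rw [hcard, hcard, hA' P (hB ▸ hP')]
    exact Nat.sub_le_sub_right (Nat.pow_le_pow_right (by omega) (hpos P hP')) 1

/-- `K`-linear functionals on the subgeometry extend to `L`-linear functionals. -/
lemma exists_dual_extension {V : Submodule K W} [FiniteDimensional K V]
    (hV : finrank K V = finrank L W) (hVspan : span L (V : Set W) = ⊤) :
    ∃ E : Dual K V →ₗ[K] (W →ₗ[L] L), ∀ f (v : V), E f v = algebraMap K L (f v) := by
  let b := finBasis K V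
  have hspan : ⊤ ≤ span L (Set.range fun i => (b i : W)) := by
    rw [← hVspan, span_le]
    intro v hv
    have h : ((∑ i, b.repr ⟨v, hv⟩ i • b i : V) : W) = v :=
      congrArg Subtype.val (b.sum_repr ⟨v, hv⟩)
    rw [SetLike.mem_coe]
    refine h ▸ ?_
    rw [AddSubmonoidClass.coe_finsetSum]
    refine sum_mem fun i _ => ?_
    rw [coe_smul, ← algebraMap_smul L]
    exact smul_mem _ _ (subset_span ⟨i, rfl⟩)
  let B := basisOfTopLeSpanOfCardEqFinrank _ hspan (by simp [hV])
  have hB i : B i = b i := by simp [B]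
  refine ⟨(B.constr K).toLinearMap ∘ₗ
    LinearMap.pi fun i => Algebra.linearMap K L ∘ₗ Dual.eval K V (b i), fun f v => ?_⟩
  let F : V →ₗ[K] L := (((B.constr K).toLinearMap ∘ₗ
    LinearMap.pi fun i => Algebra.linearMap K L ∘ₗ Dual.eval K V (b i)) f).restrictScalars K
      ∘ₗ V.subtype
  have : F = Algebra.linearMap K L ∘ₗ f := by
    refine b.ext fun i => ?_
    simp only [F, LinearMap.comp_apply, LinearMap.restrictScalars_apply, subtype_apply, ← hB,
      LinearEquiv.coe_coe, Basis.constr_basis]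
    simp
  exact congrArg (· v) this

lemma finrank_ker_dual {V : Submodule K W} [FiniteDimensional K V] {f : Dual K V} (hf : f ≠ 0) :
    finrank K ((LinearMap.ker f).map V.subtype) = finrank K V - 1 := by
  rw [finrank_map_subtype_eq]
  have := Module.Dual.finrank_ker_add_one_of_ne_zero hf
  omega

/-- Hyperplanes are kernels of functionals. -/
lemma exists_dual_of_hyperplane {V H : Submodule K W} [FiniteDimensional K V]
    (hV : 0 < finrank K V) (hHV : H ≤ V) (hH : finrank K H = finrank K V - 1) :
    ∃ f : Dual K V, f ≠ 0 ∧ H = (LinearMap.ker f).map V.subtype := by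
  have hlt : H.comap V.subtype < ⊤ := by
    refine lt_top_iff_ne_top.2 fun h => ?_
    have : H = V := le_antisymm hHV (comap_subtype_eq_top.1 h)
    rw [this] at hH
    omega
  obtain ⟨f, hf, hle⟩ := exists_le_ker_of_lt_top _ hlt
  refine ⟨f, hf, eq_of_le_of_finrank_eq ?_ (by rw [hH, finrank_ker_dual hf])⟩
  intro x hx
  exact ⟨⟨x, hHV hx⟩, hle hx, rfl⟩

/-- Functionals with the same kernel are proportional. -/
lemma exists_eq_smul_of_ker_eq {M : Type*} [AddCommGroup M] [Module K M] {f g : Dual K M}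
    (hf : f ≠ 0) (h : LinearMap.ker f = LinearMap.ker g) : ∃ c : K, g = c • f := by
  obtain ⟨v, hv⟩ : ∃ v, f v = 1 := LinearMap.surjective hf 1
  refine ⟨g v, LinearMap.ext fun x => ?_⟩
  have hx : x - f x • v ∈ LinearMap.ker f := by simp [hv]
  rw [h, LinearMap.mem_ker, map_sub, map_smul, sub_eq_zero] at hx
  simpa [mul_comm] using hx

/-- The extension of the hyperplane `ker f` is the kernel of the extension of `f`. -/
lemma span_ker_dual {V : Submodule K W} (hVspan : span L (V : Set W) = ⊤) {f : Dual K V}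
    (hf : f ≠ 0) {F : W →ₗ[L] L} (hF : ∀ v : V, F v = algebraMap K L (f v)) :
    span L ((LinearMap.ker f).map V.subtype : Set W) = LinearMap.ker F := by
  apply le_antisymm
  · rw [span_le]
    rintro _ ⟨v, hv, rfl⟩
    have : f v = 0 := hv
    simp [hF, this]
  · obtain ⟨v₀, hv₀⟩ : ∃ v, f v = 1 := LinearMap.surjective hf 1
    intro w hw
    have key : ∀ w ∈ span L (V : Set W),
        w - F w • (v₀ : W) ∈ span L ((LinearMap.ker f).map V.subtype : Set W) := by
      intro w hw
      induction hw using span_induction with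
      | mem x hx =>
        refine subset_span ⟨⟨x, hx⟩ - f ⟨x, hx⟩ • v₀, by simp [hv₀], ?_⟩
        have := hF ⟨x, hx⟩
        simp only at this
        simp [this]
      | zero => simp
      | add x y _ _ hx hy =>
        convert add_mem hx hy using 1
        rw [map_add, add_smul]; abel
      | smul a x _ hx =>
        convert smul_mem _ a hx using 1
        rw [map_smul, smul_sub, smul_smul, smul_eq_mul]
    have := key w (hVspan ▸ mem_top)
    rwa [LinearMap.mem_ker.1 hw, zero_smul, sub_zero] at this

/-- A functional that does not vanish on a line meets it in a point, which depends linearly on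
the functional. -/
lemma exists_line_duality {U : Submodule L W} (hU : finrank L U = 2) :
    ∃ D : (W →ₗ[L] L) →ₗ[L] W, ∀ F : W →ₗ[L] L, ¬ U ≤ LinearMap.ker F →
      D F ≠ 0 ∧ U ⊓ LinearMap.ker F = span L {D F} := by
  have : FiniteDimensional L U := .of_finrank_pos (by omega)
  let b := finBasisOfFinrankEq L U hU
  refine ⟨(LinearMap.applyₗ (b 1 : W)).smulRight (b 0 : W) -
    (LinearMap.applyₗ (b 0 : W)).smulRight (b 1 : W), fun F hF => ?_⟩
  simp only [LinearMap.sub_apply, LinearMap.smulRight_apply, LinearMap.applyₗ_apply_apply]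
  have hrepr (w : W) (hw : w ∈ U) : ∃ c d : L, w = c • (b 0 : W) + d • (b 1 : W) := by
    have h := congrArg Subtype.val (b.sum_repr ⟨w, hw⟩)
    rw [Fin.sum_univ_two] at h
    exact ⟨_, _, h.symm⟩
  have hne : F (b 1) • (b 0 : W) - F (b 0) • (b 1 : W) ≠ 0 := by
    intro h
    have h' : F (b 1) • b 0 + (-F (b 0)) • b 1 = 0 := by
      apply Subtype.ext
      simpa [sub_eq_add_neg] using h
    have := Fintype.linearIndependent_iff.1 b.linearIndependent ![F (b 1), -F (b 0)]
      (by simpa [Fin.sum_univ_two] using h')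
    have h1 : F (b 1) = 0 := by simpa using this 0
    have h0 : F (b 0) = 0 := by simpa using this 1
    apply hF
    intro w hw
    obtain ⟨c, d, rfl⟩ := hrepr w hw
    simp [h0, h1]
  refine ⟨hne, le_antisymm ?_ ?_⟩
  · rintro w ⟨hw, hFw⟩
    obtain ⟨c, d, rfl⟩ := hrepr w hw
    have h : c * F (b 0) + d * F (b 1) = 0 := by simpa using hFw
    rw [mem_span_singleton]
    by_cases h1 : F (b 1) = 0
    · have h0 : F (b 0) ≠ 0 := by
        intro h0
        simp [h0, h1] at hne
      have hc : c = 0 := by simpa [h1, h0] using h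
      refine ⟨-d / F (b 0), ?_⟩
      rw [smul_sub, smul_smul, smul_smul, h1, hc, div_mul_cancel₀ _ h0]
      simp
    · refine ⟨c / F (b 1), ?_⟩
      have hd : d = -(c / F (b 1) * F (b 0)) := by
        field_simp
        linear_combination h
      rw [smul_sub, smul_smul, smul_smul, div_mul_cancel₀ _ h1, hd, neg_smul, sub_eq_add_neg]
  · rw [span_singleton_le_iff_mem]
    refine ⟨U.sub_mem (U.smul_mem _ (b 0).2) (U.smul_mem _ (b 1).2), ?_⟩
    simp [mul_comm]

/-- The splash is the linear set of an injective map on the dual of the subgeometry, in which the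
hyperplanes through a point correspond to the functionals mapped into that point. -/
lemma exists_splash_map {r : ℕ} {V : Submodule K W} [FiniteDimensional K V]
    (hr : finrank K V = r) (hV : finrank K V = finrank L W) (hV0 : 0 < finrank K V)
    (hVspan : span L (V : Set W) = ⊤) {U : Submodule L W} (hU : finrank L U = 2)
    (hext : ∀ H : Submodule K W, H ≤ V → finrank K H = r - 1 →
      ¬ U ≤ span L (H : Set W)) :
    ∃ ψ : Dual K V →ₗ[K] W, Function.Injective ψ ∧ (∀ f, ψ f ∈ U) ∧
      Splash K L V U r = BSet L (LinearMap.range ψ : Set W) ∧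
      ∀ P : Submodule L W, finrank L P = 1 → P ≤ U → ∀ f : Dual K V, f ≠ 0 →
        (P ≤ span L ((LinearMap.ker f).map V.subtype : Set W) ↔ ψ f ∈ P) := by
  subst hr
  obtain ⟨E, hE⟩ := exists_dual_extension hV hVspan
  obtain ⟨D, hD⟩ := exists_line_duality hU
  have hspan (f : Dual K V) (hf : f ≠ 0) :
      span L ((LinearMap.ker f).map V.subtype : Set W) = LinearMap.ker (E f) :=
    span_ker_dual hVspan hf (hE f)
  have hDE (f : Dual K V) (hf : f ≠ 0) := hD (E f)
    (hspan f hf ▸ hext _ (map_subtype_le _ _) (finrank_ker_dual hf))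
  have hmem (f : Dual K V) (hf : f ≠ 0) : D (E f) ∈ U ⊓ LinearMap.ker (E f) :=
    (hDE f hf).2 ▸ mem_span_singleton_self _
  have hiff (P : Submodule L W) (hP : finrank L P = 1) (hPU : P ≤ U) (f : Dual K V)
      (hf : f ≠ 0) :
      P ≤ span L ((LinearMap.ker f).map V.subtype : Set W) ↔ D (E f) ∈ P := by
    rw [hspan f hf]
    constructor
    · intro h
      have hle : P ≤ span L {D (E f)} := (hDE f hf).2 ▸ le_inf hPU h
      rw [eq_of_le_of_finrank_eq hle (by rw [hP, finrank_span_singleton (hDE f hf).1])]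
      exact mem_span_singleton_self _
    · intro h
      rw [eq_span_singleton_of_mem hP h (hDE f hf).1, span_singleton_le_iff_mem]
      exact (hmem f hf).2
  refine ⟨(D.restrictScalars K) ∘ₗ E, ?_, ?_, ?_, hiff⟩
  · refine (injective_iff_map_eq_zero _).2 fun f hf => ?_
    by_contra h
    exact (hDE f h).1 hf
  · intro f
    by_cases hf : f = 0
    · simp [hf]
    · exact (hmem f hf).1
  · ext P
    constructor
    · rintro ⟨hP, hPU, H, hHV, hH, hPH⟩
      obtain ⟨f, hf, rfl⟩ := exists_dual_of_hyperplane hV0 hHV hH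
      exact ⟨D (E f), ⟨f, rfl⟩, (hDE f hf).1,
        eq_span_singleton_of_mem hP ((hiff P hP hPU f hf).1 hPH) (hDE f hf).1⟩
    · rintro ⟨_, ⟨f, rfl⟩, hne, rfl⟩
      have hf : f ≠ 0 := fun h => hne (by simp [h])
      have h1 := finrank_span_singleton (K := L) hne
      have hU' := (span_singleton_le_iff_mem _ U).2 (hmem f hf).1
      exact ⟨h1, hU', _, map_subtype_le _ _, finrank_ker_dual hf,
        (hiff _ h1 hU' f hf).2 (mem_span_singleton_self _)⟩

/-- The splash of a subgeometry on a line is a scattered linear set if and only if the line is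
external and each point of the splash lies on a unique hyperplane. -/
lemma splash_scattered_iff [Finite K] [Finite W] {r : ℕ} (hr : 3 ≤ r) {V : Submodule K W}
    (hVrank : finrank K V = r) (hWrank : finrank K V = finrank L W)
    (hVspan : span L (V : Set W) = ⊤) {U : Submodule L W} (hU : finrank L U = 2)
    (hext : ∀ H : Submodule K W, H ≤ V → finrank K H = r - 1 → ¬ U ≤ span L (H : Set W)) :
    (∃ U' : Submodule K W, U' ≤ U.restrictScalars K ∧ finrank K U' = r ∧
        BSet L (U' : Set W) = Splash K L V U r ∧
        ∀ x ∈ Splash K L V U r, finrank K ↥(U' ⊓ x.restrictScalars K) = 1) ↔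
      ((∀ P ∈ BSet L (V : Set W), ¬ P ≤ U) ∧
        ∀ x ∈ Splash K L V U r, ∃! H : Submodule K W,
          H ≤ V ∧ finrank K H = r - 1 ∧ x ≤ span L (H : Set W)) := by
  have : FiniteDimensional K V := .of_finrank_pos (by omega)
  obtain ⟨ψ, hinj, hψU, hS, hψ⟩ := exists_splash_map hVrank hWrank (by omega) hVspan hU hext
  have hker (f : Dual K V) (hf : f ≠ 0) :
      finrank K ((LinearMap.ker f).map V.subtype) = r - 1 := hVrank ▸ finrank_ker_dual hf
  have hdual (H : Submodule K (W)) (hHV : H ≤ V) (hH : finrank K H = r - 1) :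
      ∃ f : Dual K V, f ≠ 0 ∧ H = (LinearMap.ker f).map V.subtype :=
    exists_dual_of_hyperplane (by omega) hHV (by omega)
  have hψrank : finrank K (LinearMap.range ψ) = r := by
    rw [← hVrank, LinearMap.finrank_range_of_inj hinj, Subspace.dual_finrank_eq]
  constructor
  · rintro ⟨U', -, hU'rank, hU'S, hU'⟩
    have hscat := finrank_inf_eq_one_of_BSet_eq (L := L) (hψrank.trans hU'rank.symm)
      (hS.symm.trans hU'S.symm) (hU'S ▸ hU')
    rw [← hS] at hscat
    constructor
    · rintro _ ⟨v, hv, hv0, rfl⟩ hPU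
      have hP1 := finrank_span_singleton (K := L) hv0
      let A := LinearMap.ker (Dual.eval K V ⟨v, hv⟩)
      have hA : finrank K A + 1 = finrank K V := by
        rw [← Subspace.dual_finrank_eq (K := K) (V := V)]
        refine Module.Dual.finrank_ker_add_one_of_ne_zero fun h => hv0 ?_
        exact congrArg Subtype.val ((eval_apply_eq_zero_iff K (⟨v, hv⟩ : V)).1 h)
      have hAψ (f : Dual K V) (hf : f ∈ A) : ψ f ∈ span L {v} := by
        by_cases hf0 : f = 0
        · simp [hf0]
        · refine (hψ _ hP1 hPU f hf0).1 ((span_singleton_le_iff_mem _ _).2 ?_)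
          exact subset_span ⟨⟨v, hv⟩, hf, rfl⟩
      have : Nontrivial A := (finrank_pos_iff (R := K)).1 (by omega)
      obtain ⟨⟨f, hf⟩, hf0⟩ := exists_ne (0 : A)
      have hf0' : f ≠ 0 := fun h => hf0 (Subtype.ext h)
      have hmem : span L {v} ∈ Splash K L V U r :=
        ⟨hP1, hPU, _, map_subtype_le _ _, hker f hf0',
          (hψ _ hP1 hPU f hf0').2 (hAψ f hf)⟩
      have hle : A.map ψ ≤ LinearMap.range ψ ⊓ (span L {v}).restrictScalars K := by
        rintro _ ⟨g, hg, rfl⟩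
        exact ⟨⟨g, rfl⟩, hAψ g hg⟩
      have h1 := finrank_mono hle
      rw [hscat _ hmem, (equivMapOfInjective ψ hinj A).symm.finrank_eq] at h1
      omega
    · intro P hP
      obtain ⟨hP1, hPU, H, hHV, hH, hPH⟩ := id hP
      refine ⟨H, ⟨hHV, hH, hPH⟩, ?_⟩
      rintro H' ⟨hHV', hH', hPH'⟩
      obtain ⟨f, hf, rfl⟩ := hdual _ hHV hH
      obtain ⟨g, hg, rfl⟩ := hdual _ hHV' hH'
      have hfP := (hψ P hP1 hPU f hf).1 hPH
      have hgP := (hψ P hP1 hPU g hg).1 hPH'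
      have hf0 : ψ f ≠ 0 := (map_ne_zero_iff ψ hinj).2 hf
      obtain ⟨c, hc⟩ := (finrank_eq_one_iff_of_nonzero'
        (⟨ψ f, ⟨f, rfl⟩, hfP⟩ : ↥(LinearMap.range ψ ⊓ P.restrictScalars K))
        fun h => hf0 (congrArg Subtype.val h)).1 (hscat P hP) ⟨ψ g, ⟨g, rfl⟩, hgP⟩
      have hgf : g = c • f := hinj (by rw [map_smul]; exact (congrArg Subtype.val hc).symm)
      have hc0 : c ≠ 0 := by
        rintro rfl
        exact hg (by simpa using hgf)
      rw [hgf, LinearMap.ker_smul _ _ hc0]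
  · rintro ⟨-, huniq⟩
    refine ⟨LinearMap.range ψ, ?_, hψrank, hS.symm, ?_⟩
    · rintro _ ⟨f, rfl⟩
      exact hψU f
    · intro P hP
      obtain ⟨hP1, hPU, H, hHV, hH, hPH⟩ := id hP
      obtain ⟨f, hf, rfl⟩ := hdual _ hHV hH
      have hfP := (hψ P hP1 hPU f hf).1 hPH
      have hf0 : ψ f ≠ 0 := (map_ne_zero_iff ψ hinj).2 hf
      refine (finrank_eq_one_iff_of_nonzero'
        (⟨ψ f, ⟨f, rfl⟩, hfP⟩ : ↥(LinearMap.range ψ ⊓ P.restrictScalars K))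
        fun h => hf0 (congrArg Subtype.val h)).2 ?_
      rintro ⟨_, ⟨g, rfl⟩, hgP⟩
      by_cases hg : g = 0
      · exact ⟨0, Subtype.ext (by simp [hg])⟩
      have hkereq := (huniq P hP).unique ⟨hHV, hH, hPH⟩
        ⟨map_subtype_le _ _, hker g hg, (hψ P hP1 hPU g hg).2 hgP⟩
      obtain ⟨c, rfl⟩ := exists_eq_smul_of_ker_eq hf
        (map_injective_of_injective V.injective_subtype hkereq)
      exact ⟨c, Subtype.ext (by simp)⟩

end Subgeometry

/-- a splash is a scattered linear set if and only if it is an external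
splash in which every point lies on exactly one hyperplane of the subgeometry. -/
theorem scattered_iff_external
    (K L : Type*) [Field K] [Field L] [Algebra K L] [Fintype K] [Fintype L]
    (r n : ℕ) (hr : 3 ≤ r) (hn : 2 ≤ n) (hrank : Module.finrank K L = n)
    (V : Submodule K (Fin r → L))
    (hVrank : Module.finrank K V = r)
    (hVspan : Submodule.span L (V : Set (Fin r → L)) = ⊤)
    (U : Submodule L (Fin r → L)) (hU : Module.finrank L U = 2)
    (hext : ∀ H : Submodule K (Fin r → L), H ≤ V → Module.finrank K H = r - 1 →
      ¬ U ≤ Submodule.span L (H : Set (Fin r → L))) :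
    (∃ U' : Submodule K (Fin r → L), U' ≤ U.restrictScalars K ∧
        Module.finrank K U' = r ∧
        BSet L (U' : Set (Fin r → L)) = Splash K L V U r ∧
        ∀ x ∈ Splash K L V U r,
          Module.finrank K ↥(U' ⊓ x.restrictScalars K) = 1) ↔
      ((∀ P ∈ BSet L (V : Set (Fin r → L)), ¬ P ≤ U) ∧
        ∀ x ∈ Splash K L V U r,
          ∃! H : Submodule K (Fin r → L),
            H ≤ V ∧ Module.finrank K H = r - 1 ∧
              x ≤ Submodule.span L (H : Set (Fin r → L))) := by
  exact splash_scattered_iff hr hVrank (by simp [hVrank]) hVspan hU hext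
end

section
/- Let 3 ≤ r ≤ n, let T be a point of PG(1,q^n) and A a set of q^{r-1} points of PG(1,q^n) with T ∉ A. Suppose there exists an r-dimensional K-subspace U₀ of L^2 with B(U₀) = {T} ∪ A and dim_K(U₀ ∩ T) = r-1 (i.e. {T} ∪ A is an F_q-club of rank r with head T). Then there exist an injective L-linear map φ : L^2 → L^r and a q-subgeometry π₀ = B(V) of PG(r-1,q^n) such that the line l_∞ = PG(φ(L^2)) is tangent to π₀ with centre the point {φ(t) : t ∈ T} (the image of T), l_∞ is not contained in the extension of any hyperplane of π₀, and S(π₀,l_∞) = {L·φ(u) : L·u ∈ {T} ∪ A}. -/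
open Submodule Module

/-- The canonical subgeometry `K ^ ι` inside `L ^ ι`, as the range of a `K`-linear map. -/
noncomputable def canonicalEmbedding (K L ι : Type*) [Field K] [Field L] [Algebra K L] :
    (ι → K) →ₗ[K] (ι → L) :=
  (Algebra.linearMap K L).compLeft ι

section CanonicalSubgeometry

variable {K L ι : Type*} [Field K] [Field L] [Algebra K L]

@[simp]
theorem canonicalEmbedding_apply (v : ι → K) (i : ι) :
    canonicalEmbedding K L ι v i = algebraMap K L (v i) := rfl

theorem canonicalEmbedding_injective : Function.Injective (canonicalEmbedding K L ι) := by
  intro v w h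
  funext i
  exact (algebraMap K L).injective (congrFun h i)

variable [Fintype ι]

theorem finrank_range_canonicalEmbedding :
    finrank K (LinearMap.range (canonicalEmbedding K L ι)) = Fintype.card ι := by
  rw [LinearMap.finrank_range_of_inj canonicalEmbedding_injective, finrank_fintype_fun_eq_card]

theorem span_range_canonicalEmbedding :
    span L (LinearMap.range (canonicalEmbedding K L ι) : Set (ι → L)) = ⊤ := by
  classical
  rw [eq_top_iff, ← (Pi.basisFun L ι).span_eq, span_le]
  rintro _ ⟨i, rfl⟩
  refine subset_span ⟨Pi.single i 1, ?_⟩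
  funext j
  by_cases h : j = i
  · subst h; simp
  · simp [h]

/-- A proper subspace of the canonical subgeometry is annihilated by a nonzero linear form
with coefficients in the small field. -/
theorem exists_form_vanishing_on_span (H : Submodule K (ι → L))
    (hH : H ≤ LinearMap.range (canonicalEmbedding K L ι))
    (hlt : finrank K H < Fintype.card ι) :
    ∃ c : ι → K, c ≠ 0 ∧
      ∀ v ∈ span L (H : Set (ι → L)), ∑ i, algebraMap K L (c i) * v i = 0 := by
  classical
  have hne : H.comap (canonicalEmbedding K L ι) < ⊤ := by
    rw [lt_top_iff_ne_top]
    intro htop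
    have : H = LinearMap.range (canonicalEmbedding K L ι) := by
      refine le_antisymm hH ?_
      rintro _ ⟨v, rfl⟩
      have : v ∈ H.comap (canonicalEmbedding K L ι) := htop ▸ mem_top
      exact this
    rw [this, finrank_range_canonicalEmbedding] at hlt
    exact lt_irrefl _ hlt
  obtain ⟨f, hf, hle⟩ := Submodule.exists_le_ker_of_lt_top _ hne
  have hfsum : ∀ v : ι → K, f v = ∑ i, f (Pi.single i 1) * v i := by
    intro v
    conv_lhs => rw [pi_eq_sum_univ' v]
    simp [mul_comm, Pi.single]
  refine ⟨fun i => f (Pi.single i 1), ?_, ?_⟩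
  · intro h
    refine hf (LinearMap.ext fun v => ?_)
    rw [hfsum]
    refine Finset.sum_eq_zero fun i _ => ?_
    rw [show f (Pi.single i 1) = 0 from congrFun h i, zero_mul]
  · intro v hv
    induction hv using span_induction with
    | mem x hx =>
      obtain ⟨w, rfl⟩ := hH hx
      have : f w = 0 := hle hx
      rw [hfsum] at this
      simpa using congrArg (algebraMap K L) this
    | zero => simp
    | add x y _ _ hx hy => simp [mul_add, Finset.sum_add_distrib, hx, hy]
    | smul a x _ hx =>
      simp only [Pi.smul_apply, smul_eq_mul, mul_left_comm _ a, ← Finset.mul_sum, hx, mul_zero]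

/-- The kernel of a nonzero linear form with coefficients in the small field is
contained in the extension of a hyperplane of the canonical subgeometry. -/
theorem exists_hyperplane_of_form (c : ι → K) (hc : c ≠ 0) :
    ∃ H : Submodule K (ι → L), H ≤ LinearMap.range (canonicalEmbedding K L ι) ∧
      finrank K H = Fintype.card ι - 1 ∧
      ∀ v : ι → L, ∑ i, algebraMap K L (c i) * v i = 0 → v ∈ span L (H : Set (ι → L)) := by
  classical
  obtain ⟨j, hj⟩ := Function.ne_iff.mp hc
  simp only [Pi.zero_apply] at hj
  let f : (ι → K) →ₗ[K] K := Fintype.linearCombination K c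
  have hf : ∀ v, f v = ∑ i, v i * c i := fun v => by simp [f, Fintype.linearCombination_apply]
  have hf0 : f ≠ 0 := by
    intro h
    have := hf (Pi.single j 1)
    rw [h] at this
    simp [Pi.single_apply] at this
    exact hj this.symm
  refine ⟨(LinearMap.ker f).map (canonicalEmbedding K L ι), LinearMap.map_le_range, ?_, ?_⟩
  · have hker := Module.Dual.finrank_ker_add_one_of_ne_zero hf0
    rw [finrank_fintype_fun_eq_card] at hker
    rw [(equivMapOfInjective _ canonicalEmbedding_injective _).symm.finrank_eq]
    omega
  · intro v hv
    have key : v = ∑ i, v i • canonicalEmbedding K L ι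
        (Pi.single i 1 - (c i / c j) • Pi.single j 1) := by
      have hj' : algebraMap K L (c j) ≠ 0 := by simpa using hj
      have hsum : ∑ i, v i * (algebraMap K L (c i) / algebraMap K L (c j)) = 0 := by
        simp only [mul_div_assoc', ← Finset.sum_div, mul_comm (v _) (algebraMap K L _), hv,
          zero_div]
      funext k
      by_cases hk : k = j
      · subst hk
        simp only [← map_div₀, mul_comm (v _), ← Algebra.smul_def] at hsum
        simp [Pi.single_apply, mul_sub, Finset.sum_sub_distrib, hsum, apply_ite]
      · simp [Pi.single_apply, hk, apply_ite]
    rw [key]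
    refine sum_mem fun i _ => smul_mem _ _ (subset_span ⟨_, ?_, rfl⟩)
    simp only [SetLike.mem_coe, LinearMap.mem_ker, hf]
    simp [Pi.single_apply, sub_mul, Finset.sum_sub_distrib, hj]

end CanonicalSubgeometry

/-- A club is spanned by a vector outside its head and by multiples of a generator of the head
whose coefficients are linearly independent over the small field. -/
theorem exists_club_generators {K L W : Type*} [Field K] [Field L] [Algebra K L]
    [AddCommGroup W] [Module L W] [Module K W] [IsScalarTower K L W] {s : ℕ}
    (T : Submodule L W) (t : W) (hT : T = span L {t}) (U : Submodule K W)
    (hU : finrank K U = s + 1)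
    (hUT : finrank K ↥(U ⊓ T.restrictScalars K) = s) :
    ∃ (u : W) (a : Fin s → L), u ∉ T ∧ LinearIndependent K a ∧
      ∀ v, v ∈ U ↔ ∃ (k : K) (c : Fin s → K), v = k • u + (∑ i, c i • a i) • t := by
  have hUfin : FiniteDimensional K U := FiniteDimensional.of_finrank_pos (by omega)
  have : FiniteDimensional K ↥(U ⊓ T.restrictScalars K) :=
    Submodule.finiteDimensional_of_le inf_le_left
  let b := finBasisOfFinrankEq K _ hUT
  have hb : ∀ i, ∃ x : L, x • t = (b i : W) := fun i => by
    have h : (b i : W) ∈ T := (b i).2.2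
    exact mem_span_singleton.mp (hT.le h)
  choose a ha using hb
  have hsum : ∀ c : Fin s → K, (∑ i, c i • a i) • t = ((∑ i, c i • b i : ↥(U ⊓ _)) : W) := by
    intro c
    simp [Finset.sum_smul, ha]
  obtain ⟨u, huU, huT⟩ : ∃ u ∈ U, u ∉ T := by
    by_contra! h
    have : U ⊓ T.restrictScalars K = U := inf_eq_left.mpr h
    rw [this] at hUT
    omega
  have hspan : (U ⊓ T.restrictScalars K) ⊔ span K {u} = U := by
    have hle : (U ⊓ T.restrictScalars K) ⊔ span K {u} ≤ U :=
      sup_le inf_le_left (by simpa using huU)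
    have := Submodule.finiteDimensional_of_le hle
    refine eq_of_le_of_finrank_le hle ?_
    rw [hU, ← hUT]
    refine finrank_lt_finrank_of_lt (lt_of_le_of_ne le_sup_left fun h => huT ?_)
    have : u ∈ (U ⊓ T.restrictScalars K) ⊔ span K {u} :=
      mem_sup_right (mem_span_singleton_self u)
    rw [← h] at this
    exact this.2
  refine ⟨u, a, huT, ?_, fun v => ⟨fun hv => ?_, ?_⟩⟩
  · rw [Fintype.linearIndependent_iff]
    intro c hc
    refine Fintype.linearIndependent_iff.mp b.linearIndependent c (Subtype.ext ?_)
    rw [← hsum, hc, zero_smul, ZeroMemClass.coe_zero]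
  · rw [← hspan, mem_sup] at hv
    obtain ⟨y, hy, z, hz, rfl⟩ := hv
    obtain ⟨k, rfl⟩ := mem_span_singleton.mp hz
    refine ⟨k, b.repr ⟨y, hy⟩, ?_⟩
    rw [hsum, b.sum_repr, add_comm]
  · rintro ⟨k, c, rfl⟩
    rw [hsum]
    exact add_mem (U.smul_mem k huU) (∑ i, c i • b i).2.1

theorem exists_eq_span_singleton_of_finrank_eq_one {L W : Type*} [Field L] [AddCommGroup W]
    [Module L W] {P : Submodule L W} (hP : finrank L P = 1) : ∃ x ≠ 0, P = span L {x} := by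
  have : FiniteDimensional L P := FiniteDimensional.of_finrank_pos (by omega)
  obtain ⟨x, hx, hx0⟩ := P.exists_mem_ne_zero_of_ne_bot (by rintro rfl; simp at hP)
  refine ⟨x, hx0, (eq_of_le_of_finrank_le (by simpa using hx) ?_).symm⟩
  rw [hP, finrank_span_singleton hx0]

/-- an `F_q`-club of rank `r` with head `T` on `PG(1,q^n)` is (the image
under a suitable embedding of) a tangent splash with centre `T`. -/
theorem club_is_tangent_splash
    (K L : Type*) [Field K] [Field L] [Algebra K L] [Fintype K] [Fintype L]
    (q r n : ℕ) (hq : Fintype.card K = q)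
    (hr : 3 ≤ r) (hrn : r ≤ n) (hrank : Module.finrank K L = n)
    (T : Submodule L (Fin 2 → L)) (hT : Module.finrank L T = 1)
    (A : Set (Submodule L (Fin 2 → L)))
    (hA : ∀ P ∈ A, Module.finrank L P = 1)
    (hAcard : A.ncard = q ^ (r - 1)) (hTA : T ∉ A)
    (U₀ : Submodule K (Fin 2 → L)) (hU₀ : Module.finrank K U₀ = r)
    (hU₀B : BSet L (U₀ : Set (Fin 2 → L)) = insert T A)
    (hU₀T : Module.finrank K ↥(U₀ ⊓ T.restrictScalars K) = r - 1) :
    ∃ φ : (Fin 2 → L) →ₗ[L] (Fin r → L), Function.Injective φ ∧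
      ∃ V : Submodule K (Fin r → L),
        Module.finrank K V = r ∧
        Submodule.span L (V : Set (Fin r → L)) = ⊤ ∧
        (∀ H : Submodule K (Fin r → L), H ≤ V → Module.finrank K H = r - 1 →
          ¬ LinearMap.range φ ≤ Submodule.span L (H : Set (Fin r → L))) ∧
        {P | P ∈ BSet L (V : Set (Fin r → L)) ∧ P ≤ LinearMap.range φ} =
          {Submodule.map φ T} ∧
        Splash K L V (LinearMap.range φ) r =
          (fun P => Submodule.map φ P) '' insert T A := by
  obtain ⟨s, rfl⟩ : ∃ s, r = s + 1 := ⟨r - 1, by omega⟩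
  simp only [Nat.add_sub_cancel] at *
  obtain ⟨t, ht0, hTt⟩ := exists_eq_span_singleton_of_finrank_eq_one hT
  obtain ⟨u, a, huT, ha, hmem⟩ := exists_club_generators T t hTt U₀ hU₀ hU₀T
  have hli : LinearIndependent L ![t, u] := by
    rw [LinearIndependent.pair_iff' ht0]
    intro x hx
    exact huT (hTt ▸ mem_span_singleton.mpr ⟨x, hx⟩)
  let b := basisOfLinearIndependentOfCardEqFinrank hli (by simp)
  have hb : ⇑b = ![t, u] := coe_basisOfLinearIndependentOfCardEqFinrank hli _
  have hdecomp : ∀ v, ∃ x y : L, v = x • u + y • t := fun v =>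
    ⟨b.repr v 1, b.repr v 0, by
      conv_lhs => rw [← b.sum_repr v]
      simp [hb, Fin.sum_univ_two, add_comm]⟩
  let φ : (Fin 2 → L) →ₗ[L] (Fin (s + 1) → L) :=
    b.constr L ![Fin.cons 1 0, Fin.cons 0 a]
  have hφt : φ t = Fin.cons 1 0 := by
    have := b.constr_basis L ![(Fin.cons 1 0 : Fin (s + 1) → L), Fin.cons 0 a] 0
    rwa [hb] at this
  have hφu : φ u = Fin.cons 0 a := by
    have := b.constr_basis L ![(Fin.cons 1 0 : Fin (s + 1) → L), Fin.cons 0 a] 1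
    rwa [hb] at this
  have hφ0 : ∀ x y : L, φ (x • u + y • t) 0 = y := fun x y => by simp [hφt, hφu]
  have hφs : ∀ (x y : L) (i : Fin s), φ (x • u + y • t) i.succ = x * a i :=
    fun x y i => by simp [hφt, hφu]
  have hform : ∀ (c : Fin (s + 1) → K) (x y : L),
      ∑ i, algebraMap K L (c i) * φ (x • u + y • t) i =
        algebraMap K L (c 0) * y + x * ∑ i : Fin s, c i.succ • a i := by
    intro c x y
    rw [Fin.sum_univ_succ, hφ0, Finset.mul_sum]
    congr 1
    refine Finset.sum_congr rfl fun i _ => ?_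
    rw [hφs, Algebra.smul_def, mul_left_comm]
  have hform0 : ∀ c : Fin (s + 1) → K, c 0 = 0 → ∑ i : Fin s, c i.succ • a i = 0 → c = 0 := by
    intro c h0 hs
    have := Fintype.linearIndependent_iff.mp ha _ hs
    funext i
    exact Fin.cases h0 this i
  have hinj : Function.Injective φ := by
    rw [injective_iff_map_eq_zero]
    intro v hv
    obtain ⟨x, y, rfl⟩ := hdecomp v
    have hy : y = 0 := by rw [← hφ0 x y, hv]; rfl
    have hx : x = 0 := by
      have := hφs x y ⟨0, by omega⟩
      rw [hv, Pi.zero_apply, zero_eq_mul] at this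
      exact this.resolve_right (ha.ne_zero _)
    simp [hx, hy]
  have hmapT : Submodule.map φ T = span L {φ t} := by
    rw [hTt, map_span, Set.image_singleton]
  have hspan_t : ∀ y : L, φ (y • t) ≠ 0 → span L {φ (y • t)} = Submodule.map φ T := by
    intro y hy
    have hy0 : y ≠ 0 := by rintro rfl; simp at hy
    rw [hmapT, map_smul, span_singleton_smul_eq hy0.isUnit]
  refine ⟨φ, hinj, LinearMap.range (canonicalEmbedding K L (Fin (s + 1))), ?_,
    span_range_canonicalEmbedding, ?_, ?_, ?_⟩
  · rw [finrank_range_canonicalEmbedding, Fintype.card_fin]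
  · intro H hHV hH hle
    obtain ⟨c, hc, hvan⟩ := exists_form_vanishing_on_span H hHV (by simp [hH])
    have h1 := hform c 0 1
    have h2 := hform c 1 0
    rw [hvan _ (hle ⟨_, rfl⟩)] at h1 h2
    refine hc (hform0 c ?_ ?_)
    · simpa using h1.symm
    · simpa using h2.symm
  · ext P
    constructor
    · rintro ⟨⟨_, ⟨w, rfl⟩, hw0, rfl⟩, hP⟩
      obtain ⟨v, hv⟩ := hP (mem_span_singleton_self _)
      obtain ⟨x, y, rfl⟩ := hdecomp v
      have hx : x = 0 := by
        let i : Fin s := ⟨0, by omega⟩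
        let j : Fin s := ⟨1, by omega⟩
        have hij : i ≠ j := by simp [i, j]
        have hi : algebraMap K L (w i.succ) = x * a i := by rw [← hφs x y, hv]; rfl
        have hj : algebraMap K L (w j.succ) = x * a j := by rw [← hφs x y, hv]; rfl
        have hpair : LinearIndependent K ![a i, a j] := by
          rw [show ![a i, a j] = a ∘ ![i, j] by ext k; fin_cases k <;> rfl]
          exact ha.comp _ (by simpa [Function.Injective, Fin.forall_fin_two] using ⟨hij, hij.symm⟩)
        have := LinearIndependent.pair_iff.mp hpair (w j.succ) (-w i.succ) (by
          rw [neg_smul, Algebra.smul_def, Algebra.smul_def, hi, hj]; ring)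
        rw [this.1, map_zero, zero_eq_mul] at hj
        exact hj.resolve_right (ha.ne_zero _)
      subst hx
      rw [zero_smul, zero_add] at hv
      rw [Set.mem_singleton_iff, ← hv]
      exact hspan_t y (hv ▸ hw0)
    · rintro rfl
      refine ⟨⟨φ t, ⟨Fin.cons 1 0, ?_⟩, ?_, hmapT⟩, LinearMap.map_le_range⟩
      · rw [hφt]
        funext i
        refine Fin.cases ?_ (fun i => ?_) i <;> simp
      · rwa [Ne, map_eq_zero_iff φ hinj]
  · rw [← hU₀B]
    ext P
    constructor
    · rintro ⟨hP1, hPφ, H, hHV, hH, hPH⟩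
      obtain ⟨z, hz0, hPz⟩ := exists_eq_span_singleton_of_finrank_eq_one hP1
      have hz : z ∈ P := hPz ▸ mem_span_singleton_self z
      obtain ⟨v, rfl⟩ := hPφ hz
      obtain ⟨x, y, rfl⟩ := hdecomp v
      obtain ⟨c, hc, hvan⟩ := exists_form_vanishing_on_span H hHV (by simpa using by omega)
      have hxy := hvan _ (hPH hz)
      rw [hform] at hxy
      by_cases hc0 : c 0 = 0
      · have hx : x = 0 := by
          rw [hc0, map_zero, zero_mul, zero_add, mul_eq_zero] at hxy
          exact hxy.resolve_right fun h => hc (hform0 c hc0 h)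
        subst hx
        rw [zero_smul, zero_add] at hz0 hPz
        exact ⟨T, hU₀B ▸ Set.mem_insert _ _, (hPz.trans (hspan_t y hz0)).symm⟩
      · have hc0' : algebraMap K L (c 0) ≠ 0 := by simpa using hc0
        have hy : y = x * ∑ i : Fin s, (-(c 0)⁻¹ * c i.succ) • a i := by
          simp only [mul_smul, ← Finset.smul_sum]
          rw [Algebra.smul_def, map_neg, map_inv₀]
          field_simp
          linear_combination hxy
        set d := ∑ i : Fin s, (-(c 0)⁻¹ * c i.succ) • a i with hd
        have hx : x ≠ 0 := by
          rintro rfl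
          simp [hy] at hz0
        have hfac : x • u + y • t = x • (u + d • t) := by rw [hy, smul_add, mul_smul]
        refine ⟨span L {u + d • t}, ⟨u + d • t, ?_, ?_, rfl⟩, ?_⟩
        · exact (hmem _).mpr ⟨1, _, by rw [one_smul, hd]⟩
        · intro h
          rw [hfac, h] at hz0
          simp at hz0
        · rw [hPz, hfac, map_smul, span_singleton_smul_eq hx.isUnit]
          simp [map_span]
    · rintro ⟨_, ⟨v, hvU, hv0, rfl⟩, rfl⟩
      obtain ⟨k, c, rfl⟩ := (hmem v).mp hvU
      have hg : (Fin.cons k (-c) : Fin (s + 1) → K) ≠ 0 := by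
        intro h
        have hk : k = 0 := by simpa using congrFun h 0
        have hc : ∀ i, c i = 0 := fun i => by simpa using congrFun h i.succ
        simp [hk, hc] at hv0
      obtain ⟨H, hHV, hH, hker⟩ := exists_hyperplane_of_form (L := L) _ hg
      have hmap : ∀ v, Submodule.map φ (span L {v}) = span L {φ v} := fun v => by
        rw [map_span, Set.image_singleton]
      beta_reduce
      rw [hmap]
      refine ⟨?_, hmap _ ▸ LinearMap.map_le_range, H, hHV, by simpa using hH, ?_⟩
      · exact finrank_span_singleton (by rwa [Ne, map_eq_zero_iff φ hinj])
      · rw [span_singleton_le_iff_mem]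
        refine hker _ ?_
        rw [← algebraMap_smul L k u, hform]
        simp
end

section
/- Let 3 ≤ r ≤ n, let T be a point of PG(1,q^n) and A a set of q^{r-1} points of PG(1,q^n) with T ∉ A. Suppose there exists an r-dimensional K-subspace U₀ of L^2 with B(U₀) = {T} ∪ A and dim_K(U₀ ∩ T) = r-1 (i.e. {T} ∪ A is an F_q-club of rank r with head T). Then for any two distinct points P, Q ∈ A, the unique q-subline through T, P, Q is contained in {T} ∪ A; equivalently, for every 2-dimensional K-subspace M of L^2 such that B(M) has cardinality q+1 and T, P, Q ∈ B(M), one has B(M) ⊆ {T} ∪ A. -/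
open Submodule Module

/-- If `S` has codimension at most one in `U` and `u ∈ U \ S`, then `U = S + K u`. -/
theorem exists_eq_add_smul_of_finrank_le {K V : Type*} [Field K] [AddCommGroup V] [Module K V]
    [FiniteDimensional K V] {S U : Submodule K V} (hSU : S ≤ U)
    (hfin : finrank K U ≤ finrank K S + 1) {u : V} (hu : u ∈ U) (huS : u ∉ S)
    {v : V} (hv : v ∈ U) : ∃ s ∈ S, ∃ c : K, v = s + c • u := by
  have hlt : S < S ⊔ K ∙ u := left_lt_sup.2 fun h => huS (h (mem_span_singleton_self u))
  have hle : S ⊔ K ∙ u ≤ U := sup_le hSU ((span_singleton_le_iff_mem u U).2 hu)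
  have heq : S ⊔ K ∙ u = U :=
    eq_of_le_of_finrank_le hle (hfin.trans (Submodule.finrank_lt_finrank_of_lt hlt))
  rw [← heq] at hv
  obtain ⟨s, hs, y, hy, rfl⟩ := mem_sup.1 hv
  obtain ⟨c, rfl⟩ := mem_span_singleton.1 hy
  exact ⟨s, hs, c, rfl⟩

/-- Nonzero vectors spanning the same line are nonzero multiples of each other. -/
theorem exists_eq_smul_of_span_singleton_eq {L W : Type*} [Field L] [AddCommGroup W] [Module L W]
    {x y : W} (hx : x ≠ 0) (h : L ∙ x = L ∙ y) : ∃ c : L, c ≠ 0 ∧ x = c • y := by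
  obtain ⟨c, rfl⟩ := mem_span_singleton.1 (h ▸ mem_span_singleton_self x)
  exact ⟨c, fun hc => hx (by rw [hc, zero_smul]), rfl⟩

/-- A nonzero vector of a one-dimensional subspace spans it. -/
theorem span_singleton_eq_of_mem_span_singleton {L W : Type*} [Field L] [AddCommGroup W]
    [Module L W] {x y : W} (hx : x ≠ 0) (h : x ∈ L ∙ y) : L ∙ x = L ∙ y := by
  obtain ⟨c, rfl⟩ := mem_span_singleton.1 h
  exact span_singleton_smul_eq (IsUnit.mk0 c fun hc => hx (by rw [hc, zero_smul])) y

/-- in an `F_q`-club `{T} ∪ A` of rank `r` with head `T`, the `q`-subline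
through `T` and any two distinct points of `A` is contained in `{T} ∪ A`. -/
theorem club_contains_sublines
    (K L : Type*) [Field K] [Field L] [Algebra K L] [Fintype K] [Fintype L]
    (q r n : ℕ) (hq : Fintype.card K = q)
    (hr : 3 ≤ r) (hrn : r ≤ n) (hrank : Module.finrank K L = n)
    (T : Submodule L (Fin 2 → L)) (hT : Module.finrank L T = 1)
    (A : Set (Submodule L (Fin 2 → L)))
    (hA : ∀ P ∈ A, Module.finrank L P = 1)
    (hAcard : A.ncard = q ^ (r - 1)) (hTA : T ∉ A)
    (U₀ : Submodule K (Fin 2 → L)) (hU₀ : Module.finrank K U₀ = r)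
    (hU₀B : BSet L (U₀ : Set (Fin 2 → L)) = insert T A)
    (hU₀T : Module.finrank K ↥(U₀ ⊓ T.restrictScalars K) = r - 1) :
    ∀ P ∈ A, ∀ Q ∈ A, P ≠ Q →
      ∀ M : Submodule K (Fin 2 → L), Module.finrank K M = 2 →
        (BSet L (M : Set (Fin 2 → L))).ncard = q + 1 →
        T ∈ BSet L (M : Set (Fin 2 → L)) →
        P ∈ BSet L (M : Set (Fin 2 → L)) →
        Q ∈ BSet L (M : Set (Fin 2 → L)) →
        BSet L (M : Set (Fin 2 → L)) ⊆ insert T A := by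
  intro P hP Q hQ hPQ M hM _ hTM hPM hQM
  obtain ⟨u, huU, hu0, hPu⟩ : P ∈ BSet L (U₀ : Set (Fin 2 → L)) := hU₀B ▸ Or.inr hP
  obtain ⟨v, hvU, hv0, hQv⟩ : Q ∈ BSet L (U₀ : Set (Fin 2 → L)) := hU₀B ▸ Or.inr hQ
  obtain ⟨m₁, hm₁M, hm₁, hTm⟩ := hTM
  obtain ⟨m₂, hm₂M, hm₂, hPm⟩ := hPM
  obtain ⟨m₃, hm₃M, hm₃, hQm⟩ := hQM
  have notMem_T : ∀ {w : Fin 2 → L}, w ≠ 0 → L ∙ w ∈ A → w ∉ T := fun hw hwA hwT => by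
    rw [hTm] at hwT
    rw [span_singleton_eq_of_mem_span_singleton hw hwT, ← hTm] at hwA
    exact hTA hwA
  have huT : u ∉ T := notMem_T hu0 (hPu ▸ hP)
  have hvT : v ∉ T := notMem_T hv0 (hQv ▸ hQ)
  have hm₂T : m₂ ∉ T := notMem_T hm₂ (hPm ▸ hP)
  have : FiniteDimensional K (Fin 2 → L) := Module.Finite.of_finite
  obtain ⟨s, ⟨hsU, hsT⟩, c, rfl⟩ := exists_eq_add_smul_of_finrank_le
    (inf_le_left : U₀ ⊓ T.restrictScalars K ≤ U₀) (by omega) huU (fun h => huT h.2) hvU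
  replace hsT : s ∈ T := hsT
  have hc : c ≠ 0 := by
    rintro rfl
    exact hvT (by simpa using hsT)
  have hs : s ≠ 0 := by
    rintro rfl
    refine hPQ ?_
    rw [hPu, hQv, zero_add, ← algebraMap_smul L c u]
    exact (span_singleton_smul_eq (IsUnit.mk0 _ (by simpa using hc)) u).symm
  have hTs : L ∙ s = T := by
    rw [hTm] at hsT ⊢
    exact span_singleton_eq_of_mem_span_singleton hs hsT
  have hM_eq : ∀ {x}, x ∈ M → ∃ a b : K, x = a • m₁ + b • m₂ := fun hx => by
    obtain ⟨y, hy, b, rfl⟩ := exists_eq_add_smul_of_finrank_le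
      ((span_singleton_le_iff_mem m₁ M).2 hm₁M)
      (by rw [finrank_span_singleton hm₁, hM]) hm₂M
      (fun h => hm₂T <| by
        obtain ⟨a, rfl⟩ := mem_span_singleton.1 h
        rw [hTm, ← algebraMap_smul L a m₁]
        exact smul_mem _ _ (mem_span_singleton_self m₁)) hx
    obtain ⟨a, rfl⟩ := mem_span_singleton.1 hy
    exact ⟨a, b, rfl⟩
  obtain ⟨μ, -, hμ⟩ := exists_eq_smul_of_span_singleton_eq hm₁ (hTm.symm.trans hTs.symm)
  obtain ⟨l, hl, hlu⟩ := exists_eq_smul_of_span_singleton_eq hm₂ (hPm.symm.trans hPu)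
  obtain ⟨ν, hν, hνv⟩ := exists_eq_smul_of_span_singleton_eq hm₃ (hQm.symm.trans hQv)
  obtain ⟨a, b, hab⟩ := hM_eq hm₃M
  rw [hνv, hμ, hlu] at hab
  rw [← algebraMap_smul L a, ← algebraMap_smul L b, ← algebraMap_smul L c] at hab
  have hdep : (algebraMap K L b * l - ν * algebraMap K L c) • u =
      (ν - algebraMap K L a * μ) • s := by
    rw [← sub_eq_zero, ← neg_eq_zero, ← sub_eq_zero.2 hab]
    module
  have hu_coeff : algebraMap K L b * l - ν * algebraMap K L c = 0 := by
    by_contra h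
    refine huT ((smul_mem_iff T h).1 ?_)
    rw [hdep]
    exact smul_mem _ _ hsT
  have hs_coeff : ν - algebraMap K L a * μ = 0 := by
    rw [hu_coeff, zero_smul, eq_comm, smul_eq_zero] at hdep
    exact hdep.resolve_right hs
  have ha : algebraMap K L a ≠ 0 := fun h => hν (by simpa [h] using hs_coeff)
  have hc' : algebraMap K L c ≠ 0 := by simpa using hc
  have hμl : μ = l * algebraMap K L (a⁻¹ * c⁻¹ * b) := by
    simp only [map_mul, map_inv₀]
    field_simp
    linear_combination -hu_coeff - algebraMap K L c * hs_coeff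
  rintro _ ⟨x, hxM, hx, rfl⟩
  obtain ⟨k, d, rfl⟩ := hM_eq hxM
  have hxl : k • m₁ + d • m₂ = l • ((k * (a⁻¹ * c⁻¹ * b)) • s + d • u) := by
    rw [hμ, hlu, hμl]
    rw [← algebraMap_smul L k, ← algebraMap_smul L d, ← algebraMap_smul L d,
      ← algebraMap_smul L (k * _), map_mul]
    module
  rw [← hU₀B]
  refine ⟨(k * (a⁻¹ * c⁻¹ * b)) • s + d • u,
    U₀.add_mem (U₀.smul_mem _ hsU) (U₀.smul_mem _ huU), ?_, ?_⟩
  · intro h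
    exact hx (by rw [hxl, h, smul_zero])
  · rw [hxl]
    exact span_singleton_smul_eq (IsUnit.mk0 l hl) _
end

section
/- Let 3 ≤ r ≤ n with gcd(n, r-1) = 1. Let π₀ = B(V₀) and π₁ = B(V₁) be q-subgeometries of PG(r-1,q^n), and let l_∞ = PG(U) be a line tangent to both π₀ and π₁ and not contained in the extension of any hyperplane of π₀ or of π₁. Suppose S(π₀,l_∞) = S(π₁,l_∞), with common centre T, and suppose there exist a hyperplane of π₀ and a hyperplane of π₁ having the same point set H₀ (i.e. K-subspaces H ⊆ V₀ and H' ⊆ V₁ of K-dimension r-1 with B(H) = B(H') = H₀), such that T is not contained in the L-span of H. Then π₀ = π₁ as point sets. -/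
open Submodule Module

namespace SubgeometrySplash

variable {K L E ι : Type*} [Field K] [Field L] [Algebra K L]
  [AddCommGroup E] [Module L E] [Module K E] [IsScalarTower K L E]

theorem BSet_eq_of_smul_mem {V W : Submodule K E} [FiniteDimensional K W] {a : L} (ha : a ≠ 0)
    (h : ∀ x ∈ V, a • x ∈ W) (hrank : finrank K V = finrank K W) :
    BSet L (V : Set E) = BSet L (W : Set E) := by
  have hinj : Function.Injective (Algebra.lsmul K K E a) := fun x y hxy => by
    simpa [ha] using hxy
  have hmap : V.map (Algebra.lsmul K K E a) = W := by
    apply Submodule.eq_of_le_of_finrank_eq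
    · rintro _ ⟨x, hx, rfl⟩
      exact h x hx
    · rw [← (equivMapOfInjective _ hinj _).finrank_eq, hrank]
  have hspan (x : E) : span L {a • x} = span L {x} := span_singleton_smul_eq ha.isUnit x
  ext P
  constructor
  · rintro ⟨x, hx, hx0, rfl⟩
    exact ⟨a • x, h x hx, smul_ne_zero ha hx0, (hspan x).symm⟩
  · rintro ⟨y, hy, hy0, rfl⟩
    rw [SetLike.mem_coe, ← hmap] at hy
    obtain ⟨x, hx, rfl⟩ := hy
    exact ⟨x, hx, fun h0 => hy0 (by simp [h0]), hspan x⟩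

/-- A subspace with the same points as the `K`-span of an `L`-independent family contains a
scalar multiple of that family. -/
theorem exists_smul_mem_of_BSet_eq [Fintype ι] [Nonempty ι] {h : ι → E}
    (hli : LinearIndependent L h) {H' : Submodule K E}
    (hB : BSet L (span K (Set.range h) : Set E) = BSet L (H' : Set E)) :
    ∃ a : L, a ≠ 0 ∧ ∀ i, a • h i ∈ H' := by
  classical
  have hmul (i : ι) : ∃ a : L, a ≠ 0 ∧ a • h i ∈ H' := by
    have hi : span L {h i} ∈ BSet L (H' : Set E) :=
      hB ▸ ⟨h i, subset_span ⟨i, rfl⟩, hli.ne_zero i, rfl⟩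
    obtain ⟨x, hx, hx0, hxe⟩ := hi
    obtain ⟨a, rfl⟩ := mem_span_singleton.1 (hxe ▸ mem_span_singleton_self x : x ∈ span L {h i})
    exact ⟨a, fun h0 => hx0 (by simp [h0]), hx⟩
  choose a ha0 ha using hmul
  let j : ι := Classical.arbitrary ι
  refine ⟨a j, ha0 j, fun i => ?_⟩
  by_cases hij : i = j
  · rw [hij]; exact ha j
  have hpair (p q : L) : p • h j + q • h i =
      ∑ k, (Pi.single j p + Pi.single i q : ι → L) k • h k := by
    simp [add_smul, Finset.sum_add_distrib, Pi.single_apply, ite_smul]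
  have hne : a j • h j + a i • h i ≠ 0 := fun h0 => by
    rw [hpair] at h0
    have := Fintype.linearIndependent_iff.1 hli _ h0 j
    simp [Ne.symm hij, ha0] at this
  have hmem : span L {a j • h j + a i • h i} ∈ BSet L (span K (Set.range h) : Set E) :=
    hB ▸ ⟨_, H'.add_mem (ha j) (ha i), hne, rfl⟩
  obtain ⟨z, hz, -, hze⟩ := hmem
  obtain ⟨b, hb⟩ := mem_span_singleton.1 (hze ▸ mem_span_singleton_self _ :
    a j • h j + a i • h i ∈ span L {z})
  obtain ⟨c, rfl⟩ := (Submodule.mem_span_range_iff_exists_fun K).1 hz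
  have hcoord (k : ι) : b * algebraMap K L (c k) =
      (Pi.single j (a j) + Pi.single i (a i) : ι → L) k := by
    have h0 : ∑ k, (b * algebraMap K L (c k) -
        (Pi.single j (a j) + Pi.single i (a i) : ι → L) k) • h k = 0 := by
      simp_rw [sub_smul]
      rw [Finset.sum_sub_distrib, ← hpair, ← hb, Finset.smul_sum, sub_eq_zero]
      exact Finset.sum_congr rfl fun k _ => by rw [mul_smul, algebraMap_smul]
    exact sub_eq_zero.1 (Fintype.linearIndependent_iff.1 hli _ h0 k)
  have hj := hcoord j
  have hi := hcoord i
  simp only [Pi.add_apply, Pi.single_apply, hij, Ne.symm hij, if_true, if_false, add_zero,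
    zero_add] at hj hi
  have hci : algebraMap K L (c i) ≠ 0 := fun h0 => ha0 i (by rw [← hi, h0, mul_zero])
  have : a j • h i = (c j / c i) • a i • h i := by
    rw [← algebraMap_smul L (c j / c i), smul_smul, ← hi, ← hj, map_div₀]
    congr 1
    field_simp
  rw [this]
  exact H'.smul_mem _ (ha i)

theorem exists_hyperplane_of_ne_zero [Fintype ι] (e : Basis ι L E) {c : ι → K} (hc : c ≠ 0) :
    ∃ H : Submodule K E, H ≤ span K (Set.range e) ∧ finrank K H = Fintype.card ι - 1 ∧
      ∀ x, ∑ i, c i • e.repr x i = 0 → x ∈ span L (H : Set E) := by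
  classical
  obtain ⟨j, hj⟩ := Function.ne_iff.1 hc
  have hj : c j ≠ 0 := hj
  let f : Dual K (ι → K) := Fintype.linearCombination K c
  have hf (w : ι → K) : f w = ∑ i, w i * c i := by
    simp [f, Fintype.linearCombination_apply]
  have hf0 : f ≠ 0 := fun h0 => hj (by simpa [h0, Pi.single_apply] using (hf (Pi.single j 1)).symm)
  have hinj : Function.Injective (Fintype.linearCombination K (e : ι → E)) :=
    linearIndependent_iff_injective_fintypeLinearCombination.1 (e.linearIndependent.restrict_scalars' K)
  refine ⟨(LinearMap.ker f).map (Fintype.linearCombination K e), ?_, ?_, fun x hx => ?_⟩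
  · rw [← Fintype.range_linearCombination]
    exact LinearMap.map_le_range
  · rw [← (equivMapOfInjective _ hinj _).finrank_eq]
    have := Module.Dual.finrank_ker_add_one_of_ne_zero hf0
    rw [finrank_fintype_fun_eq_card] at this
    omega
  · have hmem (i : ι) : e i - (c i / c j) • e j ∈
        (LinearMap.ker f).map (Fintype.linearCombination K e) := by
      refine ⟨Pi.single i 1 - Pi.single j (c i / c j), ?_, ?_⟩
      · simp only [SetLike.mem_coe, LinearMap.mem_ker, hf]
        simp [Pi.single_apply, sub_mul, Finset.sum_sub_distrib, hj]
      · simp [map_sub, Fintype.linearCombination_apply_single]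
    have hx' : x = ∑ i, e.repr x i • (e i - (c i / c j) • e j) := by
      simp_rw [smul_sub, Finset.sum_sub_distrib, e.sum_repr]
      rw [eq_comm, sub_eq_self]
      have : ∀ i, e.repr x i • (c i / c j) • e j = ((c j)⁻¹ • (c i • e.repr x i)) • e j := by
        intro i
        rw [← algebraMap_smul L (c i / c j), smul_smul]
        congr 1
        simp [Algebra.smul_def, div_eq_mul_inv]
        ring
      simp_rw [this]
      rw [← Finset.sum_smul, ← Finset.smul_sum, hx, smul_zero, zero_smul]
    rw [hx']
    exact sum_mem fun i _ => smul_mem _ _ (subset_span (hmem i))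

theorem exists_ne_zero_of_hyperplane [Fintype ι] (e : Basis ι L E) {H : Submodule K E}
    (hH : H ≤ span K (Set.range e)) (hrank : finrank K H < Fintype.card ι) :
    ∃ c : ι → K, c ≠ 0 ∧ ∀ x ∈ span L (H : Set E), ∑ i, c i • e.repr x i = 0 := by
  classical
  have hinj : Function.Injective (Fintype.linearCombination K (e : ι → E)) :=
    linearIndependent_iff_injective_fintypeLinearCombination.1 (e.linearIndependent.restrict_scalars' K)
  set φ := Fintype.linearCombination K (e : ι → E) with hφ
  have hmap : (H.comap φ).map φ = H := by
    rw [Submodule.map_comap_eq, Fintype.range_linearCombination]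
    exact inf_eq_right.2 hH
  have hlt : H.comap φ < ⊤ := by
    rw [lt_top_iff_ne_top]
    intro htop
    rw [← hmap, htop, ← (equivMapOfInjective _ hinj _).finrank_eq, finrank_top,
      finrank_fintype_fun_eq_card] at hrank
    exact hrank.false
  obtain ⟨f, hf0, hf⟩ := Submodule.exists_le_ker_of_lt_top _ hlt
  refine ⟨fun i => f (Pi.single i 1), fun h0 => hf0 ?_, fun x hx => ?_⟩
  · ext i
    simpa using congrFun h0 i
  · let g : E →ₗ[L] L := ∑ i, algebraMap K L (f (Pi.single i 1)) • e.coord i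
    have hg (y : E) : g y = ∑ i, f (Pi.single i 1) • e.repr y i := by
      simp [g, Algebra.smul_def]
    rw [← hg, ← LinearMap.mem_ker]
    refine span_le.2 (fun y hy => ?_) hx
    rw [SetLike.mem_coe, ← hmap] at hy
    obtain ⟨w, hw, rfl⟩ := hy
    have hfw : f w = 0 := hf hw
    rw [SetLike.mem_coe, LinearMap.mem_ker, hg]
    have hrepr (i : ι) : e.repr (φ w) i = algebraMap K L (w i) := by
      simp only [hφ, Fintype.linearCombination_apply]
      simp_rw [← algebraMap_smul L (w _) (e _)]
      rw [e.repr_sum_self]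
    simp_rw [hrepr, Algebra.smul_def, ← map_mul]
    rw [← map_sum, ← map_zero (algebraMap K L), ← hfw]
    congr 1
    conv_rhs => rw [LinearMap.pi_apply_eq_sum_univ f w]
    refine Finset.sum_congr rfl fun i _ => ?_
    rw [smul_eq_mul, mul_comm]
    congr 2
    ext k
    simp [Pi.single_apply, eq_comm]

/-- If no hyperplane extension contains the line `⟨u, e none⟩`, then the coordinates of `u` are
`K`-independent. -/
theorem linearIndependent_repr {m : ℕ} (e : Basis (Option (Fin m)) L E)
    {U : Submodule L E} {u : E} (hU : U = span L {e none, u})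
    (hext : ∀ H : Submodule K E, H ≤ span K (Set.range e) → finrank K H = m →
      ¬ U ≤ span L (H : Set E)) :
    LinearIndependent K fun i => e.repr u (some i) := by
  rw [Fintype.linearIndependent_iff]
  intro c h
  by_contra! hc0
  obtain ⟨i, hi⟩ := hc0
  obtain ⟨H, hH, hHr, hmem⟩ := exists_hyperplane_of_ne_zero e
    (c := fun o => o.elim 0 c) (fun h => hi (congrFun h (some i)))
  refine hext H hH (by simpa using hHr) ?_
  rw [hU, span_le, Set.insert_subset_iff, Set.singleton_subset_iff]
  exact ⟨hmem _ (by simp [Fintype.sum_option]), hmem _ (by simp [Fintype.sum_option, h])⟩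

/-- On a line `⟨u, e none⟩` tangent at `e none`, the points of the splash other than the centre
are parametrised by the `K`-span of the coordinates of `u`. -/
theorem mem_splash_iff {m : ℕ} (e : Basis (Option (Fin m)) L E) {V : Submodule K E}
    (hV : span K (Set.range e) = V) {U : Submodule L E} {u : E} (hu : e.repr u none = 0)
    (hu0 : u ≠ 0) (hU : U = span L {e none, u})
    (hext : ∀ H : Submodule K E, H ≤ V → finrank K H = m → ¬ U ≤ span L (H : Set E)) (β : L) :
    span L {u + β • e none} ∈ Splash K L V U (m + 1) ↔
      β ∈ span K (Set.range fun i => e.repr u (some i)) := by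
  subst hV
  have hsum (c : Option (Fin m) → K) (β : L) :
      ∑ i, c i • e.repr (u + β • e none) i =
        c none • β + ∑ i, c (some i) • e.repr u (some i) := by
    simp [Fintype.sum_option, hu]
  have hind (c : Option (Fin m) → K) (hc : c none = 0)
      (h : ∑ i, c (some i) • e.repr u (some i) = 0) : c = 0 := by
    have hli := Fintype.linearIndependent_iff.1 (linearIndependent_repr e hU hext) _ h
    ext (_ | i)
    exacts [hc, hli i]
  constructor
  · rintro ⟨-, -, H, hH, hHr, hP⟩
    obtain ⟨c, hc0, hc⟩ := exists_ne_zero_of_hyperplane e hH (by simp [hHr])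
    have h := hc _ (hP (mem_span_singleton_self _))
    rw [hsum] at h
    have hn : c none ≠ 0 := fun hn => hc0 (hind c hn (by simpa [hn] using h))
    rw [Submodule.mem_span_range_iff_exists_fun]
    refine ⟨fun i => -((c none)⁻¹ * c (some i)), ?_⟩
    simp_rw [neg_smul, mul_smul]
    rw [Finset.sum_neg_distrib, ← Finset.smul_sum, eq_neg_of_add_eq_zero_right h]
    simp [smul_smul, hn]
  · intro hβ
    obtain ⟨c, rfl⟩ := (Submodule.mem_span_range_iff_exists_fun K).1 hβ
    obtain ⟨H, hH, hHr, hmem⟩ := exists_hyperplane_of_ne_zero e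
      (c := fun o => o.elim (-1) c) (fun h => by simpa using congrFun h none)
    refine ⟨finrank_span_singleton fun h0 => hu0 ?_, ?_, H, hH, by simpa using hHr, ?_⟩
    · have h1 := congrArg (fun x => e.repr x none) h0
      simp only [map_add, map_smul, Basis.repr_self, Finsupp.add_apply, Finsupp.smul_apply,
        Finsupp.single_eq_same, hu, zero_add, smul_eq_mul, mul_one, map_zero,
        Finsupp.zero_apply] at h1
      simpa [h1] using h0
    · rw [hU, span_singleton_le_iff_mem]
      exact add_mem (subset_span (by simp)) (smul_mem _ _ (subset_span (by simp)))
    · rw [span_singleton_le_iff_mem]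
      exact hmem _ (by rw [hsum]; simp)

open IntermediateField in
/-- A scalar stabilising a `K`-subspace of `L` whose dimension is coprime to `[L : K]` lies
in `K`. -/
theorem mem_range_algebraMap_of_mul_mem [FiniteDimensional K L] {W : Submodule K L} {μ : L}
    (hgcd : Nat.Coprime (finrank K L) (finrank K W)) (hμ : ∀ β ∈ W, μ * β ∈ W) :
    ∃ k : K, algebraMap K L k = μ := by
  have hstab : ∀ a ∈ K⟮μ⟯, ∀ β ∈ W, a * β ∈ W := by
    intro a ha
    rw [← IntermediateField.mem_toSubalgebra,
      IntermediateField.adjoin_simple_toSubalgebra_of_isAlgebraic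
        (Algebra.IsAlgebraic.isAlgebraic μ)] at ha
    induction ha using Algebra.adjoin_induction with
    | mem x hx => rw [Set.mem_singleton_iff.1 hx]; exact hμ
    | algebraMap k => exact fun β hβ => by rw [← Algebra.smul_def]; exact W.smul_mem k hβ
    | add x y _ _ hx hy => exact fun β hβ => by rw [add_mul]; exact W.add_mem (hx β hβ) (hy β hβ)
    | mul x y _ _ hx hy => exact fun β hβ => by rw [mul_assoc]; exact hx _ (hy β hβ)
  let W' : Submodule K⟮μ⟯ L :=
    { W.toAddSubmonoid with smul_mem' := fun a β hβ => hstab a a.2 β hβ }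
  have hW : finrank K K⟮μ⟯ ∣ finrank K W :=
    ⟨finrank K⟮μ⟯ W', (finrank_mul_finrank K K⟮μ⟯ W').symm⟩
  have hL : finrank K K⟮μ⟯ ∣ finrank K L := ⟨_, (finrank_mul_finrank K K⟮μ⟯ L).symm⟩
  have h1 : finrank K K⟮μ⟯ = 1 := Nat.eq_one_of_dvd_coprimes hgcd hL hW
  exact IntermediateField.mem_bot.1 (IntermediateField.finrank_adjoin_simple_eq_one_iff.1 h1)

end SubgeometrySplash

/-- uniqueness of a `q`-subgeometry with given tangent splash and a
common hyperplane avoiding the centre, when `gcd(n, r-1) = 1`. -/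
theorem subgeometry_unique_of_common_hyperplane
    (K L : Type*) [Field K] [Field L] [Algebra K L] [Fintype K] [Fintype L]
    (r n : ℕ) (hr : 3 ≤ r) (hrn : r ≤ n) (hrank : Module.finrank K L = n)
    (hgcd : Nat.gcd n (r - 1) = 1)
    (V₀ V₁ : Submodule K (Fin r → L))
    (hV₀rank : Module.finrank K V₀ = r)
    (hV₀span : Submodule.span L (V₀ : Set (Fin r → L)) = ⊤)
    (hV₁rank : Module.finrank K V₁ = r)
    (hV₁span : Submodule.span L (V₁ : Set (Fin r → L)) = ⊤)
    (U : Submodule L (Fin r → L)) (hU : Module.finrank L U = 2)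
    (T : Submodule L (Fin r → L))
    (htangent₀ : {P | P ∈ BSet L (V₀ : Set (Fin r → L)) ∧ P ≤ U} = {T})
    (htangent₁ : {P | P ∈ BSet L (V₁ : Set (Fin r → L)) ∧ P ≤ U} = {T})
    (hext₀ : ∀ H : Submodule K (Fin r → L), H ≤ V₀ → Module.finrank K H = r - 1 →
      ¬ U ≤ Submodule.span L (H : Set (Fin r → L)))
    (hext₁ : ∀ H : Submodule K (Fin r → L), H ≤ V₁ → Module.finrank K H = r - 1 →
      ¬ U ≤ Submodule.span L (H : Set (Fin r → L)))
    (hsplash : Splash K L V₀ U r = Splash K L V₁ U r)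
    (H H' : Submodule K (Fin r → L))
    (hHV₀ : H ≤ V₀) (hHrank : Module.finrank K H = r - 1)
    (hH'V₁ : H' ≤ V₁) (hH'rank : Module.finrank K H' = r - 1)
    (hcommon : BSet L (H : Set (Fin r → L)) = BSet L (H' : Set (Fin r → L)))
    (hTH : ¬ T ≤ Submodule.span L (H : Set (Fin r → L))) :
    BSet L (V₀ : Set (Fin r → L)) = BSet L (V₁ : Set (Fin r → L)) := by
  classical
  obtain ⟨m, rfl⟩ : ∃ m, r = m + 1 := ⟨r - 1, by omega⟩
  simp only [Nat.add_sub_cancel] at hgcd hext₀ hext₁ hHrank hH'rank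
  have : Nonempty (Fin m) := ⟨⟨0, by omega⟩⟩
  have hfin : FiniteDimensional K L := Module.finite_of_finrank_pos (by omega)
  obtain ⟨⟨t, htV, ht0, hTt⟩, hTU⟩ := htangent₀.symm.subset (Set.mem_singleton T)
  obtain ⟨⟨s, hsV, hs0, hTs⟩, -⟩ := htangent₁.symm.subset (Set.mem_singleton T)
  obtain ⟨ν, rfl⟩ := mem_span_singleton.1
    (hTt ▸ hTs ▸ mem_span_singleton_self s : s ∈ span L {t})
  have hν : ν ≠ 0 := fun h => hs0 (by simp [h])
  rw [hTt, span_singleton_le_iff_mem] at hTH hTU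
  let h : Basis (Fin m) K H := finBasisOfFinrankEq K H hHrank
  have hspanH : span K (Set.range fun i => (h i : Fin (m + 1) → L)) = H := by
    have := congrArg (Submodule.map H.subtype) h.span_eq
    rwa [Submodule.map_span, ← Set.range_comp, Submodule.map_top, Submodule.range_subtype] at this
  let f : Option (Fin m) → Fin (m + 1) → L := fun o => o.casesOn' t fun i => h i
  have hfK : LinearIndependent K f := by
    refine linearIndependent_option'.2 ⟨?_, ?_⟩
    · exact h.linearIndependent.map' H.subtype H.ker_subtype
    · rw [hspanH]
      exact fun ht => hTH (subset_span ht)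
  have hfV : span K (Set.range f) = V₀ := by
    apply Submodule.eq_of_le_of_finrank_eq
    · rw [span_le]
      rintro _ ⟨_ | i, rfl⟩
      exacts [htV, hHV₀ (h i).2]
    · rw [finrank_span_eq_card hfK, hV₀rank, Fintype.card_option, Fintype.card_fin]
  have hfL : ⊤ ≤ span L (Set.range f) := by
    rw [← hV₀span, ← hfV, span_span_of_tower]
  let e : Basis (Option (Fin m)) L (Fin (m + 1) → L) :=
    basisOfTopLeSpanOfCardEqFinrank f hfL (by simp)
  have hef : ⇑e = f := coe_basisOfTopLeSpanOfCardEqFinrank f hfL (by simp)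
  have het : e none = t := by rw [hef]; rfl
  have heh (i : Fin m) : e (some i) = h i := by rw [hef]; rfl
  have hhL : LinearIndependent L fun i => (h i : Fin (m + 1) → L) := by
    simpa only [Function.comp_def, heh] using
      e.linearIndependent.comp some (Option.some_injective _)
  obtain ⟨a, ha, hah⟩ := SubgeometrySplash.exists_smul_mem_of_BSet_eq (K := K) hhL
    (H' := H') (by rw [hspanH, hcommon])
  let w : Option (Fin m) → L := fun o => o.elim ν fun _ => a
  have hw (i) : IsUnit (w i) := by cases i <;> simp [w, hν, ha]
  let e' := e.isUnitSMul hw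
  have he't : e' none = ν • t := by rw [Basis.isUnitSMul_apply, het]; rfl
  have he'h (i : Fin m) : e' (some i) = a • (h i : Fin (m + 1) → L) := by
    rw [Basis.isUnitSMul_apply, heh]; rfl
  have he'V : span K (Set.range e') = V₁ := by
    apply Submodule.eq_of_le_of_finrank_eq
    · rw [span_le]
      rintro _ ⟨_ | i, rfl⟩
      · rw [he't]; exact hsV
      · rw [he'h]; exact hH'V₁ (hah i)
    · rw [finrank_span_eq_card (e'.linearIndependent.restrict_scalars' K), hV₁rank,
        Fintype.card_option, Fintype.card_fin]
  have hUt : ¬ U ≤ span L {t} := fun hle => by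
    have := Submodule.finrank_mono hle
    rw [hU, finrank_span_singleton ht0] at this
    omega
  obtain ⟨u', hu'U, hu't⟩ := SetLike.not_le_iff_exists.1 hUt
  let u := u' - e.repr u' none • t
  have huU : u ∈ U := sub_mem hu'U (smul_mem _ _ hTU)
  have hun : e.repr u none = 0 := by simp [u, ← het]
  have hut : u ∉ span L {t} := fun hmem => hu't <| by
    simpa [u] using add_mem hmem (smul_mem _ (e.repr u' none) (mem_span_singleton_self t))
  have hu0 : u ≠ 0 := fun h0 => hut (h0 ▸ zero_mem _)
  have hUspan : U = span L {t, u} := by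
    symm
    apply Submodule.eq_of_le_of_finrank_eq
    · rw [span_le, Set.insert_subset_iff, Set.singleton_subset_iff]
      exact ⟨hTU, huU⟩
    · have hli : LinearIndependent L ![t, u] := by
        rw [LinearIndependent.pair_iff' ht0]
        exact fun c hc => hut (mem_span_singleton.2 ⟨c, hc⟩)
      have := finrank_span_eq_card hli
      rw [Matrix.range_cons, Matrix.range_cons, Matrix.range_empty, Set.union_empty,
        Set.singleton_union] at this
      rw [this, hU, Fintype.card_fin]
  have hrepr' (i) : e'.repr u i = (w i)⁻¹ * e.repr u i := by
    rw [Basis.repr_isUnitSMul, Units.smul_def, Units.val_inv_eq_inv_val, IsUnit.unit_spec,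
      smul_eq_mul]
  let W : Submodule K L := span K (Set.range fun i => e.repr u (some i))
  have hWrank : finrank K W = m := by
    rw [finrank_span_eq_card (SubgeometrySplash.linearIndependent_repr (K := K) e
      (het ▸ hUspan) (by rw [hef, hfV]; exact hext₀)), Fintype.card_fin]
  have hstab : ∀ β ∈ W, (ν⁻¹ * a) * β ∈ W := by
    intro β hβ
    have h0 := (SubgeometrySplash.mem_splash_iff e (by rw [hef, hfV]) hun hu0
      (het ▸ hUspan) hext₀ β).2 hβ
    rw [hsplash, het, show β • t = (β * ν⁻¹) • e' none by simp [he't, smul_smul, hν]] at h0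
    have h1 := (SubgeometrySplash.mem_splash_iff e' he'V (by rw [hrepr', hun, mul_zero]) hu0
      (by
        rw [hUspan, he't, span_insert, span_insert, span_singleton_smul_eq hν.isUnit])
      hext₁ _).1 h0
    obtain ⟨c, hc⟩ := (Submodule.mem_span_range_iff_exists_fun K).1 h1
    refine (Submodule.mem_span_range_iff_exists_fun K).2 ⟨c, ?_⟩
    rw [show ν⁻¹ * a * β = a * (β * ν⁻¹) by ring, ← hc, Finset.mul_sum]
    refine Finset.sum_congr rfl fun i _ => ?_
    rw [hrepr', mul_smul_comm]
    simp [w, ha]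
  obtain ⟨k, hk⟩ := SubgeometrySplash.mem_range_algebraMap_of_mul_mem
    (by rw [hWrank, hrank]; exact hgcd) hstab
  refine SubgeometrySplash.BSet_eq_of_smul_mem ha (fun x hx => ?_) (hV₀rank.trans hV₁rank.symm)
  rw [← hfV] at hx
  induction hx using Submodule.span_induction with
  | mem x hx =>
    obtain ⟨_ | i, rfl⟩ := hx
    · have : a • t = k • ν • t := by
        rw [← algebraMap_smul L k, hk, smul_smul]
        congr 1
        field_simp
      change a • t ∈ V₁
      rw [this]
      exact V₁.smul_mem k hsV
    · exact hH'V₁ (hah i)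
  | zero => simp
  | add x y _ _ hx hy => rw [smul_add]; exact add_mem hx hy
  | smul c x _ hx => rw [smul_comm]; exact V₁.smul_mem c hx
end

section
/- Let 3 ≤ r ≤ n and suppose gcd(n, r-1) > 1. Then there exist two q-subgeometries π₀ = B(V₀) and π₁ = B(V₁) of PG(r-1,q^n) that are distinct as point sets, a 2-dimensional L-subspace U of L^r such that the line l_∞ = PG(U) is tangent to both π₀ and π₁ at a common point T and is not contained in the extension of any hyperplane of π₀ or of π₁, and K-subspaces H ⊆ V₀ and H' ⊆ V₁ of K-dimension r-1 with B(H) = B(H') (a common hyperplane H₀ of π₀ and π₁) with T not contained in the L-span of H, such that S(π₀,l_∞) = S(π₁,l_∞). -/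
open Submodule Module

section InvariantSubspace

variable {K L : Type*} [Field K] [Field L] [Algebra K L]

/-- An intermediate field of every degree dividing the degree of a finite extension of finite
fields. -/
theorem exists_intermediateField_finrank_eq [Finite L] {d : ℕ} (hd : d ∣ finrank K L) :
    ∃ F : IntermediateField K L, finrank K F = d := by
  have : Finite K := Finite.of_injective _ (algebraMap K L).injective
  have hd0 : d ≠ 0 := by
    rintro rfl
    exact (finrank_pos (R := K) (M := L)).ne' (zero_dvd_iff.mp hd)
  have : NeZero d := ⟨hd0⟩
  obtain ⟨p, _⟩ := CharP.exists K
  have : Fact p.Prime := ⟨CharP.char_is_prime K p⟩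
  have hfin : finrank K (FiniteField.Extension K p d) = d := FiniteField.finrank_extension K p d
  obtain ⟨f⟩ := FiniteField.nonempty_algHom_of_finrank_dvd
    (F := K) (K := FiniteField.Extension K p d) (L := L) (hfin.symm ▸ hd)
  refine ⟨f.fieldRange, ?_⟩
  exact (LinearEquiv.ofInjective f.toLinearMap f.injective).finrank_eq.symm.trans hfin

/-- If `m ≤ [L : K]` shares a nontrivial factor with `[L : K]`, then some `m`-dimensional
`K`-subspace of `L` is invariant under a scalar outside `K` and under its inverse. -/
theorem exists_submodule_smul_invariant [Finite L] {m : ℕ} (hm : m ≤ finrank K L)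
    (hgcd : 1 < Nat.gcd (finrank K L) m) :
    ∃ (A : Submodule K L) (ν : L), finrank K A = m ∧ ν ∉ Set.range (algebraMap K L) ∧
      (∀ x ∈ A, ν * x ∈ A) ∧ ∀ x ∈ A, ν⁻¹ * x ∈ A := by
  have hd : Nat.gcd (finrank K L) m ∣ finrank K L := Nat.gcd_dvd_left _ _
  obtain ⟨k, hk⟩ := Nat.gcd_dvd_right (finrank K L) m
  obtain ⟨F, hF⟩ := exists_intermediateField_finrank_eq (K := K) (L := L) hd
  rw [← hF] at hgcd hk
  obtain ⟨ν, hνF, hν⟩ : ∃ ν ∈ F, ν ∉ (⊥ : IntermediateField K L) := by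
    by_contra! h
    rw [show F = ⊥ from eq_bot_iff.mpr h, IntermediateField.finrank_bot] at hgcd
    exact lt_irrefl _ hgcd
  have hkF : k ≤ finrank F L := by
    have := finrank_mul_finrank K F L
    rw [← this, hk] at hm
    exact Nat.le_of_mul_le_mul_left hm (by omega)
  obtain ⟨v, hv⟩ := exists_linearIndependent_of_le_finrank hkF
  let A : Submodule F L := span F (Set.range v)
  have hmul : ∀ μ ∈ F, ∀ x ∈ A.restrictScalars K, μ * x ∈ A.restrictScalars K :=
    fun μ hμ x hx => A.smul_mem (⟨μ, hμ⟩ : F) hx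
  refine ⟨A.restrictScalars K, ν, ?_, fun h => hν (IntermediateField.mem_bot.mpr h),
    hmul ν hνF, hmul _ (F.inv_mem hνF)⟩
  have hA : finrank F A = k := by simpa [A] using finrank_span_eq_card hv
  have := finrank_mul_finrank K F A
  rw [hA, ← hk] at this
  exact this.symm

/-- A scalar preserving the span of a family acts on that family by a matrix over the base
field. -/
theorem exists_matrix_sum_smul_eq {ι : Type*} [Fintype ι] {a : ι → L} {A : Submodule K L}
    (ha : span K (Set.range a) = A) {ν : L} (hν : ∀ x ∈ A, ν * x ∈ A) :
    ∃ M : Matrix ι ι K, ∀ i, ∑ j, M i j • a j = ν * a i := by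
  have h : ∀ i, ∃ c : ι → K, ∑ j, c j • a j = ν * a i := fun i => by
    rw [← mem_span_range_iff_exists_fun, ha]
    exact hν _ (ha ▸ subset_span ⟨i, rfl⟩)
  choose M hM using h
  exact ⟨M, hM⟩

theorem Matrix.mul_eq_one_of_sum_smul_eq {ι : Type*} [Fintype ι] [DecidableEq ι] {a : ι → L}
    (ha : LinearIndependent K a) {M N : Matrix ι ι K} {μ ν : L} (hμν : ν * μ = 1)
    (hM : ∀ i, ∑ j, M i j • a j = μ * a i) (hN : ∀ i, ∑ j, N i j • a j = ν * a i) :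
    M * N = 1 := by
  ext i k
  have h : ∑ k, (M * N) i k • a k = ∑ k, (1 : Matrix ι ι K) i k • a k := by
    calc ∑ k, (M * N) i k • a k = ∑ j, M i j • ∑ k, N j k • a k := by
          simp_rw [Matrix.mul_apply, Finset.sum_smul, Finset.smul_sum, mul_smul]
          exact Finset.sum_comm
      _ = ν * ∑ j, M i j • a j := by
          simp_rw [hN, Finset.mul_sum, mul_smul_comm]
      _ = ∑ k, (1 : Matrix ι ι K) i k • a k := by
          rw [hM, ← mul_assoc, hμν, one_mul]
          simp [Matrix.one_apply]
  have := linearIndependent_iff'.mp ha Finset.univ (fun k => (M * N) i k - (1 : Matrix ι ι K) i k)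
    (by simp_rw [sub_smul, Finset.sum_sub_distrib, h, sub_self]) k (Finset.mem_univ k)
  exact sub_eq_zero.mp this

end InvariantSubspace

section Collineation

variable {K L : Type*} [Field K] [Field L] [Algebra K L]
  {W : Type*} [AddCommGroup W] [Module L W] [Module K W] [IsScalarTower K L W]

theorem span_map_restrictScalars (ψ : W ≃ₗ[L] W) (V : Submodule K W) :
    span L (V.map (ψ.restrictScalars K).toLinearMap : Set W) =
      (span L (V : Set W)).map ψ.toLinearMap := by
  rw [map_span]
  rfl

theorem map_eq_self_of_le_of_smul {ψ : W ≃ₗ[L] W} {U P : Submodule L W} {ν : L} (hν : ν ≠ 0)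
    (hψ : ∀ u ∈ U, ψ u = ν • u) (hP : P ≤ U) : P.map ψ.toLinearMap = P := by
  apply le_antisymm
  · rintro _ ⟨x, hx, rfl⟩
    simpa [hψ x (hP hx)] using P.smul_mem ν hx
  · intro x hx
    refine ⟨ν⁻¹ • x, P.smul_mem _ hx, ?_⟩
    simp [hψ x (hP hx), smul_smul, hν]

theorem finrank_map_restrictScalars (ψ : W ≃ₗ[L] W) (V : Submodule K W) :
    finrank K (V.map (ψ.restrictScalars K).toLinearMap) = finrank K V :=
  LinearEquiv.finrank_map_eq (ψ.restrictScalars K) V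

/-- The image of a hyperplane of `ψ V` under `ψ⁻¹` is a hyperplane of `V` with the same
intersection with a line fixed pointwise by `ψ`. -/
theorem exists_le_of_le_map {ψ : W ≃ₗ[L] W} {U : Submodule L W} {ν : L} (hν : ν ≠ 0)
    (hψ : ∀ u ∈ U, ψ u = ν • u) {V H : Submodule K W}
    (hH : H ≤ V.map (ψ.restrictScalars K).toLinearMap) :
    ∃ H' ≤ V, finrank K H' = finrank K H ∧
      ∀ P ≤ U, P ≤ span L (H : Set W) → P ≤ span L (H' : Set W) := by
  have hmap : (H.comap (ψ.restrictScalars K).toLinearMap).map (ψ.restrictScalars K).toLinearMap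
      = H := map_comap_eq_of_surjective (ψ.restrictScalars K).surjective H
  refine ⟨H.comap (ψ.restrictScalars K).toLinearMap, fun x hx => ?_, ?_, fun P hP hPH => ?_⟩
  · obtain ⟨y, hy, hxy⟩ := hH hx
    exact (ψ.restrictScalars K).injective hxy ▸ hy
  · rw [← finrank_map_restrictScalars ψ, hmap]
  · rw [← hmap, span_map_restrictScalars, ← map_eq_self_of_le_of_smul hν hψ hP] at hPH
    exact (map_le_map_iff_of_injective ψ.injective _ _).mp hPH

theorem splash_map_eq {ψ : W ≃ₗ[L] W} {U : Submodule L W} {ν : L} (hν : ν ≠ 0)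
    (hψ : ∀ u ∈ U, ψ u = ν • u) (V : Submodule K W) (r : ℕ) :
    Splash K L (V.map (ψ.restrictScalars K).toLinearMap) U r = Splash K L V U r := by
  ext P
  constructor
  · rintro ⟨hP, hPU, H, hHV, hH, hPH⟩
    obtain ⟨H', hH'V, hH', h⟩ := exists_le_of_le_map hν hψ hHV
    exact ⟨hP, hPU, H', hH'V, hH'.trans hH, h P hPU hPH⟩
  · rintro ⟨hP, hPU, H, hHV, hH, hPH⟩
    refine ⟨hP, hPU, _, map_mono hHV, (finrank_map_restrictScalars ψ H).trans hH, ?_⟩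
    rw [span_map_restrictScalars, ← map_eq_self_of_le_of_smul hν hψ hPU]
    exact map_mono hPH

theorem mem_BSet_map_iff {ψ : W ≃ₗ[L] W} {U P : Submodule L W} {ν : L} (hν : ν ≠ 0)
    (hψ : ∀ u ∈ U, ψ u = ν • u) (hP : P ≤ U) (V : Submodule K W) :
    P ∈ BSet L (V.map (ψ.restrictScalars K).toLinearMap : Set W) ↔ P ∈ BSet L (V : Set W) := by
  constructor
  · rintro ⟨_, ⟨x, hx, rfl⟩, hx0, hPx⟩
    refine ⟨x, hx, fun h => hx0 (by simp [h]), ?_⟩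
    apply Submodule.map_injective_of_injective ψ.injective
    rw [map_eq_self_of_le_of_smul hν hψ hP, hPx, map_span, Set.image_singleton]
    rfl
  · rintro ⟨x, hx, hx0, hPx⟩
    refine ⟨ψ x, ⟨x, hx, rfl⟩, by simpa using hx0, ?_⟩
    rw [← map_eq_self_of_le_of_smul hν hψ hP, hPx, map_span, Set.image_singleton]
    rfl

end Collineation

section Rational

variable (K L : Type*) [Field K] [Field L] [Algebra K L] (ι : Type*)

/-- The `K`-subspace of `L ^ ι` of vectors with all coordinates in `K`. -/
def rationalVectors : Submodule K (ι → L) :=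
  LinearMap.range ((Algebra.linearMap K L).compLeft ι)

variable {K L ι}

theorem mem_rationalVectors {x : ι → L} :
    x ∈ rationalVectors K L ι ↔ ∃ c : ι → K, ∀ i, x i = algebraMap K L (c i) := by
  simp only [rationalVectors, LinearMap.mem_range, funext_iff]
  exact exists_congr fun c => forall_congr' fun i => eq_comm

theorem single_one_mem_rationalVectors [DecidableEq ι] (i : ι) :
    (Pi.single i 1 : ι → L) ∈ rationalVectors K L ι := by
  refine mem_rationalVectors.mpr ⟨Pi.single i 1, fun j => ?_⟩
  by_cases h : j = i
  · subst h
    simp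
  · simp [h]

theorem compLeft_linearMap_injective :
    Function.Injective ((Algebra.linearMap K L).compLeft ι) := fun _ _ h =>
  funext fun i => (algebraMap K L).injective (congrFun h i)

theorem finrank_rationalVectors [Fintype ι] :
    finrank K (rationalVectors K L ι) = Fintype.card ι := by
  rw [rationalVectors, LinearMap.finrank_range_of_inj compLeft_linearMap_injective,
    finrank_fintype_fun_eq_card]

theorem span_rationalVectors [Fintype ι] :
    span L (rationalVectors K L ι : Set (ι → L)) = ⊤ := by
  classical
  rw [eq_top_iff, ← (Pi.basisFun L ι).span_eq, span_le]
  rintro _ ⟨i, rfl⟩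
  rw [Pi.basisFun_apply]
  exact subset_span (single_one_mem_rationalVectors i)

/-- A `K`-subspace of smaller dimension of the rational vectors lies in a hyperplane with
coefficients in `K`. -/
theorem exists_coeff_of_le_rationalVectors [Fintype ι] {H : Submodule K (ι → L)}
    (hH : H ≤ rationalVectors K L ι) (hlt : finrank K H < Fintype.card ι) :
    ∃ c : ι → K, c ≠ 0 ∧ ∀ x ∈ span L (H : Set (ι → L)), ∑ i, c i • x i = 0 := by
  classical
  have hmap : (H.comap ((Algebra.linearMap K L).compLeft ι)).map
      ((Algebra.linearMap K L).compLeft ι) = H := by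
    rw [map_comap_eq]
    exact inf_eq_right.mpr hH
  have hne : H.comap ((Algebra.linearMap K L).compLeft ι) < ⊤ := by
    refine lt_top_iff_ne_top.mpr fun h => hlt.ne ?_
    rw [← hmap, h, Submodule.map_top]
    exact finrank_rationalVectors
  obtain ⟨f, hf0, hf⟩ := exists_le_ker_of_lt_top _ hne
  refine ⟨fun i => f (Pi.single i 1), fun h => hf0 ?_, fun x hx => ?_⟩
  · ext i
    simpa using congrFun h i
  · let F : (ι → L) →ₗ[L] L := ∑ i, f (Pi.single i 1) • LinearMap.proj i
    have hle : span L (H : Set (ι → L)) ≤ LinearMap.ker F := by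
      rw [span_le]
      intro y hy
      obtain ⟨c, hc⟩ := mem_rationalVectors.mp (hH hy)
      have hcy : (Algebra.linearMap K L).compLeft ι c = y := funext fun i => (hc i).symm
      have hfc : f c = 0 := hf (show _ ∈ H from hcy.symm ▸ hy)
      have hsum : ∑ i, f (Pi.single i 1) * c i = 0 := by
        rw [← hfc]
        conv_rhs => rw [← (Pi.basisFun K ι).sum_repr c, map_sum]
        simp [mul_comm]
      simpa [F, hc, Algebra.smul_def] using congrArg (algebraMap K L) hsum
    simpa [F] using hle hx

end Rational

section Tangent

variable {K L : Type*} [Field K] [Field L] [Algebra K L] {m : ℕ}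

/-- The vectors with first coordinate zero and all other coordinates in `K`. -/
def rationalHyperplane (K L : Type*) [Field K] [Field L] [Algebra K L] (m : ℕ) :
    Submodule K (Fin (m + 1) → L) :=
  LinearMap.ker (LinearMap.proj 0) ⊓ rationalVectors K L (Fin (m + 1))

theorem finrank_rationalHyperplane : finrank K (rationalHyperplane K L m) = m := by
  have h : rationalHyperplane K L m =
      (LinearMap.ker (LinearMap.proj (R := K) (φ := fun _ : Fin (m + 1) => K) 0)).map
        ((Algebra.linearMap K L).compLeft (Fin (m + 1))) := by
    ext x
    constructor
    · rintro ⟨hx0, c, rfl⟩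
      refine ⟨c, ?_, rfl⟩
      simpa using hx0
    · rintro ⟨c, hc, rfl⟩
      refine ⟨?_, c, rfl⟩
      simpa using hc
  rw [h, ← (equivMapOfInjective _ compLeft_linearMap_injective _).finrank_eq]
  have hker := LinearMap.finrank_range_add_finrank_ker
    (LinearMap.proj (R := K) (φ := fun _ : Fin (m + 1) => K) 0)
  rw [LinearMap.range_eq_top.mpr (LinearMap.proj_surjective 0), finrank_top, finrank_self,
    finrank_fin_fun] at hker
  omega

/-- The line through the first unit vector and the point `(0, a)`. -/
def coneLine (a : Fin m → L) : Submodule L (Fin (m + 1) → L) :=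
  span L {Pi.single 0 1, Fin.cons 0 a}

theorem mem_coneLine {a : Fin m → L} {x : Fin (m + 1) → L} :
    x ∈ coneLine a ↔ ∃ s : L, ∀ i : Fin m, x i.succ = s * a i := by
  rw [coneLine, mem_span_pair]
  constructor
  · rintro ⟨t, s, rfl⟩
    exact ⟨s, fun i => by simp⟩
  · rintro ⟨s, hs⟩
    refine ⟨x 0, s, funext fun i => ?_⟩
    refine Fin.cases ?_ (fun i => ?_) i
    · simp
    · simp [hs]

theorem finrank_coneLine {a : Fin m → L} (ha : a ≠ 0) : finrank L (coneLine a) = 2 := by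
  have h : LinearIndependent L ![(Pi.single 0 1 : Fin (m + 1) → L), Fin.cons 0 a] := by
    rw [LinearIndependent.pair_iff]
    intro s t hst
    have hs : s = 0 := by simpa using congrFun hst 0
    obtain ⟨i, hi⟩ := Function.ne_iff.mp ha
    have ht : t = 0 := by simpa [show a i ≠ 0 from hi] using congrFun hst i.succ
    exact ⟨hs, ht⟩
  rw [coneLine, ← Matrix.range_cons_cons_empty _ _ ![], finrank_span_eq_card h, Fintype.card_fin]

theorem not_coneLine_le_span {a : Fin m → L} (ha : LinearIndependent K a)
    {H : Submodule K (Fin (m + 1) → L)} (hH : H ≤ rationalVectors K L (Fin (m + 1)))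
    (hm : finrank K H = m) : ¬ coneLine a ≤ span L (H : Set (Fin (m + 1) → L)) := by
  intro h
  obtain ⟨c, hc0, hc⟩ := exists_coeff_of_le_rationalVectors hH (by simp [hm])
  apply hc0
  have h0 : c 0 = 0 := by
    simpa [Fin.sum_univ_succ] using
      hc (Pi.single 0 1) (h (mem_coneLine.mpr ⟨0, by simp⟩))
  have hs := hc (Fin.cons 0 a) (h (mem_coneLine.mpr ⟨1, by simp⟩))
  simp only [Fin.sum_univ_succ, Fin.cons_zero, smul_zero, zero_add, Fin.cons_succ] at hs
  funext i
  exact Fin.cases h0 (linearIndependent_iff'.mp ha Finset.univ _ hs · (Finset.mem_univ _)) i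

theorem eq_zero_of_smul_mem_range {a : Fin m → L} (hm : 2 ≤ m) (ha : LinearIndependent K a)
    {s : L} (hs : ∀ i, s * a i ∈ Set.range (algebraMap K L)) : s = 0 := by
  by_contra h0
  obtain ⟨k₀, h₀⟩ := hs ⟨0, by omega⟩
  obtain ⟨k₁, h₁⟩ := hs ⟨1, by omega⟩
  have hpair : LinearIndependent K ![a ⟨0, by omega⟩, a ⟨1, by omega⟩] := by
    convert ha.comp ![⟨0, by omega⟩, ⟨1, by omega⟩] ?_
    · ext i
      fin_cases i <;> rfl
    · intro i j hij
      fin_cases i <;> fin_cases j <;> simp_all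
  have hrel : k₁ • a ⟨0, by omega⟩ + (-k₀) • a ⟨1, by omega⟩ = 0 := by
    simp only [Algebra.smul_def, map_neg, h₀, h₁]
    ring
  have hk := (LinearIndependent.pair_iff.mp hpair _ _ hrel).1
  rw [hk, map_zero] at h₁
  exact ha.ne_zero ⟨1, by omega⟩ ((mul_eq_zero.mp h₁.symm).resolve_left h0)

theorem tangent_coneLine {a : Fin m → L} (hm : 2 ≤ m) (ha : LinearIndependent K a) :
    {P | P ∈ BSet L (rationalVectors K L (Fin (m + 1)) : Set (Fin (m + 1) → L)) ∧
      P ≤ coneLine a} = {span L {Pi.single 0 1}} := by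
  ext P
  simp only [Set.mem_ofPred_eq, Set.mem_singleton_iff]
  constructor
  · rintro ⟨⟨x, hx, hx0, rfl⟩, hxU⟩
    obtain ⟨c, hc⟩ := mem_rationalVectors.mp hx
    obtain ⟨s, hs⟩ := mem_coneLine.mp (hxU (mem_span_singleton_self x))
    obtain rfl : s = 0 := eq_zero_of_smul_mem_range hm ha fun i => ⟨c i.succ, by rw [← hc, hs]⟩
    have hx' : x = x 0 • Pi.single 0 1 := by
      funext i
      refine Fin.cases ?_ (fun i => ?_) i
      · simp
      · simp [hs]
    have h0 : x 0 ≠ 0 := fun h => hx0 (by rw [hx', h, zero_smul])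
    rw [hx', span_singleton_smul_eq h0.isUnit]
  · rintro rfl
    exact ⟨⟨_, single_one_mem_rationalVectors 0, by simp, rfl⟩,
      by simpa using mem_coneLine.mpr ⟨0, by simp⟩⟩

theorem not_span_single_le_span_rationalHyperplane :
    ¬ span L {(Pi.single 0 1 : Fin (m + 1) → L)} ≤
      span L (rationalHyperplane K L m : Set (Fin (m + 1) → L)) := by
  intro h
  have hle : span L (rationalHyperplane K L m : Set (Fin (m + 1) → L)) ≤
      LinearMap.ker (LinearMap.proj (R := L) (φ := fun _ : Fin (m + 1) => L) 0) :=
    span_le.mpr fun x hx => hx.1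
  simpa using hle (h (mem_span_singleton_self _))

/-- The block diagonal map with blocks `ν` and `M`. -/
def consMulVec (ν : L) (M : Matrix (Fin m) (Fin m) K) :
    (Fin (m + 1) → L) →ₗ[L] (Fin (m + 1) → L) where
  toFun x := Fin.cons (ν * x 0) fun i => ∑ j, M i j • x j.succ
  map_add' x y := by
    funext i
    refine Fin.cases ?_ (fun i => ?_) i
    · simp [mul_add]
    · simp [smul_add, Finset.sum_add_distrib]
  map_smul' s x := by
    funext i
    refine Fin.cases ?_ (fun i => ?_) i
    · simp [mul_left_comm]
    · simp [Finset.mul_sum]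

@[simp]
theorem consMulVec_zero (ν : L) (M : Matrix (Fin m) (Fin m) K) (x : Fin (m + 1) → L) :
    consMulVec ν M x 0 = ν * x 0 := rfl

@[simp]
theorem consMulVec_succ (ν : L) (M : Matrix (Fin m) (Fin m) K) (x : Fin (m + 1) → L)
    (i : Fin m) : consMulVec ν M x i.succ = ∑ j, M i j • x j.succ := rfl

theorem consMulVec_comp {μ ν : L} {M N : Matrix (Fin m) (Fin m) K} (hμν : μ * ν = 1)
    (hMN : M * N = 1) : consMulVec μ M ∘ₗ consMulVec ν N = LinearMap.id := by
  refine LinearMap.ext fun x => funext fun i => ?_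
  refine Fin.cases ?_ (fun i => ?_) i
  · simp [← mul_assoc, hμν]
  · calc ∑ j, M i j • ∑ k, N j k • x k.succ = ∑ k, (M * N) i k • x k.succ := by
          simp_rw [Matrix.mul_apply, Finset.sum_smul, Finset.smul_sum, mul_smul]
          exact Finset.sum_comm
      _ = x i.succ := by simp [hMN, Matrix.one_apply]

theorem consMulVec_apply_of_mem_coneLine {ν : L} {M : Matrix (Fin m) (Fin m) K} {a : Fin m → L}
    (hM : ∀ i, ∑ j, M i j • a j = ν * a i) {u : Fin (m + 1) → L} (hu : u ∈ coneLine a) :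
    consMulVec ν M u = ν • u := by
  obtain ⟨s, hs⟩ := mem_coneLine.mp hu
  funext i
  refine Fin.cases rfl (fun i => ?_) i
  simp only [consMulVec_succ, hs, Pi.smul_apply, smul_eq_mul, ← mul_smul_comm, ← Finset.mul_sum, hM]
  ring

theorem consMulVec_succ_mem_range {ν : L} {M : Matrix (Fin m) (Fin m) K} {x : Fin (m + 1) → L}
    (hx : x ∈ rationalVectors K L (Fin (m + 1))) (i : Fin m) :
    consMulVec ν M x i.succ ∈ Set.range (algebraMap K L) := by
  obtain ⟨c, hc⟩ := mem_rationalVectors.mp hx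
  exact ⟨∑ j, M i j * c j.succ, by simp [hc, Algebra.smul_def]⟩

theorem consMulVec_mem_rationalHyperplane {ν : L} {M : Matrix (Fin m) (Fin m) K}
    {x : Fin (m + 1) → L} (hx : x ∈ rationalHyperplane K L m) :
    consMulVec ν M x ∈ rationalHyperplane K L m := by
  have h0 : consMulVec ν M x 0 = 0 := by simp [show x 0 = 0 from hx.1]
  refine ⟨h0, mem_rationalVectors.mpr ?_⟩
  choose c hc using fun i => consMulVec_succ_mem_range (ν := ν) (M := M) hx.2 i
  refine ⟨Fin.cons 0 c, fun i => Fin.cases (by simpa using h0) (fun i => ?_) i⟩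
  simpa using (hc i).symm

end Tangent

/-- if `gcd(n, r-1) > 1`, there exist two distinct `q`-subgeometries
with a common tangent line, common centre, a common hyperplane avoiding the centre,
and the same tangent splash. -/
theorem exists_distinct_subgeometries_same_splash
    (K L : Type*) [Field K] [Field L] [Algebra K L] [Fintype K] [Fintype L]
    (r n : ℕ) (hr : 3 ≤ r) (hrn : r ≤ n) (hrank : Module.finrank K L = n)
    (hgcd : 1 < Nat.gcd n (r - 1)) :
    ∃ (V₀ V₁ : Submodule K (Fin r → L)) (U T : Submodule L (Fin r → L))
      (H H' : Submodule K (Fin r → L)),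
      Module.finrank K V₀ = r ∧
      Submodule.span L (V₀ : Set (Fin r → L)) = ⊤ ∧
      Module.finrank K V₁ = r ∧
      Submodule.span L (V₁ : Set (Fin r → L)) = ⊤ ∧
      Module.finrank L U = 2 ∧
      (∀ H'' : Submodule K (Fin r → L), H'' ≤ V₀ → Module.finrank K H'' = r - 1 →
        ¬ U ≤ Submodule.span L (H'' : Set (Fin r → L))) ∧
      (∀ H'' : Submodule K (Fin r → L), H'' ≤ V₁ → Module.finrank K H'' = r - 1 →
        ¬ U ≤ Submodule.span L (H'' : Set (Fin r → L))) ∧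
      {P | P ∈ BSet L (V₀ : Set (Fin r → L)) ∧ P ≤ U} = {T} ∧
      {P | P ∈ BSet L (V₁ : Set (Fin r → L)) ∧ P ≤ U} = {T} ∧
      H ≤ V₀ ∧ Module.finrank K H = r - 1 ∧
      H' ≤ V₁ ∧ Module.finrank K H' = r - 1 ∧
      BSet L (H : Set (Fin r → L)) = BSet L (H' : Set (Fin r → L)) ∧
      ¬ T ≤ Submodule.span L (H : Set (Fin r → L)) ∧
      BSet L (V₀ : Set (Fin r → L)) ≠ BSet L (V₁ : Set (Fin r → L)) ∧
      Splash K L V₀ U r = Splash K L V₁ U r := by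
  obtain ⟨m, rfl⟩ : ∃ m, r = m + 1 := ⟨r - 1, by omega⟩
  subst hrank
  simp only [Nat.add_sub_cancel] at hgcd ⊢
  have hm : 2 ≤ m := by omega
  obtain ⟨A, ν, hA, hνK, hνA, hνA'⟩ := exists_submodule_smul_invariant (by omega) hgcd
  have hν : ν ≠ 0 := by
    rintro rfl
    exact hνK ⟨0, map_zero _⟩
  let b := finBasisOfFinrankEq K A hA
  let a : Fin m → L := fun i => b i
  have ha : LinearIndependent K a := b.linearIndependent.map' A.subtype A.ker_subtype
  have haA : span K (Set.range a) = A := by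
    rw [show a = A.subtype ∘ b from rfl, Set.range_comp, ← map_span, b.span_eq, map_subtype_top]
  obtain ⟨M, hM⟩ := exists_matrix_sum_smul_eq haA hνA
  obtain ⟨N, hN⟩ := exists_matrix_sum_smul_eq haA hνA'
  let ψ : (Fin (m + 1) → L) ≃ₗ[L] (Fin (m + 1) → L) :=
    LinearEquiv.ofLinearMap (consMulVec ν M) (consMulVec ν⁻¹ N)
      (consMulVec_comp (mul_inv_cancel₀ hν)
        (Matrix.mul_eq_one_of_sum_smul_eq ha (inv_mul_cancel₀ hν) hM hN))
      (consMulVec_comp (inv_mul_cancel₀ hν)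
        (Matrix.mul_eq_one_of_sum_smul_eq ha (mul_inv_cancel₀ hν) hN hM))
  have hψ : ∀ u ∈ coneLine a, ψ u = ν • u := fun u hu => consMulVec_apply_of_mem_coneLine hM hu
  let V : Submodule K (Fin (m + 1) → L) := rationalVectors K L (Fin (m + 1))
  have hV : finrank K V = m + 1 := finrank_rationalVectors.trans (Fintype.card_fin _)
  have hline : ∀ H : Submodule K (Fin (m + 1) → L), H ≤ V → finrank K H = m →
      ¬ coneLine a ≤ span L (H : Set (Fin (m + 1) → L)) :=
    fun H hHV hH => not_coneLine_le_span ha hHV hH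
  have hH : (rationalHyperplane K L m).map (ψ.restrictScalars K).toLinearMap =
      rationalHyperplane K L m := by
    apply eq_of_le_of_finrank_eq
    · rintro _ ⟨x, hx, rfl⟩
      exact consMulVec_mem_rationalHyperplane hx
    · exact finrank_map_restrictScalars ψ _
  refine ⟨V, V.map (ψ.restrictScalars K).toLinearMap, coneLine a, span L {Pi.single 0 1},
    rationalHyperplane K L m, rationalHyperplane K L m, hV, span_rationalVectors,
    (finrank_map_restrictScalars ψ V).trans hV, ?_, ?_, hline, ?_, tangent_coneLine hm ha, ?_,
    inf_le_right, finrank_rationalHyperplane, hH ▸ map_mono inf_le_right,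
    finrank_rationalHyperplane, rfl, not_span_single_le_span_rationalHyperplane, ?_,
    (splash_map_eq hν hψ V (m + 1)).symm⟩
  · rw [span_map_restrictScalars, span_rationalVectors, Submodule.map_top, LinearEquiv.range]
  · exact finrank_coneLine fun h => ha.ne_zero ⟨0, by omega⟩ (congrFun h _)
  · intro H hHV hHm hle
    obtain ⟨H', hH'V, hH', h⟩ := exists_le_of_le_map hν hψ hHV
    exact hline H' hH'V (hH'.trans hHm) (h _ le_rfl hle)
  · rw [← tangent_coneLine hm ha]
    ext P
    exact and_congr_left fun hP => mem_BSet_map_iff hν hψ hP V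
  · intro hB
    let y : Fin (m + 1) → L := Pi.single 0 1 + Pi.single (Fin.succ ⟨0, by omega⟩) 1
    have hy : y ∈ V := V.add_mem (single_one_mem_rationalVectors _)
      (single_one_mem_rationalVectors _)
    have hy0 : y 0 = 1 := by simp [y]
    have hy1 : y (Fin.succ ⟨0, by omega⟩) = 1 := by simp [y]
    have hyB : span L {y} ∈ BSet L (V : Set (Fin (m + 1) → L)) :=
      ⟨y, hy, fun h => by simp [h] at hy0, rfl⟩
    rw [hB] at hyB
    obtain ⟨_, ⟨x, hx, rfl⟩, hx0, hspan⟩ := hyB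
    have hmem : ψ x ∈ span L {y} := hspan ▸ mem_span_singleton_self _
    obtain ⟨s, hs⟩ := mem_span_singleton.mp hmem
    have hs0 : s ≠ 0 := by
      rintro rfl
      exact hx0 (by simpa using hs.symm)
    obtain ⟨c, hc⟩ := mem_rationalVectors.mp hx
    obtain ⟨k, hk⟩ := consMulVec_succ_mem_range (ν := ν) (M := M) hx ⟨0, by omega⟩
    have hsk : algebraMap K L k = s := by
      rw [hk]
      refine (congrFun hs (Fin.succ ⟨0, by omega⟩)).symm.trans ?_
      rw [Pi.smul_apply, hy1, smul_eq_mul, mul_one]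
    have hsν : s = ν * algebraMap K L (c 0) := by
      rw [← hc 0]
      refine Eq.trans ?_ (congrFun hs 0)
      rw [Pi.smul_apply, hy0, smul_eq_mul, mul_one]
    have hc0 : algebraMap K L (c 0) ≠ 0 := right_ne_zero_of_mul (hsν ▸ hs0)
    exact hνK ⟨k / c 0, by rw [map_div₀, hsk, hsν, mul_div_cancel_right₀ _ hc0]⟩
end

section
/- Let 3 ≤ r ≤ n. Let π₀ = B(V₀) and π₁ = B(V₁) be q-subgeometries of PG(r-1,q^n), both tangent to the line l_∞ = PG(U), with l_∞ not contained in the extension of any hyperplane of π₀ or of π₁. If S(π₀,l_∞) = S(π₁,l_∞), then there exists an L-linear automorphism κ of L^r such that κ(U) = U and the induced map on points carries π₀ onto π₁, i.e. { L·κ(v) : L·v ∈ π₀ } = π₁. -/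
open Submodule Module

section
variable {K L : Type*} [Field K] [Field L] [Algebra K L]

/-- Hua's identity applied to two additive groups that are exchanged by inversion. -/
theorem mul_mul_mem_of_inv_mem {A B : Submodule K L}
    (h : ∀ w : L, w ≠ 0 → (w ∈ A ↔ w⁻¹ ∈ B)) {a b : L} (ha : a ∈ A) (ha0 : a ≠ 0)
    (hb : b ∈ B) : a * b * a ∈ A := by
  by_cases hb0 : b = 0
  · simp [hb0]
  by_cases hab : 1 - a * b = 0
  · rw [← sub_eq_zero.mp hab, one_mul]; exact ha
  have hc : b⁻¹ - a ≠ 0 := by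
    intro hc
    apply hab
    rw [← sub_eq_zero.mp hc, inv_mul_cancel₀ hb0, sub_self]
  have hcA : b⁻¹ - a ∈ A := A.sub_mem ((h _ (inv_ne_zero hb0)).2 (by rwa [inv_inv])) ha
  have hd : a⁻¹ + (b⁻¹ - a)⁻¹ ∈ B := B.add_mem ((h _ ha0).1 ha) ((h _ hc).1 hcA)
  have hd_eq : a⁻¹ + (b⁻¹ - a)⁻¹ = (a * (1 - a * b))⁻¹ := by
    have : b⁻¹ - a = (1 - a * b) * b⁻¹ := by field_simp
    rw [this]
    field_simp
    ring
  have hm : a * (1 - a * b) ∈ A := (h _ (mul_ne_zero ha0 hab)).2 (hd_eq ▸ hd)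
  have : a * b * a = a - a * (1 - a * b) := by ring
  rw [this]
  exact A.sub_mem ha hm

theorem mem_iff_inv_sq_mul_mem {A B : Submodule K L}
    (h : ∀ w : L, w ≠ 0 → (w ∈ A ↔ w⁻¹ ∈ B)) {a : L} (ha : a ∈ A) (ha0 : a ≠ 0) (x : L) :
    x ∈ A ↔ (a ^ 2)⁻¹ * x ∈ B := by
  have h' : ∀ w : L, w ≠ 0 → (w ∈ B ↔ w⁻¹ ∈ A) := fun w hw => by
    rw [h _ (inv_ne_zero hw), inv_inv]
  constructor
  · intro hx
    have := mul_mul_mem_of_inv_mem h' ((h a ha0).1 ha) (inv_ne_zero ha0) hx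
    convert this using 1
    field_simp
  · intro hx
    have := mul_mul_mem_of_inv_mem h ha ha0 hx
    convert this using 1
    field_simp

variable {W : Type*} [AddCommGroup W] [Module L W]

theorem span_singleton_pair_eq_iff {v y : W} (hvy : LinearIndependent L ![v, y]) {a b c d : L}
    (hab : a ≠ 0 ∨ b ≠ 0) (hcd : c ≠ 0 ∨ d ≠ 0) :
    span L {a • v + b • y} = span L {c • v + d • y} ↔ a * d = b * c := by
  rw [LinearIndependent.pair_iff] at hvy
  rw [span_singleton_eq_span_singleton]
  constructor
  · rintro ⟨k, hk⟩
    have := hvy (k * a - c) (k * b - d) (by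
      rw [Units.smul_def] at hk
      linear_combination (norm := module) hk)
    linear_combination b * this.1 - a * this.2
  · intro h
    rcases hab with ha | hb
    · have hc : c ≠ 0 := by
        rintro rfl
        simp_all
      exact ⟨Units.mk0 (c / a) (div_ne_zero hc ha), by
        have : d = c / a * b := by field_simp; linear_combination h
        rw [Units.smul_mk0, this, smul_add, smul_smul, smul_smul, div_mul_cancel₀ _ ha]⟩
    · have hd : d ≠ 0 := by
        rintro rfl
        simp_all
      exact ⟨Units.mk0 (d / b) (div_ne_zero hd hb), by
        have : c = d / b * a := by field_simp; linear_combination -h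
        rw [Units.smul_mk0, this, smul_add, smul_smul, smul_smul, div_mul_cancel₀ _ hb]⟩

/-- The union of the point `v` and the points `s • v + y` with `s ∈ A` determines `A` up to a
nonzero scalar, even though `v` need not be determined. -/
theorem exists_mem_iff_mul_mem {A A' : Submodule K L} (hA : A ≠ ⊥) {v y v' z : W}
    (hvy : LinearIndependent L ![v, y]) (hvz : LinearIndependent L ![v', z])
    (hspan : span L {v, y} = span L {v', z})
    (hS : ∀ P : Submodule L W, (P = span L {v} ∨ ∃ s ∈ A, P = span L {s • v + y}) ↔
      (P = span L {v'} ∨ ∃ s ∈ A', P = span L {s • v' + z})) :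
    ∃ c : L, c ≠ 0 ∧ ∀ x, x ∈ A ↔ c * x ∈ A' := by
  obtain ⟨p, q, rfl⟩ : ∃ p q : L, p • v + q • y = v' :=
    mem_span_pair.1 (hspan ▸ subset_span (by simp))
  obtain ⟨p', q', rfl⟩ : ∃ p q : L, p • v + q • y = z :=
    mem_span_pair.1 (hspan ▸ subset_span (by simp))
  have hD : p * q' - p' * q ≠ 0 := by
    intro hD
    rw [LinearIndependent.pair_iff] at hvz
    have h1 := hvz q' (-q) (by linear_combination (norm := module) hD • v)
    have h2 := hvz p' (-p) (by linear_combination (norm := module) -hD • y)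
    have hq : q = 0 := neg_eq_zero.1 h1.2
    have hp : p = 0 := neg_eq_zero.1 h2.2
    have := hvz 1 0 (by simp [hp, hq])
    simp at this
  have hpq : p ≠ 0 ∨ q ≠ 0 := by
    by_contra! h
    simp [h] at hD
  have hz : ∀ t, t * p + p' ≠ 0 ∨ t * q + q' ≠ 0 := fun t => by
    by_contra! h
    exact hD (by linear_combination p * h.2 - q * h.1)
  have hmem : ∀ a b : L, (a ≠ 0 ∨ b ≠ 0) →
      ((b = 0 ∨ ∃ s ∈ A, a = b * s) ↔
        (a * q = b * p ∨ ∃ t ∈ A', a * (t * q + q') = b * (t * p + p'))) := by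
    intro a b hab
    have h1 : ∀ t : L, t • (p • v + q • y) + (p' • v + q' • y)
        = (t * p + p') • v + (t * q + q') • y := fun t => by module
    have := hS (span L {a • v + b • y})
    simp only [h1] at this
    have e1 : span L {a • v + b • y} = span L {v} ↔ b = 0 := by
      have := span_singleton_pair_eq_iff hvy hab (c := 1) (d := 0) (by simp)
      simpa [eq_comm] using this
    have e2 : ∀ s : L, span L {a • v + b • y} = span L {s • v + y} ↔ a = b * s := fun s => by
      have := span_singleton_pair_eq_iff hvy hab (c := s) (d := 1) (by simp)
      simpa using this
    rw [e1] at this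
    simp only [e2] at this
    rw [this, span_singleton_pair_eq_iff hvy hab hpq]
    simp only [span_singleton_pair_eq_iff hvy hab (hz _)]
  have hmem1 : ∀ x : L, x ∈ A ↔ (x * q = p ∨ ∃ t ∈ A', x * (t * q + q') = t * p + p') := by
    intro x
    simpa using hmem x 1 (by simp)
  by_cases hq : q = 0
  · subst hq
    have hp : p ≠ 0 := by simpa using hpq
    have hq' : q' ≠ 0 := by
      rintro rfl
      simp at hD
    have hx : ∀ x : L, x ∈ A ↔ (q' * x - p') / p ∈ A' := fun x => by
      rw [hmem1]
      constructor
      · rintro (h | ⟨t, ht, h⟩)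
        · exact absurd (by simpa using h.symm) hp
        · convert ht using 1
          field_simp
          linear_combination h
      · intro h
        exact Or.inr ⟨_, h, by field_simp; ring⟩
    have h0 := (hx 0).1 A.zero_mem
    refine ⟨q' / p, div_ne_zero hq' hp, fun x => ?_⟩
    rw [hx, ← A'.sub_mem_iff_left h0]
    ring_nf
  · have hpA : p / q ∈ A := (hmem1 _).2 (Or.inl (by field_simp))
    have hqA : -q' / q ∈ A' := by
      obtain h | ⟨t, ht, h⟩ := (hmem 1 0 (by simp)).1 (by simp)
      · exact absurd (by simpa using h) hq
      · convert ht using 1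
        field_simp
        linear_combination -h
    set δ : L := -(p * q' - p' * q) / q ^ 2 with hδ
    have hδ0 : δ ≠ 0 := div_ne_zero (neg_ne_zero.2 hD) (pow_ne_zero _ hq)
    let B : Submodule K L := A'.comap (LinearMap.mulLeft K δ)
    have hB : ∀ x, x ∈ B ↔ δ * x ∈ A' := fun x => Iff.rfl
    have hinv : ∀ w : L, w ≠ 0 → (w ∈ A ↔ w⁻¹ ∈ B) := by
      intro w hw
      rw [← A.add_mem_iff_left hpA, hB, ← A'.add_mem_iff_left hqA, hmem1]
      constructor
      · rintro (h | ⟨t, ht, h⟩)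
        · exfalso
          field_simp at h
          simp_all
        · convert ht using 1
          rw [hδ]
          field_simp
          field_simp at h
          linear_combination -h
      · intro h
        refine Or.inr ⟨_, h, ?_⟩
        rw [hδ]
        field_simp
        ring
    obtain ⟨a, ha, ha0⟩ := A.ne_bot_iff.1 hA
    refine ⟨δ * (a ^ 2)⁻¹, mul_ne_zero hδ0 (inv_ne_zero (pow_ne_zero _ ha0)), fun x => ?_⟩
    rw [mem_iff_inv_sq_mul_mem hinv ha ha0, hB, mul_assoc]

variable {m : ℕ} {A : Submodule K L}

/-- The direction, relative to the point `b 0`, of a line with coordinates `α`. -/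
noncomputable def frameDir (b : Basis (Fin (m + 1)) L W) (α : Basis (Fin m) K A) : W :=
  ∑ i : Fin m, (α i : L) • b i.succ

theorem repr_frameDir_zero (b : Basis (Fin (m + 1)) L W) (α : Basis (Fin m) K A) :
    b.repr (frameDir b α) 0 = 0 := by
  simp [frameDir, Fin.succ_ne_zero]

theorem repr_frameDir_succ (b : Basis (Fin (m + 1)) L W) (α : Basis (Fin m) K A) (j : Fin m) :
    b.repr (frameDir b α) j.succ = α j := by
  simp [frameDir, Finsupp.single_apply]

theorem sum_smul_repr_frame (b : Basis (Fin (m + 1)) L W) (α : Basis (Fin m) K A) (s t : L)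
    (k : Fin (m + 1) → K) :
    ∑ i, k i • b.repr (s • b 0 + t • frameDir b α) i
      = k 0 • s + t * ((∑ i : Fin m, k i.succ • α i : A) : L) := by
  rw [Fin.sum_univ_succ]
  simp [repr_frameDir_zero, repr_frameDir_succ, Finset.mul_sum]

theorem linearIndependent_frame [NeZero m] (b : Basis (Fin (m + 1)) L W)
    (α : Basis (Fin m) K A) : LinearIndependent L ![b 0, frameDir b α] := by
  rw [LinearIndependent.pair_iff]
  intro s t h
  have h0 := congrArg (fun w => b.repr w 0) h
  have h1 := congrArg (fun w => b.repr w (Fin.succ 0)) h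
  have hα : α 0 ≠ 0 := α.ne_zero 0
  simp [repr_frameDir_zero] at h0
  simp [-Fin.succ_zero_eq_one', repr_frameDir_succ, hα] at h1
  exact ⟨h0, h1⟩

variable [Module K W] [IsScalarTower K L W]

/-- Coordinates adapted to a subgeometry `B(V)` tangent to the line `PG(U)` at the point `b 0`:
`b` is a `K`-basis of `V`, and `U` is spanned by `b 0` and `frameDir b α`, where `α` is a
`K`-basis of `A`. -/
structure TangentFrame (V : Submodule K W) (U : Submodule L W) (A : Submodule K L)
    (b : Basis (Fin (m + 1)) L W) (α : Basis (Fin m) K A) : Prop where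
  span_eq : span K (Set.range b) = V
  line_eq : span L {b 0, frameDir b α} = U

/-- The hyperplanes of `B(V)` are the zero sets of the nonzero linear forms over `K`. -/
theorem exists_hyperplane_of_coeff {ι : Type*} [Fintype ι] [DecidableEq ι] (b : Basis ι L W)
    {k : ι → K} (hk : k ≠ 0) :
    ∃ H : Submodule K W, H ≤ span K (Set.range b) ∧ finrank K H = Fintype.card ι - 1 ∧
      ∀ w : W, ∑ i, k i • b.repr w i = 0 → w ∈ span L (H : Set W) := by
  let bK := b.restrictScalars K
  let f : span K (Set.range b) →ₗ[K] K := bK.constr K k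
  have hfb : ∀ i, f (bK i) = k i := fun i => bK.constr_basis K k i
  have hf : f ≠ 0 := by
    rintro h
    apply hk
    funext i
    rw [← hfb, h]
    rfl
  have : FiniteDimensional K (span K (Set.range b)) := bK.finiteDimensional_of_finite
  refine ⟨(LinearMap.ker f).map (span K (Set.range b)).subtype, map_subtype_le _ _, ?_, ?_⟩
  · have h1 := Module.Dual.finrank_ker_add_one_of_ne_zero hf
    rw [finrank_map_subtype_eq]
    rw [finrank_eq_card_basis bK] at h1
    omega
  · intro w hw
    obtain ⟨j, hj⟩ := Function.ne_iff.1 hk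
    have hj : k j ≠ 0 := hj
    have hmem : ∀ i, b i - (k i / k j) • b j ∈
        span L (((LinearMap.ker f).map (span K (Set.range b)).subtype : Submodule K W) :
          Set W) := by
      intro i
      apply subset_span
      refine ⟨bK i - (k i / k j) • bK j, ?_, ?_⟩
      · simp [hfb, hj]
      · simp [bK]
    have hwe : w = ∑ i, b.repr w i • (b i - (k i / k j) • b j) := by
      have hz : ∑ i, b.repr w i • (k i / k j) • b j = 0 := by
        have : ∀ i, b.repr w i • (k i / k j) • b j
            = ((k j)⁻¹ • (k i • b.repr w i)) • b j := by
          intro i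
          rw [← algebraMap_smul L (k i / k j), ← algebraMap_smul L (k j)⁻¹,
            ← algebraMap_smul L (k i)]
          simp only [smul_smul, smul_eq_mul, map_div₀, map_inv₀]
          congr 1
          ring
        simp only [this, ← Finset.sum_smul, ← Finset.smul_sum, hw, smul_zero, zero_smul]
      simp only [smul_sub, Finset.sum_sub_distrib, hz, sub_zero, b.sum_repr]
    rw [hwe]
    exact sum_mem fun i _ => smul_mem _ _ (hmem i)

theorem exists_coeff_of_hyperplane {ι : Type*} [Fintype ι] (b : Basis ι L W)
    {H : Submodule K W} (hH : H ≤ span K (Set.range b)) (hcard : finrank K H < Fintype.card ι) :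
    ∃ k : ι → K, k ≠ 0 ∧ ∀ w ∈ span L (H : Set W), ∑ i, k i • b.repr w i = 0 := by
  let bK := b.restrictScalars K
  have hlt : H.comap (span K (Set.range b)).subtype < ⊤ := by
    rw [lt_top_iff_ne_top]
    intro h
    have := (comapSubtypeEquivOfLe hH).finrank_eq
    rw [h, finrank_top, finrank_eq_card_basis bK] at this
    omega
  obtain ⟨f, hf0, hf⟩ := exists_le_ker_of_lt_top _ hlt
  refine ⟨fun i => f (bK i), fun h => hf0 (bK.ext fun i => congrFun h i), ?_⟩
  intro w hw
  induction hw using span_induction with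
  | mem x hx =>
    have hfx : f ⟨x, hH hx⟩ = 0 := hf (show _ ∈ _ from hx)
    rw [← bK.sum_repr ⟨x, hH hx⟩, map_sum] at hfx
    apply_fun algebraMap K L at hfx
    simp only [map_sum, map_smul, smul_eq_mul, map_mul, map_zero, bK,
      Basis.restrictScalars_repr_apply] at hfx
    rw [← hfx]
    exact Finset.sum_congr rfl fun i _ => by rw [Algebra.smul_def, mul_comm]
  | zero => simp
  | add x y _ _ hx hy =>
    simp only [map_add, Finsupp.add_apply, smul_add, Finset.sum_add_distrib, hx, hy, add_zero]
  | smul c x _ hx =>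
    have : ∀ i, f (bK i) • b.repr (c • x) i = c • (f (bK i) • b.repr x i) := fun i => by
      rw [map_smul, Finsupp.smul_apply, smul_comm]
    simp only [this, ← Finset.smul_sum, hx, smul_zero]

variable {V V' : Submodule K W} {U : Submodule L W} {A' : Submodule K L}
  {b b' : Basis (Fin (m + 1)) L W} {α : Basis (Fin m) K A} {α' : Basis (Fin m) K A'}

theorem TangentFrame.mem_splash_iff [NeZero m] (h : TangentFrame V U A b α)
    (P : Submodule L W) : P ∈ Splash K L V U (m + 1) ↔
      (P = span L {b 0} ∨ ∃ s ∈ A, P = span L {s • b 0 + frameDir b α}) := by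
  have hind := linearIndependent_frame b α
  rw [LinearIndependent.pair_iff] at hind
  have hU : span L {b 0, frameDir b α} = U := h.line_eq
  constructor
  · rintro ⟨hP1, hPU, H, hHV, hH, hPH⟩
    obtain ⟨k, hk, hkH⟩ := exists_coeff_of_hyperplane b (h.span_eq ▸ hHV)
      (by rw [hH, Fintype.card_fin]; omega)
    obtain ⟨p, hpP, hp0⟩ := P.ne_bot_iff.1 (by rintro rfl; simp at hP1)
    have : FiniteDimensional L W := b.finiteDimensional_of_finite
    have hPp : P = span L {p} := (eq_of_le_of_finrank_eq
      ((span_singleton_le_iff_mem _ _).2 hpP) (by rw [hP1, finrank_span_singleton hp0])).symm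
    obtain ⟨s, t, rfl⟩ := mem_span_pair.1 (hU ▸ hPU hpP)
    have hkp := hkH _ (hPH hpP)
    rw [sum_smul_repr_frame] at hkp
    by_cases ht : t = 0
    · subst ht
      have hs : s ≠ 0 := by rintro rfl; simp at hp0
      left
      rw [hPp, zero_smul, add_zero, span_singleton_smul_eq hs.isUnit]
    · right
      have hk0 : k 0 ≠ 0 := by
        intro hk0
        apply hk
        have h1 : ∑ i : Fin m, k i.succ • α i = 0 := by
          rw [hk0, zero_smul, zero_add] at hkp
          simpa only [mul_eq_zero, ht, false_or, ZeroMemClass.coe_eq_zero] using hkp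
        have h2 := Fintype.linearIndependent_iff.1 α.linearIndependent _ h1
        funext i
        refine Fin.cases hk0 h2 i
      have hk0' : algebraMap K L (k 0) ≠ 0 := by simpa using hk0
      refine ⟨(-(k 0)⁻¹ • ∑ i : Fin m, k i.succ • α i : A), coe_mem _, ?_⟩
      rw [hPp, ← span_singleton_smul_eq (inv_ne_zero ht).isUnit (_ + _), smul_add, smul_smul,
        inv_smul_smul₀ ht]
      congr 4
      rw [coe_smul, Algebra.smul_def] at *
      simp only [map_neg, map_inv₀]
      field_simp
      linear_combination hkp
  · have key : ∀ (s t : L) (k : Fin (m + 1) → K), k ≠ 0 → (s ≠ 0 ∨ t ≠ 0) →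
        k 0 • s + t * ((∑ i : Fin m, k i.succ • α i : A) : L) = 0 →
        span L {s • b 0 + t • frameDir b α} ∈ Splash K L V U (m + 1) := by
      intro s t k hk hst hkst
      refine ⟨finrank_span_singleton fun h0 => ?_, ?_, ?_⟩
      · have := hind s t h0
        tauto
      · rw [← hU, span_singleton_le_iff_mem]
        exact mem_span_pair.2 ⟨s, t, rfl⟩
      · obtain ⟨H, hH1, hH2, hH3⟩ := exists_hyperplane_of_coeff b hk
        refine ⟨H, h.span_eq ▸ hH1, by simpa using hH2, ?_⟩
        rw [span_singleton_le_iff_mem]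
        exact hH3 _ (by rw [sum_smul_repr_frame, hkst])
    rintro (rfl | ⟨s, hs, rfl⟩)
    · simpa using key 1 0 (Pi.single (Fin.succ 0) 1) (by simp) (by simp)
        (by simp)
    · simpa using key s 1 (Fin.cons (-1) (α.repr ⟨s, hs⟩)) (fun h0 => by
        simpa using congrFun h0 0) (by simp) (by simp [α.sum_repr])

theorem TangentFrame.smul (h : TangentFrame V U A b α) {c : L} (hc : c ≠ 0)
    (hα : ∀ i, (α' i : L) = c * α i) : TangentFrame V U A' b α' where
  span_eq := h.span_eq
  line_eq := by
    have : frameDir b α' = c • frameDir b α := by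
      simp [frameDir, hα, Finset.smul_sum, smul_smul]
    rw [this, span_insert, span_singleton_smul_eq hc.isUnit, ← span_insert, h.line_eq]

/-- The coordinates of the line may be taken to be any `K`-basis of their span. -/
theorem TangentFrame.exists_change_basis (h : TangentFrame V U A b α)
    (β : Basis (Fin m) K A) :
    ∃ b' : Basis (Fin (m + 1)) L W, TangentFrame V U A b' β := by
  let N := β.toMatrix α
  let M := α.toMatrix β
  let g : Fin (m + 1) → W := Fin.cons (b 0) fun i => ∑ j, N i j • b j.succ
  have hg0 : g 0 = b 0 := rfl
  have hgs : ∀ i : Fin m, g i.succ = ∑ j, N i j • b j.succ := fun i => rfl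
  have hMN : M * N = 1 := α.toMatrix_mul_toMatrix_flip β
  have hb : ∀ j : Fin m, b j.succ = ∑ i, M j i • g i.succ := by
    intro j
    simp only [hgs, Finset.smul_sum, smul_smul]
    rw [Finset.sum_comm]
    simp only [← Finset.sum_smul, ← Matrix.mul_apply, hMN]
    simp [Matrix.one_apply]
  have hspan : span K (Set.range g) = span K (Set.range b) := by
    apply le_antisymm <;> rw [span_le, Set.range_subset_iff] <;>
      refine fun i => Fin.cases ?_ (fun j => ?_) i
    · exact subset_span ⟨0, rfl⟩
    · rw [hgs]
      exact sum_mem fun i _ => smul_mem _ _ (subset_span ⟨_, rfl⟩)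
    · rw [← hg0]
      exact subset_span ⟨0, rfl⟩
    · rw [hb]
      exact sum_mem fun i _ => smul_mem _ _ (subset_span ⟨_, rfl⟩)
  have htop : ⊤ ≤ span L (Set.range g) := by
    rw [← span_span_of_tower K L (Set.range g), hspan, span_span_of_tower, b.span_eq]
  let b' := basisOfTopLeSpanOfCardEqFinrank g htop (finrank_eq_card_basis b).symm
  have hb' : ⇑b' = g := coe_basisOfTopLeSpanOfCardEqFinrank _ _ _
  refine ⟨b', by rw [hb', hspan, h.span_eq], ?_⟩
  have : frameDir b' β = frameDir b α := by
    have hα : ∀ j, (α j : L) = ∑ i, N i j • (β i : L) := fun j => by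
      have := congrArg (A.subtype) (β.sum_toMatrix_smul_self α j)
      rw [map_sum] at this
      exact this.symm
    simp only [frameDir, hb', hgs, hα, Finset.smul_sum, Finset.sum_smul]
    rw [Finset.sum_comm]
    refine Finset.sum_congr rfl fun j _ => Finset.sum_congr rfl fun i _ => ?_
    rw [smul_assoc, smul_comm]
  rw [this, hb', hg0, h.line_eq]

theorem TangentFrame.exists_equiv (h : TangentFrame V U A b α) (h' : TangentFrame V' U A' b' α')
    {c : L} (hc : c ≠ 0) (hA : ∀ x, x ∈ A ↔ c * x ∈ A') :
    ∃ κ : W ≃ₗ[L] W, U.map (κ : W →ₗ[L] W) = U ∧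
      V.map ((κ : W →ₗ[L] W).restrictScalars K) = V' := by
  have hinj : Function.Injective (LinearMap.mulLeft K c) := mul_right_injective₀ hc
  have hmap : A.map (LinearMap.mulLeft K c) = A' := by
    ext x
    constructor
    · rintro ⟨y, hy, rfl⟩
      exact (hA y).1 hy
    · intro hx
      exact ⟨c⁻¹ * x, (hA _).2 (by rwa [mul_inv_cancel_left₀ hc]), by simp [hc]⟩
  subst hmap
  let β := α.map (equivMapOfInjective (LinearMap.mulLeft K c) hinj A)
  have hβ : ∀ i, (β i : L) = c * α i := fun i => by simp [β]
  obtain ⟨d, hd⟩ := h'.exists_change_basis β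
  have hd' : TangentFrame V' U A d α := hd.smul (inv_ne_zero hc) fun i => by
    rw [hβ, inv_mul_cancel_left₀ hc]
  let κ := b.equiv d (Equiv.refl _)
  have hκ : ∀ i, κ (b i) = d i := fun i => by simp [κ]
  refine ⟨κ, ?_, ?_⟩
  · have : κ (frameDir b α) = frameDir d α := by simp [frameDir, hκ]
    conv_lhs => rw [← h.line_eq]
    rw [map_span, Set.image_pair, ← hd'.line_eq]
    simp [this, hκ]
  · rw [← h.span_eq, map_span, ← Set.range_comp, ← hd.span_eq]
    congr 2
    funext i
    exact hκ i

theorem exists_tangentFrame [NeZero m] (hW : finrank L W = m + 1) (hV : finrank K V = m + 1)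
    (hspan : span L (V : Set W) = ⊤) (hU : finrank L U = 2)
    (htangent : ∃ P ∈ BSet L (V : Set W), P ≤ U)
    (hext : ∀ H : Submodule K W, H ≤ V → finrank K H = m → ¬ U ≤ span L (H : Set W)) :
    ∃ (A : Submodule K L) (b : Basis (Fin (m + 1)) L W) (α : Basis (Fin m) K A),
      TangentFrame V U A b α := by
  obtain ⟨_, ⟨v, hvV, hv0, rfl⟩, hvU⟩ := htangent
  rw [span_singleton_le_iff_mem] at hvU
  have : FiniteDimensional K V := .of_finrank_pos (by omega)
  have : FiniteDimensional L W := .of_finrank_pos (by omega)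
  obtain ⟨C, hC⟩ := Submodule.exists_isCompl (span K {(⟨v, hvV⟩ : V)})
  have hCrank : finrank K C = m := by
    have := finrank_add_eq_of_isCompl hC
    rw [finrank_span_singleton (by simpa using hv0)] at this
    omega
  let e := finBasisOfFinrankEq K C hCrank
  let g : Fin (m + 1) → W := Fin.cons v fun i => ((e i : V) : W)
  have hgV : span K (Set.range g) = V := by
    have h1 : span K (Set.range fun i => (e i : V)) = C := by
      have := congrArg (map C.subtype) e.span_eq
      rwa [map_span, ← Set.range_comp, Submodule.map_top, range_subtype] at this
    have h2 := congrArg (map V.subtype) hC.sup_eq_top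
    rw [← h1, ← span_union, map_span, Submodule.map_top, range_subtype, Set.image_union,
      Set.image_singleton, ← Set.range_comp] at h2
    rw [Fin.range_cons]
    exact h2
  have htop : ⊤ ≤ span L (Set.range g) := by
    rw [← span_span_of_tower K L (Set.range g), hgV, hspan]
  let b := basisOfTopLeSpanOfCardEqFinrank g htop (by simp [hW])
  have hb : ⇑b = g := coe_basisOfTopLeSpanOfCardEqFinrank _ _ _
  have hb0 : b 0 = v := by rw [hb]; rfl
  obtain ⟨y, hyU, hy⟩ : ∃ y ∈ U, y ∉ span L {v} := by
    by_contra! h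
    have h1 := finrank_mono (show U ≤ span L {v} from h)
    rw [hU, finrank_span_singleton hv0] at h1
    omega
  let a : Fin m → L := fun i => b.repr y i.succ
  let z := ∑ i, a i • b i.succ
  have hyz : y = b.repr y 0 • v + z := by
    conv_lhs => rw [← b.sum_repr y, Fin.sum_univ_succ, hb0]
  have hzU : z ∈ U := by
    have : z = y - b.repr y 0 • v := eq_sub_of_add_eq' hyz.symm
    rw [this]
    exact sub_mem hyU (smul_mem _ _ hvU)
  have hz : z ∉ span L {v} := fun hz => hy (by
    rw [hyz]
    exact add_mem (smul_mem _ _ (mem_span_singleton_self _)) hz)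
  have hUe : span L {b 0, z} = U := by
    rw [hb0]
    have hle : span L {v, z} ≤ U := by
      rw [span_le]
      rintro x (rfl | rfl) <;> assumption
    have hlt : span L {v} < span L {v, z} :=
      lt_of_le_of_ne (span_mono (by simp)) fun h => hz (h ▸ subset_span (by simp))
    have h1 := finrank_lt_finrank_of_lt hlt
    rw [finrank_span_singleton hv0] at h1
    exact eq_of_le_of_finrank_le hle (by omega)
  have ha : LinearIndependent K a := by
    rw [Fintype.linearIndependent_iff]
    by_contra! h
    obtain ⟨k, hk, j, hj⟩ := h
    obtain ⟨H, hH1, hH2, hH3⟩ := exists_hyperplane_of_coeff b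
      (k := Fin.cons 0 k) (fun h0 => hj (congrFun h0 j.succ))
    rw [hb, hgV] at hH1
    refine hext H hH1 (by simpa using hH2) ?_
    rw [← hUe, span_le]
    have hzr : ∀ i : Fin m, b.repr z i.succ = a i := fun i => by
      simp [z, Finsupp.single_apply]
    rintro x (rfl | rfl)
    · exact hH3 _ (by simp [Fin.sum_univ_succ])
    · exact hH3 _ (by simpa [Fin.sum_univ_succ, hzr] using hk)
  refine ⟨span K (Set.range a), b, Basis.span ha, by rw [hb, hgV], ?_⟩
  have : frameDir b (Basis.span ha) = z := by
    simp [frameDir, z, Basis.span_apply]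
  rw [this, hUe]

theorem image_bSet (κ : W ≃ₗ[L] W) (h : V.map ((κ : W →ₗ[L] W).restrictScalars K) = V') :
    (fun P => map (κ : W →ₗ[L] W) P) '' BSet L (V : Set W) = BSet L (V' : Set W) := by
  subst h
  ext P
  constructor
  · rintro ⟨_, ⟨x, hx, hx0, rfl⟩, rfl⟩
    exact ⟨κ x, ⟨x, hx, rfl⟩, by simpa using hx0, by simp [map_span]⟩
  · rintro ⟨_, ⟨x, hx, rfl⟩, hx0, rfl⟩
    exact ⟨_, ⟨x, hx, by rintro rfl; simp at hx0, rfl⟩, by simp [map_span]⟩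

end

/-- if two `q`-subgeometries tangent to the same line have the same
splash on that line, then there is a projectivity fixing the line and mapping one
subgeometry onto the other. -/
theorem same_splash_implies_projectively_equivalent
    (K L : Type*) [Field K] [Field L] [Algebra K L] [Fintype K] [Fintype L]
    (r n : ℕ) (hr : 3 ≤ r) (hrn : r ≤ n) (hrank : Module.finrank K L = n)
    (V₀ V₁ : Submodule K (Fin r → L))
    (hV₀rank : Module.finrank K V₀ = r)
    (hV₀span : Submodule.span L (V₀ : Set (Fin r → L)) = ⊤)
    (hV₁rank : Module.finrank K V₁ = r)
    (hV₁span : Submodule.span L (V₁ : Set (Fin r → L)) = ⊤)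
    (U : Submodule L (Fin r → L)) (hU : Module.finrank L U = 2)
    (htangent₀ : ∃! P, P ∈ BSet L (V₀ : Set (Fin r → L)) ∧ P ≤ U)
    (htangent₁ : ∃! P, P ∈ BSet L (V₁ : Set (Fin r → L)) ∧ P ≤ U)
    (hext₀ : ∀ H : Submodule K (Fin r → L), H ≤ V₀ → Module.finrank K H = r - 1 →
      ¬ U ≤ Submodule.span L (H : Set (Fin r → L)))
    (hext₁ : ∀ H : Submodule K (Fin r → L), H ≤ V₁ → Module.finrank K H = r - 1 →
      ¬ U ≤ Submodule.span L (H : Set (Fin r → L)))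
    (hsplash : Splash K L V₀ U r = Splash K L V₁ U r) :
    ∃ κ : (Fin r → L) ≃ₗ[L] (Fin r → L),
      Submodule.map (κ : (Fin r → L) →ₗ[L] (Fin r → L)) U = U ∧
      (fun P => Submodule.map (κ : (Fin r → L) →ₗ[L] (Fin r → L)) P) ''
          BSet L (V₀ : Set (Fin r → L)) = BSet L (V₁ : Set (Fin r → L)) := by
  obtain ⟨m, rfl⟩ : ∃ m, r = m + 1 := ⟨r - 1, by omega⟩
  have : NeZero m := ⟨by omega⟩
  have hW : finrank L (Fin (m + 1) → L) = m + 1 := by simp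
  obtain ⟨A, b, α, h⟩ := exists_tangentFrame hW hV₀rank hV₀span hU htangent₀.exists hext₀
  obtain ⟨A', b', α', h'⟩ := exists_tangentFrame hW hV₁rank hV₁span hU htangent₁.exists hext₁
  have hA : A ≠ ⊥ := A.ne_bot_iff.2 ⟨α 0, coe_mem _, by simpa using α.ne_zero 0⟩
  obtain ⟨c, hc, hAc⟩ := exists_mem_iff_mul_mem hA (linearIndependent_frame b α)
    (linearIndependent_frame b' α') (h.line_eq.trans h'.line_eq.symm) fun P => by
      rw [← h.mem_splash_iff, ← h'.mem_splash_iff, hsplash]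
  obtain ⟨κ, hκU, hκV⟩ := h.exists_equiv h' hc hAc
  exact ⟨κ, hκU, image_bSet κ hκV⟩
end

section
/- Let 3 ≤ r ≤ n. Let π₀ = B(V₀) and π₁ = B(V₁) be q-subgeometries of PG(r-1,q^n), both tangent to the line l_∞ = PG(U), with l_∞ not contained in the extension of any hyperplane of π₀ or of π₁. (a) If there exist a field automorphism σ of L and a σ-semilinear bijection θ : U → U whose induced map on points carries S(π₀,l_∞) onto S(π₁,l_∞), then there exist a field automorphism σ' of L and a σ'-semilinear bijection τ : L^r → L^r with τ(U) = U whose induced map on points carries π₀ onto π₁, i.e. { L·τ(v) : L·v ∈ π₀ } = π₁. (b) Conversely, if there exist a field automorphism σ' of L and a σ'-semilinear bijection τ : L^r → L^r with τ(U) = U and { L·τ(v) : L·v ∈ π₀ } = π₁, then { L·τ(v) : L·v ∈ S(π₀,l_∞) } = S(π₁,l_∞). -/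
open Submodule Module

theorem hua_inv {L : Type*} [Field L] {S T : AddSubgroup L} (h : ∀ x, x ∈ S ↔ x⁻¹ ∈ T)
    {a y : L} (ha : a ∈ S) (hy : y ∈ T) : a ^ 2 * y ∈ S := by
  have h' : ∀ x, x ∈ T ↔ x⁻¹ ∈ S := fun x => by rw [h, inv_inv]
  by_cases ha0 : a = 0
  · simp [ha0, S.zero_mem]
  by_cases hy0 : y = 0
  · simp [hy0, S.zero_mem]
  by_cases hay : a * y = 1
  · have : a ^ 2 * y = a := by rw [pow_two, mul_assoc, hay, mul_one]
    rwa [this]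
  have h1 : y⁻¹ - a ∈ S := S.sub_mem ((h' y).1 hy) ha
  have h2 : (a⁻¹ + (y⁻¹ - a)⁻¹)⁻¹ ∈ S :=
    (h' _).1 (T.add_mem ((h a).1 ha) ((h _).1 h1))
  have h3 : y⁻¹ - a ≠ 0 := by
    intro h0
    apply hay
    rw [← sub_eq_zero.1 h0, inv_mul_cancel₀ hy0]
  have h4 : a ^ 2 * y = a - (a⁻¹ + (y⁻¹ - a)⁻¹)⁻¹ := by
    have e1 : a⁻¹ + (y⁻¹ - a)⁻¹ = y⁻¹ * (a⁻¹ * (y⁻¹ - a)⁻¹) := by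
      field_simp
      ring
    rw [e1, mul_inv, mul_inv, inv_inv, inv_inv, inv_inv]
    field_simp
    ring
  rw [h4]
  exact S.sub_mem ha h2

theorem ringEquiv_algebraMap_mem_range {K L : Type*} [Field K] [Field L] [Algebra K L] [Finite K]
    (σ : L ≃+* L) (k : K) : ∃ k' : K, algebraMap K L k' = σ (algebraMap K L k) := by
  classical
  have := Fintype.ofFinite K
  set p : Polynomial L := Polynomial.X ^ Fintype.card K - Polynomial.X with hp
  have hq : 1 < Fintype.card K := Fintype.one_lt_card
  have hp0 : p ≠ 0 := FiniteField.X_pow_card_sub_X_ne_zero L hq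
  have hmem : ∀ x : L, x ∈ p.roots.toFinset ↔ x ^ Fintype.card K = x := fun x => by
    rw [Multiset.mem_toFinset, Polynomial.mem_roots hp0]
    simp [hp, sub_eq_zero]
  have hsub : Finset.univ.image (algebraMap K L) ⊆ p.roots.toFinset := by
    intro x hx
    obtain ⟨y, -, rfl⟩ := Finset.mem_image.1 hx
    rw [hmem, ← map_pow, FiniteField.pow_card]
  have hcard : p.roots.toFinset.card ≤ (Finset.univ.image (algebraMap K L)).card := by
    rw [Finset.card_image_of_injective _ (algebraMap K L).injective, Finset.card_univ]
    refine (Multiset.toFinset_card_le _).trans ((Polynomial.card_roots' p).trans ?_)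
    rw [FiniteField.X_pow_card_sub_X_natDegree_eq L hq]
  have h : σ (algebraMap K L k) ∈ p.roots.toFinset := by
    rw [hmem, ← map_pow, ← map_pow, FiniteField.pow_card]
  rw [← Finset.eq_of_subset_of_card_le hsub hcard] at h
  obtain ⟨k', -, hk'⟩ := Finset.mem_image.1 h
  exact ⟨k', hk'⟩

theorem exists_mul_ringEquiv_mem {L : Type*} [Field L] [Finite L] {Z Z' : AddSubgroup L}
    (hcard : Nat.card Z = Nat.card Z') {y₀ : L} (hy₀ : y₀ ∈ Z) (hy₀0 : y₀ ≠ 0) (σ : L ≃+* L)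
    {p s t w : L} (hdet : p * w - s * t ≠ 0) (hinf : s = 0 ∨ p / s ∈ Z')
    (hinf' : s ≠ 0 → ∃ z ∈ Z, σ z * s + w = 0)
    (hZ : ∀ z ∈ Z, σ z * s + w = 0 ∨ (σ z * p + t) / (σ z * s + w) ∈ Z') :
    ∃ α : L, α ≠ 0 ∧ ∀ z ∈ Z, α * σ z ∈ Z' := by
  by_cases hs : s = 0
  · subst hs
    have hp : p ≠ 0 := by rintro rfl; simp at hdet
    have hw : w ≠ 0 := by rintro rfl; simp at hdet
    refine ⟨p / w, div_ne_zero hp hw, fun z hz => ?_⟩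
    have h0 := hZ 0 Z.zero_mem
    have h1 := hZ z hz
    simp only [map_zero, zero_mul, mul_zero, zero_add, hw, false_or] at h0 h1
    have h := Z'.sub_mem h1 h0
    rwa [← sub_div, add_sub_cancel_right, mul_comm, mul_div_right_comm] at h
  · obtain ⟨z₀, hz₀, hz₀w⟩ := hinf' hs
    have hps := hinf.resolve_left hs
    set D : L := (σ z₀ * p + t) / s with hD
    have hD0 : D ≠ 0 := by
      refine div_ne_zero (fun h => hdet ?_) hs
      linear_combination p * hz₀w - s * h
    have key : ∀ y ∈ Z, D * (σ y)⁻¹ ∈ Z' := by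
      intro y hy
      by_cases hy0 : y = 0
      · simp [hy0, Z'.zero_mem]
      have hσy : σ y ≠ 0 := by simpa using hy0
      have e1 : σ (z₀ + y) * s + w = σ y * s := by
        rw [map_add]; linear_combination hz₀w
      have h := hZ _ (Z.add_mem hz₀ hy)
      rw [e1, or_iff_right (mul_ne_zero hσy hs)] at h
      have h2 := Z'.sub_mem h hps
      convert h2 using 1
      rw [hD, map_add]
      field_simp
      ring
    let F : Z → Z' := fun y => ⟨D * (σ y)⁻¹, key y y.2⟩
    have hF : Function.Bijective F := by
      refine Function.Injective.bijective_of_nat_card_le ?_ hcard.ge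
      intro y y' h
      have := congrArg Subtype.val h
      simp only [F] at this
      exact Subtype.ext (σ.injective (inv_injective (mul_left_cancel₀ hD0 this)))
    let S : AddSubgroup L := Z'.comap (AddMonoidHom.mulLeft D)
    let T : AddSubgroup L := Z.map (σ : L →+ L)
    have hST : ∀ x, x ∈ S ↔ x⁻¹ ∈ T := by
      intro x
      simp only [S, T, AddSubgroup.mem_comap, AddSubgroup.mem_map, AddMonoidHom.coe_mulLeft]
      constructor
      · intro hx
        obtain ⟨y, hy⟩ := hF.2 ⟨_, hx⟩
        have := congrArg Subtype.val hy
        simp only [F] at this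
        refine ⟨y, y.2, ?_⟩
        rw [← mul_left_cancel₀ hD0 this, inv_inv]; rfl
      · rintro ⟨y, hy, hyx⟩
        have := key y hy
        rw [show σ y = x⁻¹ from hyx, inv_inv] at this
        exact this
    have hy₀S : (σ y₀)⁻¹ ∈ S := (hST _).2 (by rw [inv_inv]; exact ⟨y₀, hy₀, rfl⟩)
    refine ⟨D * ((σ y₀)⁻¹) ^ 2, mul_ne_zero hD0 (by simpa using hy₀0), fun z hz => ?_⟩
    have := hua_inv hST hy₀S (y := σ z) ⟨z, hz, rfl⟩
    rw [mul_assoc]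
    exact this

section Frames

variable {K L E : Type*} [Field K] [Field L] [Algebra K L] [AddCommGroup E] [Module L E]
  [Module K E]

theorem exists_hyperplane_ge {m : ℕ} {V H₀ : Submodule K E} (hV : Module.finrank K V = m + 1)
    (hle : H₀ ≤ V) (hrank : Module.finrank K H₀ ≤ m) :
    ∃ H : Submodule K E, H₀ ≤ H ∧ H ≤ V ∧ Module.finrank K H = m := by
  have : FiniteDimensional K V := FiniteDimensional.of_finrank_pos (by omega)
  have hlt : H₀.comap V.subtype < ⊤ := by
    rw [lt_top_iff_ne_top]
    intro h
    rw [Submodule.comap_subtype_eq_top] at h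
    rw [le_antisymm hle h] at hrank
    omega
  obtain ⟨f, hf, hfle⟩ := Submodule.exists_le_ker_of_lt_top _ hlt
  refine ⟨(LinearMap.ker f).map V.subtype, fun x hx => ?_, Submodule.map_subtype_le _ _, ?_⟩
  · exact ⟨⟨x, hle hx⟩, hfle hx, rfl⟩
  · have h := Module.Dual.finrank_ker_add_one_of_ne_zero hf
    rw [Submodule.finrank_map_subtype_eq]
    omega

/-- Coordinates adapted to a subgeometry `B(V)` tangent to the line `PG(U)` at the point spanned
by `b 0`. -/
structure IsTangentFrame {m : ℕ} (V : Submodule K E) (U : Submodule L E)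
    (b : Basis (Fin (m + 1)) L E) (c : Fin m → L) : Prop where
  span_eq : span K (Set.range b) = V
  linearIndependent : LinearIndependent K c
  line_eq : span L {b 0, ∑ i, c i • b i.succ} = U

namespace IsTangentFrame

variable {m : ℕ} {V : Submodule K E} {U : Submodule L E} {b : Basis (Fin (m + 1)) L E}
  {c : Fin m → L}

theorem basis_mem (h : IsTangentFrame V U b c) (i : Fin (m + 1)) : b i ∈ V :=
  h.span_eq ▸ subset_span ⟨i, rfl⟩

theorem mem_line_iff (h : IsTangentFrame V U b c) {w : E} :
    w ∈ U ↔ ∃ x y : L, x • b 0 + y • ∑ i, c i • b i.succ = w := by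
  rw [← h.line_eq, mem_span_pair]

theorem eq_zero_of_pair (h : IsTangentFrame V U b c) (hm : 0 < m) {x y : L}
    (hxy : x • b 0 + y • ∑ i, c i • b i.succ = 0) : x = 0 ∧ y = 0 := by
  have h1 := Fintype.linearIndependent_iff.1 b.linearIndependent
    (Fin.cons x fun i => y * c i) (by
      rw [Fin.sum_univ_succ]
      simpa [Finset.smul_sum, mul_smul] using hxy)
  refine ⟨h1 0, ?_⟩
  have h2 := h1 (Fin.succ ⟨0, hm⟩)
  rw [Fin.cons_succ] at h2
  exact (mul_eq_zero.1 h2).resolve_right (h.linearIndependent.ne_zero _)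

variable [IsScalarTower K L E]

theorem finrank_eq (h : IsTangentFrame V U b c) : Module.finrank K V = m + 1 := by
  have hli : LinearIndependent K b := b.linearIndependent.restrict_scalars fun x y hxy => by
    simpa [Algebra.smul_def] using hxy
  rw [← h.span_eq, finrank_span_eq_card hli, Fintype.card_fin]

theorem span_mem_splash_iff (h : IsTangentFrame V U b c) (hm : 0 < m) {x y : L}
    (hxy : x • b 0 + y • ∑ i, c i • b i.succ ≠ 0) :
    span L {x • b 0 + y • ∑ i, c i • b i.succ} ∈ Splash K L V U (m + 1) ↔
      y = 0 ∨ x / y ∈ span K (Set.range c) := by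
  have hwU : x • b 0 + y • ∑ i, c i • b i.succ ∈ U := h.mem_line_iff.2 ⟨x, y, rfl⟩
  constructor
  · rintro ⟨-, -, H, hHV, hH, hw⟩
    rw [or_iff_not_imp_left]
    intro hy
    rw [span_singleton_le_iff_mem] at hw
    have hlt : H.comap V.subtype < ⊤ := by
      rw [lt_top_iff_ne_top]
      intro htop
      rw [Submodule.comap_subtype_eq_top] at htop
      rw [le_antisymm hHV htop, h.finrank_eq] at hH
      omega
    obtain ⟨f, hf, hfle⟩ := Submodule.exists_le_ker_of_lt_top _ hlt
    let a : Fin (m + 1) → K := fun i => f ⟨b i, h.basis_mem i⟩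
    let φ : E →ₗ[L] L := b.constr L fun i => algebraMap K L (a i)
    have hφb : ∀ i, φ (b i) = algebraMap K L (a i) := fun i => b.constr_basis L _ i
    have hφ : ∀ v (hv : v ∈ V), φ v = algebraMap K L (f ⟨v, hv⟩) := by
      intro v hv
      have hv' := hv
      rw [← h.span_eq, mem_span_range_iff_exists_fun] at hv'
      obtain ⟨k, rfl⟩ := hv'
      have : (⟨∑ i, k i • b i, hv⟩ : V) = ∑ i, k i • ⟨b i, h.basis_mem i⟩ :=
        Subtype.ext (by simp)
      rw [this]
      simp only [map_sum, map_smul, smul_eq_mul, map_mul, LinearMap.map_smul_of_tower, hφb,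
        Algebra.smul_def, a]
    have hφw : φ (x • b 0 + y • ∑ i, c i • b i.succ) = 0 := by
      have : span L (H : Set E) ≤ LinearMap.ker φ := by
        rw [span_le]
        intro v hv
        have hfv : f ⟨v, hHV hv⟩ = 0 := hfle (show (⟨v, hHV hv⟩ : V) ∈ H.comap V.subtype from hv)
        rw [SetLike.mem_coe, LinearMap.mem_ker, hφ v (hHV hv), hfv, map_zero]
      exact this hw
    simp only [map_add, map_smul, map_sum, hφb, smul_eq_mul] at hφw
    have ha0 : a 0 ≠ 0 := by
      intro ha0
      rw [ha0, map_zero, mul_zero, zero_add] at hφw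
      have h1 := (mul_eq_zero.1 hφw).resolve_left hy
      have h2 := Fintype.linearIndependent_iff.1 h.linearIndependent (fun i => a i.succ) (by
        rw [← h1]
        exact Finset.sum_congr rfl fun i _ => by rw [Algebra.smul_def, mul_comm])
      apply hf
      ext ⟨v, hv⟩
      apply (algebraMap K L).injective
      rw [← hφ v hv]
      have : φ = 0 := b.ext fun i => by
        rw [hφb]
        refine Fin.cases ?_ (fun j => ?_) i
        · simp [ha0]
        · simp [h2 j]
      simp [this]
    have ha0' : algebraMap K L (a 0) ≠ 0 := by simpa using ha0
    rw [mem_span_range_iff_exists_fun]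
    refine ⟨fun i => -(a 0)⁻¹ * a i.succ, ?_⟩
    rw [eq_div_iff hy]
    apply mul_left_cancel₀ ha0'
    have : ∑ i, (-(a 0)⁻¹ * a i.succ) • c i
        = -(algebraMap K L (a 0))⁻¹ * ∑ i, c i * algebraMap K L (a i.succ) := by
      rw [Finset.mul_sum]
      refine Finset.sum_congr rfl fun i _ => ?_
      rw [Algebra.smul_def, map_mul, map_neg, map_inv₀]
      ring
    rw [this]
    field_simp
    linear_combination -hφw
  · intro hcase
    refine ⟨finrank_span_singleton hxy, by rwa [span_singleton_le_iff_mem], ?_⟩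
    simp only [span_singleton_le_iff_mem]
    by_cases hy : y = 0
    · subst hy
      obtain ⟨H, hH₀, hHV, hH⟩ := exists_hyperplane_ge h.finrank_eq
        (H₀ := span K {b 0}) (by rw [span_singleton_le_iff_mem]; exact h.basis_mem 0)
        (by rw [finrank_span_singleton (b.ne_zero 0)]; exact hm)
      refine ⟨H, hHV, hH, ?_⟩
      rw [zero_smul, add_zero]
      exact smul_mem _ _ (subset_span (hH₀ (mem_span_singleton_self _)))
    · obtain ⟨k, hk⟩ := (mem_span_range_iff_exists_fun K).1 (hcase.resolve_left hy)
      obtain ⟨H, hH₀, hHV, hH⟩ := exists_hyperplane_ge h.finrank_eq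
        (H₀ := span K (Set.range fun i : Fin m => k i • b 0 + b i.succ)) (by
          rw [span_le]
          rintro _ ⟨i, rfl⟩
          exact V.add_mem (V.smul_mem _ (h.basis_mem _)) (h.basis_mem _))
        ((finrank_range_le_card _).trans (by rw [Fintype.card_fin]))
      refine ⟨H, hHV, hH, ?_⟩
      have : x • b 0 + y • ∑ i, c i • b i.succ
          = ∑ i, (y * c i) • (k i • b 0 + b i.succ) := by
        simp only [smul_add, Finset.sum_add_distrib, Finset.smul_sum, mul_smul]
        congr 1
        rw [eq_div_iff hy] at hk
        rw [← hk, Finset.sum_mul, Finset.sum_smul]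
        refine Finset.sum_congr rfl fun i _ => ?_
        rw [← algebraMap_smul L (k i) (b 0), smul_smul, smul_smul, Algebra.smul_def]
        congr 1
        ring
      rw [this]
      exact sum_mem fun i _ => smul_mem _ _ (subset_span (hH₀ (subset_span ⟨i, rfl⟩)))

theorem exists_change (h : IsTangentFrame V U b c) {e : Fin m → L}
    (he : LinearIndependent K e) (hec : span K (Set.range e) = span K (Set.range c)) :
    ∃ b' : Basis (Fin (m + 1)) L E, b' 0 = b 0 ∧
      ∑ i, e i • b' i.succ = ∑ i, c i • b i.succ ∧ IsTangentFrame V U b' e := by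
  have h1 : ∀ j, ∃ A : Fin m → K, ∑ i, A i • e i = c j := fun j => by
    rw [← mem_span_range_iff_exists_fun, hec]; exact subset_span ⟨j, rfl⟩
  have h2 : ∀ i, ∃ B : Fin m → K, ∑ j, B j • c j = e i := fun i => by
    rw [← mem_span_range_iff_exists_fun, ← hec]; exact subset_span ⟨i, rfl⟩
  choose A hA using h1
  choose B hB using h2
  have hAB : ∀ l j, ∑ i, A l i * B i j = if l = j then 1 else 0 := by
    intro l
    have h3 : ∑ j, ((∑ i, A l i * B i j) - if l = j then 1 else 0) • c j = 0 := by
      simp only [sub_smul, Finset.sum_sub_distrib, ite_smul, one_smul, zero_smul,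
        Finset.sum_ite_eq, Finset.mem_univ, if_true, Finset.sum_smul, mul_smul]
      rw [Finset.sum_comm]
      simp only [← Finset.smul_sum, hB, hA, sub_self]
    intro j
    exact sub_eq_zero.1 (Fintype.linearIndependent_iff.1 h.linearIndependent _ h3 j)
  let g : Fin (m + 1) → E := Fin.cons (b 0) fun i => ∑ j, A j i • b j.succ
  have hg0 : g 0 = b 0 := rfl
  have hgs : ∀ i : Fin m, g i.succ = ∑ j, A j i • b j.succ := fun i => rfl
  have hspan : span K (Set.range g) = V := by
    refine le_antisymm (span_le.2 ?_) ?_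
    · rintro _ ⟨i, rfl⟩
      refine Fin.cases (h.basis_mem 0) (fun i => ?_) i
      rw [hgs]
      exact V.sum_mem fun j _ => V.smul_mem _ (h.basis_mem _)
    · rw [← h.span_eq, span_le]
      rintro _ ⟨i, rfl⟩
      refine Fin.cases (subset_span ⟨0, rfl⟩) (fun j => ?_) i
      have : b j.succ = ∑ i, B i j • g i.succ := by
        simp only [hgs, Finset.smul_sum]
        rw [Finset.sum_comm]
        simp only [smul_smul, ← Finset.sum_smul, mul_comm (B _ _), hAB, ite_smul, one_smul,
          zero_smul, Finset.sum_ite_eq', Finset.mem_univ, if_true]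
      rw [this]
      exact sum_mem fun i _ => smul_mem _ _ (subset_span ⟨_, rfl⟩)
  have htop : ⊤ ≤ span L (Set.range g) := by
    rw [← b.span_eq, span_le]
    rintro _ ⟨i, rfl⟩
    have := h.basis_mem i
    rw [← hspan] at this
    exact span_le_restrictScalars K L _ this
  let b' : Basis (Fin (m + 1)) L E := basisOfTopLeSpanOfCardEqFinrank g htop
    (by rw [Module.finrank_eq_card_basis b])
  have hb' : ⇑b' = g := coe_basisOfTopLeSpanOfCardEqFinrank _ _ _
  have hsum : ∑ i, e i • b' i.succ = ∑ i, c i • b i.succ := by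
    simp only [hb', hgs, Finset.smul_sum]
    rw [Finset.sum_comm]
    refine Finset.sum_congr rfl fun j _ => ?_
    rw [← hA j, Finset.sum_smul]
    exact Finset.sum_congr rfl fun i _ => by rw [smul_assoc, smul_comm]
  have hb'0 : b' 0 = b 0 := by rw [hb', hg0]
  exact ⟨b', hb'0, hsum, by rw [hb', hspan], he, by rw [hb'0, hsum, h.line_eq]⟩

end IsTangentFrame

theorem exists_isTangentFrame [IsScalarTower K L E] {m : ℕ} {V : Submodule K E} {U : Submodule L E}
    (hE : Module.finrank L E = m + 1) (hV : Module.finrank K V = m + 1)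
    (hspan : span L (V : Set E) = ⊤) (hU : Module.finrank L U = 2) {v : E} (hv : v ∈ V)
    (hv0 : v ≠ 0) (hvU : v ∈ U)
    (hext : ∀ H : Submodule K E, H ≤ V → Module.finrank K H = m → ¬ U ≤ span L (H : Set E)) :
    ∃ (b : Basis (Fin (m + 1)) L E) (c : Fin m → L), IsTangentFrame V U b c := by
  have : FiniteDimensional K V := FiniteDimensional.of_finrank_pos (by omega)
  have : FiniteDimensional L U := FiniteDimensional.of_finrank_pos (by omega)
  set v' : V := ⟨v, hv⟩ with hv'
  have hv'0 : v' ≠ 0 := fun h => hv0 (congrArg Subtype.val h)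
  obtain ⟨N, hN⟩ := Submodule.exists_isCompl (span K {v'})
  have hNrank : Module.finrank K N = m := by
    have := Submodule.finrank_add_eq_of_isCompl hN
    rw [finrank_span_singleton hv'0] at this
    omega
  let b₀ : Basis (Fin (m + 1)) K V := Basis.mkFinCons v' (finBasisOfFinrankEq K N hNrank)
    (fun c x hx h => by
      have h1 : c • v' ∈ N := by
        rw [eq_neg_of_add_eq_zero_left h]; exact N.neg_mem hx
      have h2 := Submodule.disjoint_def.1 hN.disjoint _
        (Submodule.smul_mem _ c (Submodule.mem_span_singleton_self v')) h1
      exact (smul_eq_zero.1 h2).resolve_right hv'0)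
    (fun z => by
      have hz : z ∈ span K {v'} ⊔ N := by rw [hN.sup_eq_top]; trivial
      obtain ⟨x, hx, y, hy, rfl⟩ := Submodule.mem_sup.1 hz
      obtain ⟨a, rfl⟩ := Submodule.mem_span_singleton.1 hx
      exact ⟨-a, by simpa [add_comm, add_assoc] using hy⟩)
  have hb₀ : b₀ 0 = v' := by simp [b₀]
  have hb₀span : span K (Set.range fun i => (b₀ i : E)) = V := by
    have := congrArg (Submodule.map V.subtype) b₀.span_eq
    rw [Submodule.map_span, ← Set.range_comp, Submodule.map_subtype_top] at this
    exact this
  have htop : ⊤ ≤ span L (Set.range fun i => (b₀ i : E)) := by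
    rw [← hspan, span_le]
    intro x hx
    rw [SetLike.mem_coe, ← hb₀span] at hx
    exact span_le_restrictScalars K L _ hx
  let b : Basis (Fin (m + 1)) L E :=
    basisOfTopLeSpanOfCardEqFinrank (fun i => (b₀ i : E)) htop (by simp [hE])
  have hb : ⇑b = fun i => (b₀ i : E) := coe_basisOfTopLeSpanOfCardEqFinrank _ _ _
  have hb0 : b 0 = v := by rw [hb]; simp [hb₀, hv']
  have hbV : span K (Set.range b) = V := by rw [hb]; exact hb₀span
  obtain ⟨u, huU, hu⟩ : ∃ u ∈ U, u ∉ span L {v} := by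
    by_contra! h
    have := Submodule.finrank_mono (show U ≤ span L {v} from h)
    rw [finrank_span_singleton hv0] at this
    omega
  have hline : span L {b 0, ∑ i : Fin m, b.repr u i.succ • b i.succ} = U := by
    have hsum : ∑ i : Fin m, b.repr u i.succ • b i.succ = u - b.repr u 0 • v := by
      have := b.sum_repr u
      rw [Fin.sum_univ_succ, hb0] at this
      exact eq_sub_of_add_eq' this
    have hU2 : span L {v, u} = U := by
      refine Submodule.eq_of_le_of_finrank_le ?_ ?_
      · rw [span_le]; rintro x (rfl | rfl) <;> assumption
      · have hli : LinearIndependent L ![v, u] := by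
          rw [LinearIndependent.pair_iff' hv0]
          intro a ha
          exact hu (Submodule.mem_span_singleton.2 ⟨a, ha⟩)
        have := finrank_span_eq_card hli
        rw [Matrix.range_cons, Matrix.range_cons, Matrix.range_empty, Set.union_empty,
          Set.singleton_union] at this
        rw [this, hU]; simp
    rw [hb0, hsum, ← hU2]
    refine le_antisymm (span_le.2 ?_) (span_le.2 ?_)
    · rintro x (rfl | rfl)
      · exact subset_span (by simp)
      · exact mem_span_pair.2 ⟨-b.repr u 0, 1, by simp; abel⟩
    · rintro x (rfl | rfl)
      · exact subset_span (by simp)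
      · exact mem_span_pair.2 ⟨b.repr x 0, 1, by simp⟩
  refine ⟨b, fun i => b.repr u i.succ, hbV, ?_, hline⟩
  set c : Fin m → L := fun i => b.repr u i.succ with hc
  rw [linearIndependent_iff_card_le_finrank_span, Fintype.card_fin]
  by_contra! hlt
  set Z := span K (Set.range c) with hZ
  have : FiniteDimensional K Z := FiniteDimensional.span_of_finite K (Set.finite_range c)
  let d := finBasis K Z
  let g : Fin (Module.finrank K Z) → E := fun j =>
    ∑ i, d.repr ⟨c i, subset_span ⟨i, rfl⟩⟩ j • b i.succ
  have hbmem : ∀ i, b i ∈ V := fun i => hbV ▸ subset_span ⟨i, rfl⟩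
  have hle : span K (Set.range (Fin.cons (b 0) g : Fin (Module.finrank K Z + 1) → E)) ≤ V := by
    rw [span_le]
    rintro _ ⟨j, rfl⟩
    refine Fin.cases ?_ (fun j => ?_) j
    · exact hbmem 0
    · rw [Fin.cons_succ]
      exact V.sum_mem fun i _ => V.smul_mem _ (hbmem _)
  obtain ⟨H, hH₀, hHV, hH⟩ := exists_hyperplane_ge hV hle
    ((finrank_range_le_card _).trans (by rw [Fintype.card_fin]; exact hlt))
  refine hext H hHV hH ?_
  rw [← hline, span_le]
  rintro x (rfl | rfl)
  · exact subset_span (hH₀ (subset_span ⟨0, rfl⟩))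
  · have hcd : ∀ i, c i = ∑ j, d.repr ⟨c i, subset_span ⟨i, rfl⟩⟩ j • (d j : L) := by
      intro i
      have := congrArg Z.subtype (d.sum_repr ⟨c i, subset_span ⟨i, rfl⟩⟩)
      rw [map_sum] at this
      exact this.symm
    have : ∑ i, c i • b i.succ = ∑ j, (d j : L) • g j := by
      simp only [g, Finset.smul_sum]
      rw [Finset.sum_comm]
      refine Finset.sum_congr rfl fun i _ => ?_
      conv_lhs => rw [hcd i]
      rw [Finset.sum_smul]
      refine Finset.sum_congr rfl fun j _ => ?_
      rw [smul_assoc, smul_comm]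
    change ∑ i, c i • b i.succ ∈ _
    rw [this]
    exact Submodule.sum_mem _ fun j _ => Submodule.smul_mem _ _
      (subset_span (hH₀ (subset_span ⟨j.succ, by simp⟩)))

theorem span_singleton_map_eq {σ : L ≃+* L} (f : E →ₛₗ[(σ : L →+* L)] E) {x y : E}
    (h : span L {x} = span L {y}) : span L {f x} = span L {f y} := by
  have := congrArg (Submodule.map f) h
  rwa [map_span, map_span, Set.image_singleton, Set.image_singleton] at this

theorem span_singleton_map_mem_splash [IsScalarTower K L E] {σ : L ≃+* L} {m : ℕ}
    {V₀ V₁ : Submodule K E} {U : Submodule L E} (hm : 0 < m) (f : E →ₛₗ[(σ : L →+* L)] E)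
    (hV₁ : Module.finrank K V₁ = m + 1) (hfU : ∀ x ∈ U, f x ∈ U)
    (hB : ∀ v ∈ V₀, v ≠ 0 → ∃ w ∈ V₁, span L {f v} = span L {w}) {x : E} (hx : f x ≠ 0)
    (h : span L {x} ∈ Splash K L V₀ U (m + 1)) : span L {f x} ∈ Splash K L V₁ U (m + 1) := by
  obtain ⟨-, hxU, H, hHV, hH, hxH⟩ := h
  rw [Nat.add_sub_cancel] at hH
  rw [span_singleton_le_iff_mem] at hxU hxH
  refine ⟨finrank_span_singleton hx, by rw [span_singleton_le_iff_mem]; exact hfU x hxU, ?_⟩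
  have hpt : ∀ v ∈ V₀, ∃ w ∈ V₁, f v ∈ span L {w} := by
    intro v hv
    by_cases hv0 : v = 0
    · exact ⟨0, V₁.zero_mem, by simp [hv0]⟩
    · obtain ⟨w, hw, hvw⟩ := hB v hv hv0
      exact ⟨w, hw, hvw ▸ mem_span_singleton_self _⟩
  have : FiniteDimensional K H := FiniteDimensional.of_finrank_pos (by omega)
  let d := finBasisOfFinrankEq K H hH
  choose w hwV hfw using fun i => hpt (d i) (hHV (d i).2)
  obtain ⟨H', hH₀', hHV', hH'⟩ := exists_hyperplane_ge hV₁
    (H₀ := span K (Set.range w)) (by rw [span_le]; rintro _ ⟨i, rfl⟩; exact hwV i)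
    ((finrank_range_le_card _).trans (by rw [Fintype.card_fin]))
  refine ⟨H', hHV', by rwa [Nat.add_sub_cancel], ?_⟩
  rw [span_singleton_le_iff_mem]
  have hle : span L (H : Set E) ≤ (span L (H' : Set E)).comap f := by
    rw [span_le]
    intro v hv
    have hv' := congrArg H.subtype (d.sum_repr ⟨v, hv⟩)
    rw [map_sum] at hv'
    rw [SetLike.mem_coe, mem_comap, show v = H.subtype ⟨v, hv⟩ from rfl, ← hv', map_sum]
    refine sum_mem fun i _ => ?_
    rw [map_smul, ← algebraMap_smul L, LinearMap.map_smulₛₗ]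
    refine smul_mem _ _ ?_
    have : span L {w i} ≤ span L (H' : Set E) := by
      rw [span_singleton_le_iff_mem]
      exact subset_span (hH₀' (subset_span ⟨i, rfl⟩))
    exact this (hfw i)
  exact hle hxH

theorem image_splash [IsScalarTower K L E] {m : ℕ} {V₀ V₁ : Submodule K E} {U : Submodule L E}
    (hm : 0 < m) (hV₀ : Module.finrank K V₀ = m + 1) (hV₁ : Module.finrank K V₁ = m + 1)
    {σ : L ≃+* L} {τ : E ≃ E} (hadd : ∀ x y, τ (x + y) = τ x + τ y)
    (hsmul : ∀ (a : L) x, τ (a • x) = σ a • τ x) (hU : (fun x => τ x) '' (U : Set E) = U)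
    (hB : {Q | ∃ v : E, v ≠ 0 ∧ span L {v} ∈ BSet L (V₀ : Set E) ∧ Q = span L {τ v}} =
      BSet L (V₁ : Set E)) :
    {Q | ∃ v : E, v ≠ 0 ∧ span L {v} ∈ Splash K L V₀ U (m + 1) ∧ Q = span L {τ v}} =
      Splash K L V₁ U (m + 1) := by
  let f : E →ₛₗ[(σ : L →+* L)] E := { toFun := τ, map_add' := hadd, map_smul' := hsmul }
  let g : E →ₛₗ[(σ.symm : L →+* L)] E :=
    { toFun := τ.symm
      map_add' := fun x y => τ.injective (by simp [hadd])
      map_smul' := fun a x => τ.injective (by simp [hsmul]) }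
  have hτ0 : τ 0 = 0 := f.map_zero
  ext Q
  constructor
  · rintro ⟨v, hv0, hv, rfl⟩
    refine span_singleton_map_mem_splash hm f hV₁ (fun x hx => ?_) (fun x hx hx0 => ?_) ?_ hv
    · have : τ x ∈ (U : Set E) := hU ▸ ⟨x, hx, rfl⟩
      exact this
    · have : span L {τ x} ∈ BSet L (V₁ : Set E) := hB ▸ ⟨x, hx0, ⟨x, hx, hx0, rfl⟩, rfl⟩
      obtain ⟨w, hw, -, h⟩ := this
      exact ⟨w, hw, h⟩
    · exact fun h => hv0 (τ.injective (h.trans hτ0.symm))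
  · intro hQ
    obtain ⟨w, hw0', rfl⟩ : ∃ w : E, w ≠ 0 ∧ Q = span L {w} := by
      obtain ⟨w, hw0, hw⟩ := finrank_eq_one_iff'.1 hQ.1
      refine ⟨w, fun h => hw0 (Subtype.ext h),
        le_antisymm (fun x hx => ?_) ((span_singleton_le_iff_mem _ _).2 w.2)⟩
      obtain ⟨a, ha⟩ := hw ⟨x, hx⟩
      exact mem_span_singleton.2 ⟨a, congrArg Subtype.val ha⟩
    have hg0 : τ.symm w ≠ 0 := fun h => hw0' (by rw [← τ.apply_symm_apply w, h, hτ0])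
    refine ⟨τ.symm w, hg0, ?_, by rw [τ.apply_symm_apply]⟩
    refine span_singleton_map_mem_splash hm g hV₀ (fun x hx => ?_) (fun x hx hx0 => ?_) hg0
      hQ
    · have : x ∈ (fun x => τ x) '' (U : Set E) := by rw [hU]; exact hx
      obtain ⟨y, hy, rfl⟩ := this
      change τ.symm (τ y) ∈ U
      rwa [τ.symm_apply_apply]
    · have : span L {x} ∈ BSet L (V₁ : Set E) := ⟨x, hx, hx0, rfl⟩
      rw [← hB] at this
      obtain ⟨v, -, ⟨v', hv', -, h⟩, hxv⟩ := this
      refine ⟨v', hv', ?_⟩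
      rw [span_singleton_map_eq g hxv, ← h]
      change span L {τ.symm (τ v)} = _
      rw [τ.symm_apply_apply]

theorem exists_semilinear_of_bases {ι : Type*} [Finite ι] (b b' : Basis ι L E) (σ : L ≃+* L) :
    ∃ τ : E ≃ E, (∀ x y, τ (x + y) = τ x + τ y) ∧ (∀ (a : L) x, τ (a • x) = σ a • τ x) ∧
      ∀ i, τ (b i) = b' i := by
  classical
  have := Fintype.ofFinite ι
  refine ⟨b.equivFun.toEquiv.trans ((Equiv.piCongrRight fun _ => σ.toEquiv).trans
    b'.equivFun.symm.toEquiv), fun x y => ?_, fun a x => ?_, fun i => ?_⟩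
  · simp [Basis.equivFun_symm_apply, add_smul, Finset.sum_add_distrib]
  · simp [Basis.equivFun_symm_apply, mul_smul, Finset.smul_sum]
  · simp [Basis.equivFun_symm_apply, Finsupp.single_apply, apply_ite σ]

namespace IsTangentFrame

variable {m : ℕ} {V₀ V₁ : Submodule K E} {U : Submodule L E} {b b' : Basis (Fin (m + 1)) L E}
  {c c' : Fin m → L}

theorem exists_semilinear [Finite K] [IsScalarTower K L E] (h : IsTangentFrame V₀ U b c)
    (h' : IsTangentFrame V₁ U b' c') {σ : L ≃+* L} {α : L} (hα : α ≠ 0)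
    (hαZ : ∀ z ∈ span K (Set.range c), α * σ z ∈ span K (Set.range c')) :
    ∃ τ : E ≃ E, (∀ x y, τ (x + y) = τ x + τ y) ∧ (∀ (a : L) x, τ (a • x) = σ a • τ x) ∧
      (fun x => τ x) '' (U : Set E) = U ∧
      {Q | ∃ v : E, v ≠ 0 ∧ span L {v} ∈ BSet L (V₀ : Set E) ∧ Q = span L {τ v}} =
        BSet L (V₁ : Set E) := by
  choose ρ hρ using ringEquiv_algebraMap_mem_range (K := K) σ
  choose ρ' hρ' using ringEquiv_algebraMap_mem_range (K := K) σ.symm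
  let e : Fin m → L := fun i => α * σ (c i)
  have he : LinearIndependent K e := by
    refine h.linearIndependent.map_of_injective_injective ρ'
      ((AddMonoidHom.mulLeft α).comp (σ : L →+ L)) (fun k hk => ?_) (fun x hx => ?_)
      (fun k x => ?_)
    · have := hρ' k
      rw [hk, map_zero] at this
      simpa using this.symm
    · simpa [hα] using hx
    · change α * σ (ρ' k • x) = k • (α * σ x)
      rw [Algebra.smul_def, Algebra.smul_def, map_mul, hρ', σ.apply_symm_apply]
      ring
  have hec : span K (Set.range e) = span K (Set.range c') := by
    have : FiniteDimensional K (span K (Set.range c')) :=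
      FiniteDimensional.span_of_finite K (Set.finite_range c')
    refine Submodule.eq_of_le_of_finrank_le ?_ ?_
    · rw [span_le]
      rintro _ ⟨i, rfl⟩
      exact hαZ _ (subset_span ⟨i, rfl⟩)
    · rw [finrank_span_eq_card he, finrank_span_eq_card h'.linearIndependent]
  obtain ⟨g, hg0, hgsum, hg⟩ := h'.exists_change he hec
  obtain ⟨τ, hadd, hsmul, hτb⟩ := exists_semilinear_of_bases b g σ
  let f : E →ₛₗ[(σ : L →+* L)] E := { toFun := τ, map_add' := hadd, map_smul' := hsmul }
  have hτsum : ∀ {ι : Type} [Fintype ι] (x : ι → E), τ (∑ i, x i) = ∑ i, τ (x i) :=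
    fun x => map_sum f x _
  have hτ1 : α • τ (∑ i, c i • b i.succ) = ∑ i, c' i • b' i.succ := by
    rw [← hgsum, hτsum, Finset.smul_sum]
    exact Finset.sum_congr rfl fun i _ => by rw [hsmul, hτb, smul_smul]
  have hτV : ∀ k : Fin (m + 1) → K, τ (∑ i, k i • b i) = ∑ i, ρ (k i) • g i := by
    intro k
    rw [hτsum]
    refine Finset.sum_congr rfl fun i _ => ?_
    rw [← algebraMap_smul L (k i), hsmul, hτb, ← hρ, algebraMap_smul]
  refine ⟨τ, hadd, hsmul, ?_, ?_⟩
  · have hu0 : b' 0 ∈ U := h'.mem_line_iff.2 ⟨1, 0, by simp⟩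
    have hu1 : ∑ i, c' i • b' i.succ ∈ U := h'.mem_line_iff.2 ⟨0, 1, by simp⟩
    ext w
    constructor
    · rintro ⟨v, hv, rfl⟩
      obtain ⟨x, y, rfl⟩ := h.mem_line_iff.1 hv
      have h1 : τ (∑ i, c i • b i.succ) = α⁻¹ • ∑ i, c' i • b' i.succ := by
        rw [← hτ1, inv_smul_smul₀ hα]
      change τ _ ∈ U
      rw [hadd, hsmul, hsmul, hτb, hg0, h1]
      exact U.add_mem (U.smul_mem _ hu0) (U.smul_mem _ (U.smul_mem _ hu1))
    · intro hw
      obtain ⟨x, y, rfl⟩ := h'.mem_line_iff.1 hw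
      refine ⟨σ.symm x • b 0 + σ.symm (y * α) • ∑ i, c i • b i.succ,
        h.mem_line_iff.2 ⟨_, _, rfl⟩, ?_⟩
      change τ _ = _
      rw [hadd, hsmul, hsmul, hτb, hg0, σ.apply_symm_apply, σ.apply_symm_apply, mul_smul, hτ1]
  · have hτ0 : τ 0 = 0 := f.map_zero
    ext Q
    constructor
    · rintro ⟨v, -, ⟨v', hv', hv'0, hvv'⟩, rfl⟩
      refine ⟨τ v', ?_, fun h0 => hv'0 (τ.injective (h0.trans hτ0.symm)),
        span_singleton_map_eq f hvv'⟩
      rw [SetLike.mem_coe, ← h.span_eq, mem_span_range_iff_exists_fun] at hv'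
      obtain ⟨k, rfl⟩ := hv'
      rw [hτV]
      exact V₁.sum_mem fun i _ => V₁.smul_mem _ (hg.basis_mem i)
    · rintro ⟨w, hw, hw0, rfl⟩
      rw [SetLike.mem_coe, ← hg.span_eq, mem_span_range_iff_exists_fun] at hw
      obtain ⟨k, rfl⟩ := hw
      have hρρ' : ∀ k, ρ (ρ' k) = k := fun k => (algebraMap K L).injective (by
        rw [hρ, hρ', σ.apply_symm_apply])
      have hv : τ (∑ i, ρ' (k i) • b i) = ∑ i, k i • g i := by simp only [hτV, hρρ']
      have hv0 : ∑ i, ρ' (k i) • b i ≠ 0 := fun h0 => hw0 (by rw [← hv, h0, hτ0])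
      refine ⟨_, hv0, ⟨_, ?_, hv0, rfl⟩, by rw [hv]⟩
      exact V₀.sum_mem fun i _ => V₀.smul_mem _ (h.basis_mem i)

theorem exists_mul_mem [Finite L] [IsScalarTower K L E] (h : IsTangentFrame V₀ U b c)
    (h' : IsTangentFrame V₁ U b' c') (hm : 0 < m) {σ : L ≃+* L} {θ : U ≃ U}
    (hadd : ∀ x y, θ (x + y) = θ x + θ y) (hsmul : ∀ (a : L) x, θ (a • x) = σ a • θ x)
    (hS : {Q | ∃ x : U, (x : E) ≠ 0 ∧ span L {(x : E)} ∈ Splash K L V₀ U (m + 1) ∧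
      Q = span L {(θ x : E)}} = Splash K L V₁ U (m + 1)) :
    ∃ α : L, α ≠ 0 ∧ ∀ z ∈ span K (Set.range c), α * σ z ∈ span K (Set.range c') := by
  obtain ⟨u₀, hu₀⟩ : ∃ u : U, (u : E) = b 0 :=
    ⟨⟨b 0, h.mem_line_iff.2 ⟨1, 0, by simp⟩⟩, rfl⟩
  obtain ⟨u₁, hu₁⟩ : ∃ u : U, (u : E) = ∑ i, c i • b i.succ :=
    ⟨⟨∑ i, c i • b i.succ, h.mem_line_iff.2 ⟨0, 1, by simp⟩⟩, rfl⟩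
  obtain ⟨p, s, hps⟩ := h'.mem_line_iff.1 (θ u₀).2
  obtain ⟨t, w, htw⟩ := h'.mem_line_iff.1 (θ u₁).2
  have hθ0 : θ 0 = 0 := by simpa using hsmul 0 0
  have hθ : ∀ x y : L, (θ (x • u₀ + y • u₁) : E) =
      (σ x * p + σ y * t) • b' 0 + (σ x * s + σ y * w) • ∑ i, c' i • b' i.succ := by
    intro x y
    rw [hadd, hsmul, hsmul, U.coe_add, U.coe_smul, U.coe_smul, ← hps, ← htw]
    module
  have hne : ∀ x y : L, x ≠ 0 ∨ y ≠ 0 → x • u₀ + y • u₁ ≠ 0 := by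
    intro x y hxy h0
    have := h.eq_zero_of_pair hm (x := x) (y := y) (by
      rw [← hu₀, ← hu₁]; exact congrArg Subtype.val h0)
    tauto
  have hθne : ∀ x y : L, x ≠ 0 ∨ y ≠ 0 → (θ (x • u₀ + y • u₁) : E) ≠ 0 := by
    intro x y hxy h0
    exact hne x y hxy (θ.injective (by rw [hθ0]; exact Subtype.ext h0))
  have hmap : ∀ x y : L, x ≠ 0 ∨ y ≠ 0 → (y = 0 ∨ x / y ∈ span K (Set.range c)) →
      σ x * s + σ y * w = 0 ∨
        (σ x * p + σ y * t) / (σ x * s + σ y * w) ∈ span K (Set.range c') := by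
    intro x y hxy hZ
    have hcoe : ((x • u₀ + y • u₁ : U) : E) = x • b 0 + y • ∑ i, c i • b i.succ := by
      rw [← hu₀, ← hu₁]; rfl
    have hx0 : ((x • u₀ + y • u₁ : U) : E) ≠ 0 := fun h0 => hne x y hxy (Subtype.ext h0)
    have hmem : span L {(θ (x • u₀ + y • u₁) : E)} ∈ Splash K L V₁ U (m + 1) := by
      rw [← hS]
      refine ⟨_, hx0, ?_, rfl⟩
      rw [hcoe] at hx0 ⊢
      exact (h.span_mem_splash_iff hm hx0).2 hZ
    have h0 := hθne x y hxy
    rw [hθ] at hmem h0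
    exact (h'.span_mem_splash_iff hm h0).1 hmem
  have hcard : Nat.card (span K (Set.range c)).toAddSubgroup =
      Nat.card (span K (Set.range c')).toAddSubgroup := by
    have : FiniteDimensional K (span K (Set.range c)) :=
      FiniteDimensional.span_of_finite K (Set.finite_range c)
    have : FiniteDimensional K (span K (Set.range c')) :=
      FiniteDimensional.span_of_finite K (Set.finite_range c')
    have hr : Module.finrank K (span K (Set.range c)) =
        Module.finrank K (span K (Set.range c')) := by
      rw [finrank_span_eq_card h.linearIndependent, finrank_span_eq_card h'.linearIndependent]
    exact Nat.card_congr (LinearEquiv.ofFinrankEq _ _ hr).toEquiv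
  refine exists_mul_ringEquiv_mem (Z := (span K (Set.range c)).toAddSubgroup)
    (Z' := (span K (Set.range c')).toAddSubgroup) hcard
    (y₀ := c ⟨0, hm⟩) (subset_span ⟨_, rfl⟩) (h.linearIndependent.ne_zero _) σ
    (p := p) (s := s) (t := t) (w := w) ?_ ?_ ?_ ?_
  · intro hdet
    have h1 : ¬(σ.symm w ≠ 0 ∨ -σ.symm s ≠ 0) := fun hws => hθne _ _ hws (by
      rw [hθ]
      simp only [map_neg, σ.apply_symm_apply]
      rw [show w * p + -s * t = 0 by linear_combination hdet, show w * s + -s * w = 0 by ring]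
      simp)
    have h2 : ¬(σ.symm t ≠ 0 ∨ -σ.symm p ≠ 0) := fun htp => hθne _ _ htp (by
      rw [hθ]
      simp only [map_neg, σ.apply_symm_apply]
      rw [show t * p + -p * t = 0 by ring, show t * s + -p * w = 0 by linear_combination -hdet]
      simp)
    simp only [ne_eq, neg_eq_zero, map_eq_zero_iff _ σ.symm.injective, not_or, not_not] at h1 h2
    refine hθne 1 0 (by simp) ?_
    rw [hθ]
    simp [h1, h2]
  · simpa using hmap 1 0 (by simp) (by simp)
  · intro hs
    have hb0 : (1 : L) • b' 0 + (0 : L) • ∑ i, c' i • b' i.succ ≠ 0 := by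
      simpa using b'.ne_zero 0
    have hmem := (h'.span_mem_splash_iff hm hb0).2 (Or.inl rfl)
    rw [← hS] at hmem
    obtain ⟨x, hx0, hx, hxθ⟩ := hmem
    obtain ⟨x₀, y₀, hxy⟩ := h.mem_line_iff.1 x.2
    have hxu : x = x₀ • u₀ + y₀ • u₁ := Subtype.ext (by rw [← hxy, ← hu₀, ← hu₁]; rfl)
    have hxy0 := hxy ▸ hx0
    have hZ := (h.span_mem_splash_iff hm hxy0).1 (hxy ▸ hx)
    have hY : σ x₀ * s + σ y₀ * w = 0 := by
      have : (θ x : E) ∈ span L {(θ x : E)} := mem_span_singleton_self _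
      rw [← hxθ, mem_span_singleton] at this
      obtain ⟨a, ha⟩ := this
      rw [hxu, hθ] at ha
      have := (h'.eq_zero_of_pair hm (x := σ x₀ * p + σ y₀ * t - a)
        (y := σ x₀ * s + σ y₀ * w) (by
          rw [sub_smul, sub_add_eq_add_sub, ← ha]; simp)).2
      exact this
    have hy₀ : y₀ ≠ 0 := by
      rintro rfl
      simp only [map_zero, zero_mul, add_zero, mul_eq_zero, hs, or_false,
        map_eq_zero_iff _ σ.injective] at hY
      exact hxy0 (by simp [hY])
    refine ⟨x₀ / y₀, hZ.resolve_left hy₀, ?_⟩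
    have hσy : σ y₀ ≠ 0 := by simpa using hy₀
    rw [map_div₀]
    field_simp
    linear_combination hY
  · intro z hz
    simpa using hmap z 1 (by simp) (Or.inr (by simpa using hz))

end IsTangentFrame

end Frames

/-- (a) a semilinear collineation of the line carrying one splash onto
the other extends to a semilinear collineation of the whole space fixing the line and
carrying one subgeometry onto the other; (b) conversely, such a collineation of the
space carries the first splash onto the second. -/
theorem splash_equivalence_semilinear
    (K L : Type*) [Field K] [Field L] [Algebra K L] [Fintype K] [Fintype L]
    (r n : ℕ) (hr : 3 ≤ r) (hrn : r ≤ n) (hrank : Module.finrank K L = n)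
    (V₀ V₁ : Submodule K (Fin r → L))
    (hV₀rank : Module.finrank K V₀ = r)
    (hV₀span : Submodule.span L (V₀ : Set (Fin r → L)) = ⊤)
    (hV₁rank : Module.finrank K V₁ = r)
    (hV₁span : Submodule.span L (V₁ : Set (Fin r → L)) = ⊤)
    (U : Submodule L (Fin r → L)) (hU : Module.finrank L U = 2)
    (htangent₀ : ∃! P, P ∈ BSet L (V₀ : Set (Fin r → L)) ∧ P ≤ U)
    (htangent₁ : ∃! P, P ∈ BSet L (V₁ : Set (Fin r → L)) ∧ P ≤ U)
    (hext₀ : ∀ H : Submodule K (Fin r → L), H ≤ V₀ → Module.finrank K H = r - 1 →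
      ¬ U ≤ Submodule.span L (H : Set (Fin r → L)))
    (hext₁ : ∀ H : Submodule K (Fin r → L), H ≤ V₁ → Module.finrank K H = r - 1 →
      ¬ U ≤ Submodule.span L (H : Set (Fin r → L))) :
    -- (a)
    ((∃ (σ : L ≃+* L) (θ : U ≃ U),
        (∀ x y : U, θ (x + y) = θ x + θ y) ∧
        (∀ (c : L) (x : U), θ (c • x) = σ c • θ x) ∧
        {Q | ∃ x : U, (x : Fin r → L) ≠ 0 ∧
            Submodule.span L {(x : Fin r → L)} ∈ Splash K L V₀ U r ∧
            Q = Submodule.span L {(θ x : Fin r → L)}} = Splash K L V₁ U r) →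
      ∃ (σ' : L ≃+* L) (τ : (Fin r → L) ≃ (Fin r → L)),
        (∀ x y : Fin r → L, τ (x + y) = τ x + τ y) ∧
        (∀ (c : L) (x : Fin r → L), τ (c • x) = σ' c • τ x) ∧
        (fun x => τ x) '' (U : Set (Fin r → L)) = (U : Set (Fin r → L)) ∧
        {Q | ∃ v : Fin r → L, v ≠ 0 ∧
            Submodule.span L {v} ∈ BSet L (V₀ : Set (Fin r → L)) ∧
            Q = Submodule.span L {τ v}} = BSet L (V₁ : Set (Fin r → L))) ∧
    -- (b)
    (∀ (σ' : L ≃+* L) (τ : (Fin r → L) ≃ (Fin r → L)),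
      (∀ x y : Fin r → L, τ (x + y) = τ x + τ y) →
      (∀ (c : L) (x : Fin r → L), τ (c • x) = σ' c • τ x) →
      (fun x => τ x) '' (U : Set (Fin r → L)) = (U : Set (Fin r → L)) →
      {Q | ∃ v : Fin r → L, v ≠ 0 ∧
          Submodule.span L {v} ∈ BSet L (V₀ : Set (Fin r → L)) ∧
          Q = Submodule.span L {τ v}} = BSet L (V₁ : Set (Fin r → L)) →
      {Q | ∃ v : Fin r → L, v ≠ 0 ∧
          Submodule.span L {v} ∈ Splash K L V₀ U r ∧
          Q = Submodule.span L {τ v}} = Splash K L V₁ U r) := by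
  obtain ⟨m, rfl⟩ : ∃ m, r = m + 1 := ⟨r - 1, by omega⟩
  have hm : 0 < m := by omega
  have hE : Module.finrank L (Fin (m + 1) → L) = m + 1 := by simp
  refine ⟨?_, fun σ τ hadd hsmul hτU hB => image_splash hm hV₀rank hV₁rank hadd hsmul hτU hB⟩
  rintro ⟨σ, θ, hadd, hsmul, hS⟩
  obtain ⟨_, ⟨⟨v₀, hv₀, hv₀0, rfl⟩, hv₀U⟩, -⟩ := htangent₀
  obtain ⟨_, ⟨⟨v₁, hv₁, hv₁0, rfl⟩, hv₁U⟩, -⟩ := htangent₁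
  rw [span_singleton_le_iff_mem] at hv₀U hv₁U
  obtain ⟨b, c, h⟩ := exists_isTangentFrame hE hV₀rank hV₀span hU hv₀ hv₀0 hv₀U hext₀
  obtain ⟨b', c', h'⟩ := exists_isTangentFrame hE hV₁rank hV₁span hU hv₁ hv₁0 hv₁U hext₁
  obtain ⟨α, hα, hαZ⟩ := h.exists_mul_mem h' hm hadd hsmul hS
  exact ⟨σ, h.exists_semilinear h' hα hαZ⟩
end
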